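/- arXiv:2605.24472 — 4 statements merged into one kernel-verified Lean document; each statement's English description precedes it below -/
import Mathlib

section
/- Let n ≥ 2 and p > 1. Set α = (1/n) · e^{(p-1)n/p} · ((p-1)n/p)^{n/p} · Γ(1 - n/p, (p-1)n/p). Then for all convex bodies K, L in ℝⁿ containing the origin and all λ ∈ [0,1], one has μ_p(λK + (1-λ)L)^α ≥ λ·μ_p(K)^α + (1-λ)·μ_p(L)^α. -/
open MeasureTheory Real Set Pointwise

noncomputable def uiGamma (s x : ℝ) : ℝ := ∫ t in Set.Ioi x, t ^ (s - 1) * Real.exp (-t)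

/-!
Write `V r = r ^ p / p`, let `m` be the measure with density `exp (-V ‖x‖)` and let
`A t = t K + (1 - t) L`. It suffices that for every `β` below the claimed exponent `α` the function
`t ↦ m (A t) ^ β` satisfies the midpoint concavity inequality on short intervals about each point:
this makes it concave, and then `β` tends to `α`.

For nearby `s` and `t`, put `a = log (m (A t)) - log (m (A s))`. The Borell–Brascamp–Lieb inequality
for the densities on `A s` and `A t` normalized to mass `1` improves the log-concavity of `m` at the
midpoint by the factor `1 + g a ^ 2 / 8`, up to an arbitrarily small error in `g`, where `g` is the
mean over `A ((s + t) / 2)` of the radial function `1 / (n + V' ^ 2 / V'')`. This function decreases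
along rays, so its mean over a set star-shaped about the origin is at least its mean over the whole
space. Written as a Laplace transform and integrated by Fubini's theorem, the latter is exactly `α`.
-/

/-! ### The Brunn–Minkowski inequality on the line -/

theorem volume_add_volume_le_volume_add_of_isCompact {A B : Set ℝ} (hA : IsCompact A)
    (hB : IsCompact B) (hA' : A.Nonempty) (hB' : B.Nonempty) :
    volume A + volume B ≤ volume (A + B) := by
  obtain ⟨a, ha, ha_max⟩ := hA.exists_isGreatest hA'
  obtain ⟨b, hb, hb_min⟩ := hB.exists_isLeast hB'
  -- The translates `b + A` and `a + B` lie in `A + B` and meet only at `a + b`.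
  have hsub : (b +ᵥ A) ∪ (a +ᵥ B) ⊆ A + B :=
    union_subset (add_comm A B ▸ vadd_set_subset_add hb) (vadd_set_subset_add ha)
  have hinter : (b +ᵥ A) ∩ (a +ᵥ B) ⊆ {a + b} := by
    rintro _ ⟨⟨x, hx, rfl⟩, y, hy, hxy⟩
    have hxa : x ≤ a := ha_max hx
    have hby : b ≤ y := hb_min hy
    simp only [vadd_eq_add] at hxy
    simp only [vadd_eq_add, mem_singleton_iff]
    linarith
  calc volume A + volume B
      = volume (b +ᵥ A) + volume (a +ᵥ B) := by simp only [measure_vadd]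
    _ = volume ((b +ᵥ A) ∪ (a +ᵥ B)) + volume ((b +ᵥ A) ∩ (a +ᵥ B)) :=
        (measure_union_add_inter _ (hB.vadd a).measurableSet).symm
    _ ≤ volume (A + B) + volume {a + b} := by gcongr
    _ = volume (A + B) := by rw [Real.volume_singleton, add_zero]

theorem volume_add_volume_le_volume_add {A B : Set ℝ} (hA : MeasurableSet A)
    (hB : MeasurableSet B) (hA' : A.Nonempty) (hB' : B.Nonempty) :
    volume A + volume B ≤ volume (A + B) := by
  rcases eq_or_ne (volume A) 0 with hA0 | hA0
  · obtain ⟨a, ha⟩ := hA'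
    calc volume A + volume B = volume (a +ᵥ B) := by rw [hA0, zero_add, measure_vadd]
      _ ≤ volume (A + B) := measure_mono (vadd_set_subset_add ha)
  rcases eq_or_ne (volume B) 0 with hB0 | hB0
  · obtain ⟨b, hb⟩ := hB'
    calc volume A + volume B = volume (b +ᵥ A) := by rw [hB0, add_zero, measure_vadd]
      _ ≤ volume (A + B) := measure_mono (add_comm A B ▸ vadd_set_subset_add hb)
  refine le_of_forall_lt fun r hr => ?_
  obtain ⟨u, hu, v, hv, huv⟩ := ENNReal.exists_lt_add_of_lt_add hr hA0 hB0
  obtain ⟨A₀, hA₀A, hA₀, huA₀⟩ := hA.exists_lt_isCompact hu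
  obtain ⟨B₀, hB₀B, hB₀, hvB₀⟩ := hB.exists_lt_isCompact hv
  calc r < u + v := huv
    _ ≤ volume A₀ + volume B₀ := add_le_add huA₀.le hvB₀.le
    _ ≤ volume (A₀ + B₀) := volume_add_volume_le_volume_add_of_isCompact hA₀ hB₀
        (nonempty_of_measure_ne_zero huA₀.ne_bot) (nonempty_of_measure_ne_zero hvB₀.ne_bot)
    _ ≤ volume (A + B) := measure_mono (add_subset_add hA₀A hB₀B)

theorem ofReal_mul_volume_add_le_volume_smul_add_smul {A B : Set ℝ} {s t : ℝ} (hs : 0 < s)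
    (ht : 0 < t) (hA : MeasurableSet A) (hB : MeasurableSet B) (hA' : A.Nonempty)
    (hB' : B.Nonempty) :
    ENNReal.ofReal s * volume A + ENNReal.ofReal t * volume B ≤ volume (s • A + t • B) := by
  have hscale {r : ℝ} (hr : 0 < r) (X : Set ℝ) : volume (r • X) = ENNReal.ofReal r * volume X := by
    rw [Measure.addHaar_smul, Module.finrank_self, pow_one, abs_of_pos hr]
  rw [← hscale hs, ← hscale ht]
  exact volume_add_volume_le_volume_add (hA.const_smul_of_ne_zero hs.ne')
    (hB.const_smul_of_ne_zero ht.ne') hA'.smul_set hB'.smul_set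

/-! ### Power means with nonpositive exponent -/

/-- The weighted power mean `M_q(a, b)` of positive reals with exponent `q = -1 / κ ∈ [-∞, 0)`;
`κ = 0` encodes `q = -∞`, where the mean is `min a b`. In the parameter `κ`, integrating one
variable out in the Borell–Brascamp–Lieb inequality amounts to `κ + 1 ↦ κ`. -/
noncomputable def negPowerMean (κ s t a b : ℝ) : ℝ :=
  if κ = 0 then min a b else (s * a ^ (-1 / κ) + t * b ^ (-1 / κ)) ^ (-κ)

section negPowerMean

variable {κ s t a b c d : ℝ}

theorem negPowerMean_zero : negPowerMean 0 s t a b = min a b :=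
  if_pos rfl

theorem negPowerMean_of_pos (hκ : 0 < κ) :
    negPowerMean κ s t a b = (s * a ^ (-1 / κ) + t * b ^ (-1 / κ)) ^ (-κ) :=
  if_neg hκ.ne'

theorem negPowerMean_pos (hs : 0 < s) (ht : 0 < t) (ha : 0 < a) (hb : 0 < b) :
    0 < negPowerMean κ s t a b := by
  unfold negPowerMean
  split_ifs
  · exact lt_min ha hb
  · positivity

theorem negPowerMean_le_negPowerMean (hκ : 0 ≤ κ) (hs : 0 < s) (ht : 0 < t) (ha : 0 < a)
    (hb : 0 < b) (hac : a ≤ c) (hbd : b ≤ d) :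
    negPowerMean κ s t a b ≤ negPowerMean κ s t c d := by
  unfold negPowerMean
  split_ifs with h
  · exact min_le_min hac hbd
  have hq : -1 / κ ≤ 0 := div_nonpos_of_nonpos_of_nonneg (by norm_num) hκ
  have hc : 0 < c := ha.trans_le hac
  have hd : 0 < d := hb.trans_le hbd
  refine rpow_le_rpow_of_nonpos (by positivity) ?_ (neg_nonpos.2 hκ)
  gcongr ?_ * ?_ + ?_ * ?_
  · exact rpow_le_rpow_of_nonpos ha hac hq
  · exact rpow_le_rpow_of_nonpos hb hbd hq

theorem negPowerMean_mul_mul (hκ : 0 < κ) (hs : 0 < s) (ht : 0 < t) (hc : 0 < c) (ha : 0 < a)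
    (hb : 0 < b) : negPowerMean κ s t (c * a) (c * b) = c * negPowerMean κ s t a b := by
  have hexp : -1 / κ * -κ = 1 := by field_simp
  calc negPowerMean κ s t (c * a) (c * b)
      = (c ^ (-1 / κ) * (s * a ^ (-1 / κ) + t * b ^ (-1 / κ))) ^ (-κ) := by
        rw [negPowerMean_of_pos hκ, mul_rpow hc.le ha.le, mul_rpow hc.le hb.le]; ring_nf
    _ = c * negPowerMean κ s t a b := by
        rw [mul_rpow (by positivity) (by positivity), ← rpow_mul hc.le, hexp, rpow_one,
          negPowerMean_of_pos hκ]

theorem weightedMean_rpow_succ_le (hκ : 0 < κ) (hs : 0 < s) (ht : 0 < t)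
    (ha : 0 < a) (hb : 0 < b) (hc : 0 < c) (hd : 0 < d) :
    (s * c ^ (-1 / (κ + 1)) + t * d ^ (-1 / (κ + 1))) ^ (κ + 1) ≤
      (s * a ^ (-1 / κ) + t * b ^ (-1 / κ)) ^ κ * (s * (a / c) + t * (b / d)) := by
  have hholder := inner_le_weight_mul_Lp_of_nonneg Finset.univ (p := κ + 1) (by linarith)
    ![s * a ^ (-1 / κ), t * b ^ (-1 / κ)]
    ![a ^ (1 / κ) * c ^ (-1 / (κ + 1)), b ^ (1 / κ) * d ^ (-1 / (κ + 1))]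
    (fun i => by fin_cases i <;> dsimp <;> positivity)
    (fun i => by fin_cases i <;> dsimp <;> positivity)
  have hcancel {u : ℝ} (hu : 0 < u) : u ^ (-1 / κ) * u ^ (1 / κ) = 1 := by
    rw [← rpow_add hu, neg_div, neg_add_cancel, rpow_zero]
  have hfirst {r u v : ℝ} (hu : 0 < u) :
      r * u ^ (-1 / κ) * (u ^ (1 / κ) * v) = r * v := by
    linear_combination r * v * hcancel hu
  have hsecond {r u v : ℝ} (hu : 0 < u) (hv : 0 < v) :
      r * u ^ (-1 / κ) * (u ^ (1 / κ) * v ^ (-1 / (κ + 1))) ^ (κ + 1) = r * (u / v) := by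
    have hv' : (v ^ (-1 / (κ + 1))) ^ (κ + 1) = v⁻¹ := by
      rw [← rpow_mul hv.le, div_mul_cancel₀ _ (by positivity), rpow_neg_one]
    have hu' : (u ^ (1 / κ)) ^ (κ + 1) = u ^ (1 / κ) * u := by
      rw [← rpow_mul hu.le, ← rpow_add_one hu.ne']
      congr 1
      field_simp
      ring
    rw [mul_rpow (by positivity) (by positivity), hv', hu', mul_assoc (u ^ (1 / κ)), hfirst hu,
      div_eq_mul_inv]
  simp only [Fin.sum_univ_two, Matrix.cons_val_zero, Matrix.cons_val_one, hfirst ha, hfirst hb,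
    hsecond ha hc, hsecond hb hd] at hholder
  calc _ ≤ ((s * a ^ (-1 / κ) + t * b ^ (-1 / κ)) ^ (1 - (κ + 1)⁻¹) *
        (s * (a / c) + t * (b / d)) ^ (κ + 1)⁻¹) ^ (κ + 1) := by gcongr
    _ = _ := by
      rw [mul_rpow (by positivity) (by positivity), ← rpow_mul (by positivity),
        rpow_inv_rpow (by positivity) (by positivity)]
      congr 2
      field_simp
      ring

theorem negPowerMean_le_negPowerMean_succ_mul (hκ : 0 ≤ κ) (hs : 0 < s) (ht : 0 < t)
    (ha : 0 < a) (hb : 0 < b) (hc : 0 < c) (hd : 0 < d) :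
    negPowerMean κ s t a b ≤ negPowerMean (κ + 1) s t c d * (s * (a / c) + t * (b / d)) := by
  rcases hκ.eq_or_lt with rfl | hκ
  · have hle : min a b * (s * c⁻¹ + t * d⁻¹) ≤ s * (a / c) + t * (b / d) :=
      calc min a b * (s * c⁻¹ + t * d⁻¹) = s * (min a b / c) + t * (min a b / d) := by ring
        _ ≤ s * (a / c) + t * (b / d) := by
          gcongr
          exacts [min_le_left a b, min_le_right a b]
    rw [negPowerMean_zero, zero_add, negPowerMean_of_pos one_pos, div_one, rpow_neg_one,
      rpow_neg_one, rpow_neg_one, inv_mul_eq_div, le_div_iff₀ (by positivity)]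
    exact hle
  · rw [negPowerMean_of_pos hκ, negPowerMean_of_pos (by positivity), rpow_neg (by positivity),
      rpow_neg (by positivity), inv_mul_eq_div, le_div_iff₀ (by positivity),
      inv_mul_le_iff₀ (by positivity)]
    exact weightedMean_rpow_succ_le hκ hs ht ha hb hc hd

end negPowerMean

/-! ### The Borell–Brascamp–Lieb inequality -/

theorem ofReal_integral_div_eq_lintegral_meas_lt {X : Type*} [MeasurableSpace X] {μ : Measure X}
    {f : X → ℝ} (hf : Integrable f μ) (hf0 : 0 ≤ f) {c : ℝ} (hc : 0 < c) :
    ENNReal.ofReal ((∫ x, f x ∂μ) / c) = ∫⁻ r in Ioi (0 : ℝ), μ {x | r * c < f x} := by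
  have hnonneg : 0 ≤ fun x => f x / c := fun x => div_nonneg (hf0 x) hc.le
  rw [← integral_div, ofReal_integral_eq_lintegral_ofReal (hf.div_const c) (.of_forall hnonneg),
    lintegral_eq_lintegral_meas_lt μ (.of_forall hnonneg) (hf.div_const c).aemeasurable]
  simp only [lt_div_iff₀ hc]

theorem ofReal_integral_div_eq_lintegral_meas_le {X : Type*} [MeasurableSpace X] {μ : Measure X}
    {f : X → ℝ} (hf : Integrable f μ) (hf0 : 0 ≤ f) {c : ℝ} (hc : 0 < c) :
    ENNReal.ofReal ((∫ x, f x ∂μ) / c) = ∫⁻ r in Ioi (0 : ℝ), μ {x | r * c ≤ f x} := by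
  have hnonneg : 0 ≤ fun x => f x / c := fun x => div_nonneg (hf0 x) hc.le
  rw [← integral_div, ofReal_integral_eq_lintegral_ofReal (hf.div_const c) (.of_forall hnonneg),
    lintegral_eq_lintegral_meas_le μ (.of_forall hnonneg) (hf.div_const c).aemeasurable]
  simp only [le_div_iff₀ hc]

theorem iSup_pos_of_integral_pos {X : Type*} [MeasurableSpace X] {μ : Measure X} {f : X → ℝ}
    (hbdd : BddAbove (range f)) (hf : 0 < ∫ x, f x ∂μ) : 0 < ⨆ x, f x := by
  by_contra! hle
  exact hf.not_ge (integral_nonpos fun x => (le_ciSup hbdd x).trans hle)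

/-- A nonnegative, bounded, measurable function with bounded support. This class contains
indicators of compact sets times continuous positive weights and is stable under marginals. -/
structure IsBoundedDensity {X : Type*} [MeasurableSpace X] [Bornology X] (f : X → ℝ) : Prop where
  measurable : Measurable f
  nonneg : 0 ≤ f
  bddAbove : BddAbove (range f)
  isBounded_support : Bornology.IsBounded (Function.support f)

theorem IsBoundedDensity.integrable {X : Type*} [MeasurableSpace X] [PseudoMetricSpace X]
    [ProperSpace X] [OpensMeasurableSpace X] {μ : Measure X} [IsFiniteMeasureOnCompacts μ]
    {f : X → ℝ} (hf : IsBoundedDensity f) : Integrable f μ := by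
  obtain ⟨C, hC⟩ := hf.bddAbove
  rw [← integrableOn_iff_integrable_of_support_subset subset_closure]
  refine Measure.integrableOn_of_bounded (M := C)
    hf.isBounded_support.isCompact_closure.measure_lt_top.ne hf.measurable.aestronglyMeasurable
    (.of_forall fun x => ?_)
  rw [Real.norm_of_nonneg (hf.nonneg x)]
  exact hC (mem_range_self x)

section OneDimensional

variable {κ s t : ℝ} {f g h : ℝ → ℝ}

theorem volume_superlevel_add_le {r : ℝ} (hs : 0 < s) (ht : 0 < t) (hκ : 0 < κ)
    (hf : IsBoundedDensity f) (hg : IsBoundedDensity g)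
    (hfgh : ∀ x y, 0 < f x → 0 < g y → negPowerMean κ s t (f x) (g y) ≤ h (s * x + t * y))
    (hF : 0 < ⨆ x, f x) (hG : 0 < ⨆ x, g x) (hr : 0 < r) :
    ENNReal.ofReal s * volume {x | r * (⨆ x, f x) < f x} +
        ENNReal.ofReal t * volume {x | r * (⨆ x, g x) < g x} ≤
      volume {x | r * negPowerMean κ s t (⨆ x, f x) (⨆ x, g x) ≤ h x} := by
  have hempty {u : ℝ → ℝ} (hu : IsBoundedDensity u) (hU : 0 < ⨆ x, u x) (hr1 : 1 ≤ r) :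
      {x | r * (⨆ x, u x) < u x} = ∅ :=
    eq_empty_of_forall_notMem fun x => not_lt.2 <|
      (le_ciSup hu.bddAbove x).trans (le_mul_of_one_le_left hU.le hr1)
  have hnonempty {u : ℝ → ℝ} (hU : 0 < ⨆ x, u x) (hr1 : r < 1) :
      {x | r * (⨆ x, u x) < u x}.Nonempty :=
    exists_lt_of_lt_ciSup (mul_lt_of_lt_one_left hU hr1)
  rcases lt_or_ge r 1 with hr1 | hr1
  · refine (ofReal_mul_volume_add_le_volume_smul_add_smul hs ht
      (measurableSet_lt measurable_const hf.measurable)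
      (measurableSet_lt measurable_const hg.measurable) (hnonempty hF hr1)
      (hnonempty hG hr1)).trans (measure_mono ?_)
    rintro _ ⟨_, ⟨x, hx, rfl⟩, _, ⟨y, hy, rfl⟩, rfl⟩
    have hF' : 0 < r * ⨆ x, f x := by positivity
    have hG' : 0 < r * ⨆ x, g x := by positivity
    calc r * negPowerMean κ s t (⨆ x, f x) (⨆ x, g x)
        = negPowerMean κ s t (r * ⨆ x, f x) (r * ⨆ x, g x) :=
          (negPowerMean_mul_mul hκ hs ht hr hF hG).symm
      _ ≤ negPowerMean κ s t (f x) (g y) :=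
          negPowerMean_le_negPowerMean hκ.le hs ht hF' hG' (le_of_lt hx) (le_of_lt hy)
      _ ≤ h (s * x + t * y) := hfgh x y (hF'.trans hx) (hG'.trans hy)
  · simp [hempty hf hF hr1, hempty hg hG hr1]

/-- The layer-cake formula, applied to `f`, `g` normalised to have supremum `1`, integrates the
Brunn–Minkowski inequality for superlevel sets. -/
theorem mul_integral_div_iSup_add_le (hs : 0 < s) (ht : 0 < t) (hκ : 0 < κ)
    (hf : IsBoundedDensity f) (hg : IsBoundedDensity g) (hh : IsBoundedDensity h)
    (hfgh : ∀ x y, 0 < f x → 0 < g y → negPowerMean κ s t (f x) (g y) ≤ h (s * x + t * y))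
    (hF : 0 < ⨆ x, f x) (hG : 0 < ⨆ x, g x) :
    s * ((∫ x, f x) / ⨆ x, f x) + t * ((∫ x, g x) / ⨆ x, g x) ≤
      (∫ x, h x) / negPowerMean κ s t (⨆ x, f x) (⨆ x, g x) := by
  have hM : 0 < negPowerMean κ s t (⨆ x, f x) (⨆ x, g x) := negPowerMean_pos hs ht hF hG
  have hmeas (u : ℝ → ℝ) (hU : 0 < ⨆ x, u x) :
      Measurable fun r : ℝ => volume {x | r * (⨆ x, u x) < u x} :=
    Antitone.measurable fun a b hab => measure_mono fun x hx =>
      lt_of_le_of_lt (mul_le_mul_of_nonneg_right hab hU.le) hx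
  have hIf : 0 ≤ ∫ x, f x := integral_nonneg hf.nonneg
  have hIg : 0 ≤ ∫ x, g x := integral_nonneg hg.nonneg
  have hIh : 0 ≤ ∫ x, h x := integral_nonneg hh.nonneg
  rw [← ENNReal.ofReal_le_ofReal_iff (by positivity), ENNReal.ofReal_add (by positivity)
    (by positivity), ENNReal.ofReal_mul hs.le, ENNReal.ofReal_mul ht.le,
    ofReal_integral_div_eq_lintegral_meas_lt hf.integrable hf.nonneg hF,
    ofReal_integral_div_eq_lintegral_meas_lt hg.integrable hg.nonneg hG,
    ofReal_integral_div_eq_lintegral_meas_le hh.integrable hh.nonneg hM,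
    ← lintegral_const_mul _ (hmeas f hF), ← lintegral_const_mul _ (hmeas g hG),
    ← lintegral_add_left ((hmeas f hF).const_mul _)]
  exact setLIntegral_mono' measurableSet_Ioi fun r hr =>
    volume_superlevel_add_le hs ht hκ hf hg hfgh hF hG hr

theorem negPowerMean_integral_le_integral (hκ : 0 ≤ κ) (hs : 0 < s) (ht : 0 < t)
    (hf : IsBoundedDensity f) (hg : IsBoundedDensity g) (hh : IsBoundedDensity h)
    (hfgh : ∀ x y, 0 < f x → 0 < g y → negPowerMean (κ + 1) s t (f x) (g y) ≤ h (s * x + t * y))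
    (hf_pos : 0 < ∫ x, f x) (hg_pos : 0 < ∫ x, g x) :
    negPowerMean κ s t (∫ x, f x) (∫ x, g x) ≤ ∫ x, h x := by
  have hF : 0 < ⨆ x, f x := iSup_pos_of_integral_pos hf.bddAbove hf_pos
  have hG : 0 < ⨆ x, g x := iSup_pos_of_integral_pos hg.bddAbove hg_pos
  calc negPowerMean κ s t (∫ x, f x) (∫ x, g x)
      ≤ negPowerMean (κ + 1) s t (⨆ x, f x) (⨆ x, g x) *
          (s * ((∫ x, f x) / ⨆ x, f x) + t * ((∫ x, g x) / ⨆ x, g x)) :=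
        negPowerMean_le_negPowerMean_succ_mul hκ hs ht hf_pos hg_pos hF hG
    _ ≤ ∫ x, h x := by
        rw [mul_comm, ← le_div_iff₀ (negPowerMean_pos hs ht hF hG)]
        exact mul_integral_div_iSup_add_le hs ht (by positivity) hf hg hh hfgh hF hG

end OneDimensional

namespace IsBoundedDensity

variable {X Y : Type*} [MeasurableSpace X] [MeasurableSpace Y]

theorem comp_antilipschitz [PseudoMetricSpace X] [PseudoMetricSpace Y] {f : Y → ℝ} {e : X → Y}
    {C : NNReal} (hf : IsBoundedDensity f) (he : Measurable e) (hC : AntilipschitzWith C e) :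
    IsBoundedDensity fun x => f (e x) where
  measurable := hf.measurable.comp he
  nonneg x := hf.nonneg (e x)
  bddAbove := hf.bddAbove.mono (range_comp_subset_range e f)
  isBounded_support := hC.isBounded_preimage hf.isBounded_support

theorem prodMk_right [Bornology X] [Bornology Y] {f : X × Y → ℝ} (hf : IsBoundedDensity f) (y : Y) :
    IsBoundedDensity fun x => f (x, y) where
  measurable := hf.measurable.comp measurable_prodMk_right
  nonneg x := hf.nonneg (x, y)
  bddAbove := hf.bddAbove.mono (range_comp_subset_range (·, y) f)
  isBounded_support := hf.isBounded_support.image_fst.subset fun x hx => ⟨(x, y), hx, rfl⟩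

theorem integral_prodMk [PseudoMetricSpace X] [ProperSpace X] [OpensMeasurableSpace X]
    [Bornology Y] {μ : Measure X} [IsFiniteMeasureOnCompacts μ] [SFinite μ] {f : X × Y → ℝ}
    (hf : IsBoundedDensity f) : IsBoundedDensity fun y => ∫ x, f (x, y) ∂μ where
  measurable := hf.measurable.stronglyMeasurable.integral_prod_left'.measurable
  nonneg y := integral_nonneg fun x => hf.nonneg (x, y)
  bddAbove := by
    obtain ⟨C, hC⟩ := hf.bddAbove
    set S : Set X := closure (Prod.fst '' Function.support f)
    have hS : IsCompact S := hf.isBounded_support.image_fst.isCompact_closure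
    refine ⟨C * μ.real S, forall_mem_range.2 fun y => ?_⟩
    have hzero (x : X) (hx : x ∉ S) : f (x, y) = 0 := by
      by_contra hne
      exact hx (subset_closure ⟨(x, y), hne, rfl⟩)
    calc ∫ x, f (x, y) ∂μ = ∫ x in S, f (x, y) ∂μ :=
          (setIntegral_eq_integral_of_forall_compl_eq_zero hzero).symm
      _ ≤ ‖∫ x in S, f (x, y) ∂μ‖ := le_norm_self _
      _ ≤ C * μ.real S := norm_setIntegral_le_of_norm_le_const hS.measure_lt_top fun x _ => by
          rw [Real.norm_of_nonneg (hf.nonneg _)]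
          exact hC (mem_range_self _)
  isBounded_support := by
    refine hf.isBounded_support.image_snd.subset fun y hy => ?_
    by_contra hne
    refine hy ?_
    have hzero (x : X) : f (x, y) = 0 := by
      by_contra hfx
      exact hne ⟨(x, y), hfx, rfl⟩
    simp only [hzero, integral_zero]

end IsBoundedDensity

/-- The Borell–Brascamp–Lieb inequality on `X` with dimension parameter `d`: a bound on `h` by a
power mean of `f` and `g` with exponent `-1 / (κ + d)` passes to the integrals with exponent
`-1 / κ`. The weights `s`, `t` need not add up to `1`. -/
def BorellBrascampLieb (X : Type*) [NormedAddCommGroup X] [NormedSpace ℝ X] [MeasureSpace X]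
    (d : ℕ) : Prop :=
  ∀ ⦃κ s t : ℝ⦄, 0 ≤ κ → 0 < s → 0 < t → ∀ ⦃f g h : X → ℝ⦄,
    IsBoundedDensity f → IsBoundedDensity g → IsBoundedDensity h →
    (∀ x y, 0 < f x → 0 < g y → negPowerMean (κ + d) s t (f x) (g y) ≤ h (s • x + t • y)) →
    0 < ∫ x, f x → 0 < ∫ x, g x → negPowerMean κ s t (∫ x, f x) (∫ x, g x) ≤ ∫ x, h x

namespace BorellBrascampLieb

variable {X Y : Type*} [NormedAddCommGroup X] [NormedSpace ℝ X] [MeasureSpace X] [BorelSpace X]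
  [NormedAddCommGroup Y] [NormedSpace ℝ Y] [MeasureSpace Y] [BorelSpace Y]

theorem of_measurePreserving {d : ℕ} (hX : BorellBrascampLieb X d) (e : X ≃L[ℝ] Y)
    (he : MeasurePreserving e) : BorellBrascampLieb Y d := by
  intro κ s t hκ hs ht f g h hf hg hh hfgh
  have hint (u : Y → ℝ) : ∫ y, u y = ∫ x, u (e x) :=
    (he.integral_comp e.toHomeomorph.measurableEmbedding u).symm
  have hcomp {u : Y → ℝ} (hu : IsBoundedDensity u) : IsBoundedDensity fun x => u (e x) :=
    hu.comp_antilipschitz he.measurable e.antilipschitz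
  rw [hint f, hint g, hint h]
  refine hX hκ hs ht (hcomp hf) (hcomp hg) (hcomp hh) fun x y hx hy => ?_
  simpa only [map_add, map_smul] using hfgh (e x) (e y) hx hy

theorem prod [FiniteDimensional ℝ X] [FiniteDimensional ℝ Y]
    [IsFiniteMeasureOnCompacts (volume : Measure X)]
    [IsFiniteMeasureOnCompacts (volume : Measure Y)] {d e : ℕ}
    (hX : BorellBrascampLieb X d) (hY : BorellBrascampLieb Y e) :
    BorellBrascampLieb (X × Y) (d + e) := by
  intro κ s t hκ hs ht f g h hf hg hh hfgh
  have hint {u : X × Y → ℝ} (hu : IsBoundedDensity u) : ∫ z, u z = ∫ y, ∫ x, u (x, y) :=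
    integral_prod_symm u hu.integrable
  rw [hint hf, hint hg, hint hh]
  refine hY hκ hs ht hf.integral_prodMk hg.integral_prodMk hh.integral_prodMk fun y y' => ?_
  refine hX (by positivity) hs ht (hf.prodMk_right y) (hg.prodMk_right y')
    (hh.prodMk_right (s • y + t • y')) fun x x' hx hx' => ?_
  have hκde : κ + (d + e : ℕ) = κ + e + d := by push_cast; ring
  exact hκde ▸ hfgh (x, y) (x', y') hx hx'

theorem real : BorellBrascampLieb ℝ 1 := by
  intro κ s t hκ hs ht f g h hf hg hh hfgh
  rw [Nat.cast_one] at hfgh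
  exact negPowerMean_integral_le_integral hκ hs ht hf hg hh hfgh

theorem pi_fin (d : ℕ) : BorellBrascampLieb (Fin d → ℝ) d := by
  induction d with
  | zero =>
    intro κ s t _ _ _ f g h _ _ _ hfgh hf_pos hg_pos
    have hint (u : (Fin 0 → ℝ) → ℝ) : ∫ x, u x = u 0 := by
      rw [volume_pi, Measure.pi_of_empty (x := 0), integral_dirac]
    rw [hint] at hf_pos hg_pos
    simpa [hint] using hfgh 0 0 hf_pos hg_pos
  | succ d ih =>
    let e : (ℝ × (Fin d → ℝ)) ≃L[ℝ] (Fin (d + 1) → ℝ) := Fin.consEquivL ℝ fun _ => ℝ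
    have he : ⇑e = (MeasurableEquiv.piFinSuccAbove (fun _ : Fin (d + 1) => ℝ) 0).symm :=
      funext fun x => (Fin.insertNth_zero' x.1 x.2).symm
    have hprod : BorellBrascampLieb (ℝ × (Fin d → ℝ)) (d + 1) := add_comm 1 d ▸ real.prod ih
    exact hprod.of_measurePreserving e
      (he ▸ (volume_preserving_piFinSuccAbove (fun _ : Fin (d + 1) => ℝ) 0).symm)

theorem euclidean (E : Type*) [NormedAddCommGroup E] [InnerProductSpace ℝ E]
    [FiniteDimensional ℝ E] [MeasurableSpace E] [BorelSpace E] :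
    BorellBrascampLieb E (Module.finrank ℝ E) := by
  let e := (PiLp.continuousLinearEquiv 2 ℝ fun _ => ℝ).symm.trans
    (stdOrthonormalBasis ℝ E).repr.symm.toContinuousLinearEquiv
  refine (pi_fin _).of_measurePreserving e ?_
  exact (stdOrthonormalBasis ℝ E).measurePreserving_repr_symm.comp (PiLp.volume_preserving_toLp _)

end BorellBrascampLieb

/-! ### Convexity and a lower bound for `log ∘ cosh` -/

theorem hasDerivAt_log_cosh (u : ℝ) : HasDerivAt (fun v => log (cosh v)) (tanh u) u := by
  rw [tanh_eq_sinh_div_cosh]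
  exact (hasDerivAt_cosh u).log (cosh_pos u).ne'

theorem monotone_tanh : Monotone tanh := by
  intro u v huv
  have hsinh : 0 ≤ sinh (v - u) := sinh_nonneg_iff.2 (sub_nonneg.2 huv)
  rw [tanh_eq_sinh_div_cosh, tanh_eq_sinh_div_cosh, div_le_div_iff₀ (cosh_pos u) (cosh_pos v)]
  linarith [sinh_sub v u]

theorem convexOn_log_cosh : ConvexOn ℝ univ fun u => log (cosh u) := by
  refine Monotone.convexOn_univ_of_deriv
    (fun u => (hasDerivAt_log_cosh u).differentiableAt) ?_
  simpa only [funext fun u => (hasDerivAt_log_cosh u).deriv] using monotone_tanh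

theorem one_add_sq_div_two_le_cosh (u : ℝ) : 1 + u ^ 2 / 2 ≤ cosh u := by
  wlog hu : 0 ≤ u generalizing u
  · simpa using this (-u) (by linarith)
  have hsinh : u / 2 ≤ sinh (u / 2) := self_le_sinh_iff.2 (by positivity)
  have hcosh : cosh u = 1 + 2 * sinh (u / 2) ^ 2 := by
    have h := cosh_two_mul (u / 2)
    rw [mul_div_cancel₀ u two_ne_zero, cosh_sq] at h
    linarith
  have hsq : (u / 2) ^ 2 ≤ sinh (u / 2) ^ 2 := by gcongr
  linarith

theorem sq_div_two_sub_le_log_cosh (u : ℝ) : u ^ 2 / 2 - u ^ 4 / 8 ≤ log (cosh u) :=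
  calc u ^ 2 / 2 - u ^ 4 / 8 ≤ 2 * (u ^ 2 / 2) / (u ^ 2 / 2 + 2) := by
        rw [le_div_iff₀ (by positivity)]
        linarith [pow_nonneg (sq_nonneg u) 3]
    _ ≤ log (1 + u ^ 2 / 2) := le_log_one_add_of_nonneg (by positivity)
    _ ≤ log (cosh u) := log_le_log (by positivity) (one_add_sq_div_two_le_cosh u)

/-- Jensen's inequality with weights proportional to `ν` and `1 / β`, the points being chosen so
that `w` cancels. -/
theorem log_cosh_jensen {ν β a w : ℝ} (hν : 0 < ν) (hβ : 0 < β) :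
    (ν + 1 / β) * log (cosh (a / 2 / (ν + 1 / β))) ≤
      ν * log (cosh ((w + a) / (2 * ν))) + log (cosh (β * w / 2)) / β := by
  have hJensen := convexOn_log_cosh.2 (mem_univ ((w + a) / (2 * ν))) (mem_univ (-(β * w / 2)))
    (show 0 ≤ ν / (ν + 1 / β) by positivity) (show 0 ≤ 1 / β / (ν + 1 / β) by positivity)
    (by field_simp)
  have hpoint : ν / (ν + 1 / β) * ((w + a) / (2 * ν)) + 1 / β / (ν + 1 / β) * -(β * w / 2) =
      a / 2 / (ν + 1 / β) := by
    field_simp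
    ring
  simp only [smul_eq_mul, hpoint, cosh_neg] at hJensen
  calc (ν + 1 / β) * log (cosh (a / 2 / (ν + 1 / β)))
      ≤ (ν + 1 / β) * (ν / (ν + 1 / β) * log (cosh ((w + a) / (2 * ν))) +
          1 / β / (ν + 1 / β) * log (cosh (β * w / 2))) := by gcongr
    _ = ν * log (cosh ((w + a) / (2 * ν))) + log (cosh (β * w / 2)) / β := by field_simp

theorem log_cosh_div_le_of_concaveOn_exp {E : Type*} [AddCommGroup E] [Module ℝ E] {S : Set E}
    {V : E → ℝ} {β : ℝ} (hβ : 0 < β) (hV : ConcaveOn ℝ S fun x => exp (-(β * V x))) {x y : E}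
    (hx : x ∈ S) (hy : y ∈ S) :
    log (cosh (β * (V y - V x) / 2)) / β ≤
      (V x + V y) / 2 - V ((1 / 2 : ℝ) • x + (1 / 2 : ℝ) • y) := by
  have hconc := hV.2 hx hy (by norm_num : (0 : ℝ) ≤ 1 / 2) (by norm_num : (0 : ℝ) ≤ 1 / 2)
    (by norm_num)
  have havg : (1 / 2 : ℝ) • exp (-(β * V x)) + (1 / 2 : ℝ) • exp (-(β * V y)) =
      exp (-(β * ((V x + V y) / 2))) * cosh (β * (V y - V x) / 2) := by
    have hx : -(β * V x) = -(β * ((V x + V y) / 2)) + β * (V y - V x) / 2 := by ring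
    have hy : -(β * V y) = -(β * ((V x + V y) / 2)) + -(β * (V y - V x) / 2) := by ring
    rw [hx, hy, exp_add, exp_add, cosh_eq, smul_eq_mul, smul_eq_mul]
    ring
  rw [havg] at hconc
  have hlog := log_le_log (by positivity) hconc
  rw [log_mul (exp_pos _).ne' (cosh_pos _).ne', log_exp, log_exp] at hlog
  rw [div_le_iff₀ hβ]
  linarith

/-! ### The potential `r ^ p / p` -/

/-- The radial potential `V r = r ^ p / p`, so that the density of `μ_p` is proportional to
`exp (-V ‖x‖)`. -/
noncomputable def powPotential (p r : ℝ) : ℝ := r ^ p / p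

/-- The function `1 / (ν + V' ^ 2 / V'')` for `V = powPotential p`: the exponent of concavity which
the density `exp (-V ‖x‖)` has near the sphere of radius `r` in dimension `ν`. -/
noncomputable def localExponent (ν p r : ℝ) : ℝ := (p - 1) / (r ^ p + ν * (p - 1))

section powPotential

variable {p : ℝ}

theorem continuous_powPotential (hp : 0 ≤ p) : Continuous (powPotential p) :=
  (continuous_rpow_const hp).div_const p

theorem powPotential_le_powPotential (hp : 0 ≤ p) {r s : ℝ} (hr : 0 ≤ r) (hrs : r ≤ s) :
    powPotential p r ≤ powPotential p s :=
  div_le_div_of_nonneg_right (rpow_le_rpow hr hrs hp) hp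

theorem hasDerivAt_exp_neg_mul_powPotential (hp : p ≠ 0) (β : ℝ) {r : ℝ} (hr : 0 < r) :
    HasDerivAt (fun r => exp (-(β * powPotential p r)))
      (-β * (r ^ (p - 1) * exp (-(β * powPotential p r)))) r := by
  have hV : HasDerivAt (powPotential p) (r ^ (p - 1)) r :=
    ((hasDerivAt_rpow_const (Or.inl hr.ne')).div_const p).congr_deriv (by field_simp)
  exact (hV.const_mul β).neg.exp.congr_deriv (by simp only [Pi.neg_apply]; ring)

theorem concaveOn_exp_neg_mul_powPotential (hp : 1 < p) {R : ℝ} (hR : 0 < R) :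
    ConcaveOn ℝ (Icc 0 R) fun r => exp (-((p - 1) / R ^ p * powPotential p r)) := by
  set β := (p - 1) / R ^ p with hβ
  have : 0 < β := div_pos (by linarith) (by positivity)
  refine concaveOn_of_hasDerivWithinAt2_nonpos (convex_Icc 0 R)
    (f' := fun r => -β * (r ^ (p - 1) * exp (-(β * powPotential p r))))
    (f'' := fun r => -(β * (r ^ (p - 2) * exp (-(β * powPotential p r))) * (p - 1 - β * r ^ p)))
    ?_ ?_ ?_ ?_
  · have := continuous_powPotential (p := p) (by linarith)
    fun_prop
  · rw [interior_Icc]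
    exact fun r hr =>
      (hasDerivAt_exp_neg_mul_powPotential (by linarith) β hr.1).hasDerivWithinAt
  · rw [interior_Icc]
    intro r hr
    have hpow := hasDerivAt_rpow_const (x := r) (p := p - 1) (Or.inl hr.1.ne')
    have hexp := hasDerivAt_exp_neg_mul_powPotential (p := p) (by linarith) β hr.1
    have hsq : r ^ (p - 1) * r ^ (p - 1) = r ^ (p - 2) * r ^ p := by
      rw [← rpow_add hr.1, ← rpow_add hr.1]
      ring_nf
    refine (((hpow.mul hexp).const_mul (-β)).congr_deriv ?_).hasDerivWithinAt
    rw [show p - 1 - 1 = p - 2 by ring]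
    linear_combination β ^ 2 * exp (-(β * powPotential p r)) * hsq
  · rw [interior_Icc]
    intro r hr
    have hr0 : 0 < r := hr.1
    have hle : β * r ^ p ≤ p - 1 := by
      rw [hβ, div_mul_eq_mul_div, div_le_iff₀ (by positivity)]
      gcongr
      exact hr.2.le
    exact neg_nonpos.2 (mul_nonneg (by positivity) (sub_nonneg.2 hle))

theorem powPotential_lt_average (hp : 1 < p) {x y z : ℝ} (hx : 0 ≤ x) (hy : 0 ≤ y) (hz : 0 ≤ z)
    (hz_le : z ≤ (x + y) / 2) (hz_lt : z < max x y) :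
    powPotential p z < (powPotential p x + powPotential p y) / 2 := by
  have hp0 : 0 < p := by linarith
  suffices z ^ p < (x ^ p + y ^ p) / 2 by
    unfold powPotential
    calc z ^ p / p < (x ^ p + y ^ p) / 2 / p := by gcongr
      _ = (x ^ p / p + y ^ p / p) / 2 := by ring
  rcases eq_or_ne x y with rfl | hne
  · rw [max_self] at hz_lt
    simpa using rpow_lt_rpow hz hz_lt hp0
  · calc z ^ p ≤ ((1 / 2 : ℝ) • x + (1 / 2 : ℝ) • y) ^ p :=
          rpow_le_rpow hz (by simp only [smul_eq_mul]; linarith) hp0.le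
      _ < (1 / 2 : ℝ) • x ^ p + (1 / 2 : ℝ) • y ^ p :=
          (strictConvexOn_rpow hp).2 hx hy hne (by norm_num) (by norm_num) (by norm_num)
      _ = (x ^ p + y ^ p) / 2 := by simp only [smul_eq_mul]; ring

end powPotential

section localExponent

variable {ν p : ℝ}

theorem localExponent_pos (hν : 0 < ν) (hp : 1 < p) {r : ℝ} (hr : 0 ≤ r) :
    0 < localExponent ν p r := by
  have : 0 < p - 1 := sub_pos.2 hp
  unfold localExponent
  positivity

theorem localExponent_le_localExponent (hν : 0 < ν) (hp : 1 < p) {r s : ℝ} (hr : 0 ≤ r)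
    (hrs : r ≤ s) : localExponent ν p s ≤ localExponent ν p r := by
  have : 0 < p - 1 := sub_pos.2 hp
  unfold localExponent
  gcongr

theorem localExponent_le_one_div (hν : 0 < ν) (hp : 1 < p) {r : ℝ} (hr : 0 ≤ r) :
    localExponent ν p r ≤ 1 / ν := by
  refine (localExponent_le_localExponent hν hp le_rfl hr).trans_eq ?_
  have : 0 < p - 1 := sub_pos.2 hp
  rw [localExponent, zero_rpow (by linarith), zero_add]
  field_simp

theorem continuousOn_localExponent (hν : 0 < ν) (hp : 1 < p) :
    ContinuousOn (localExponent ν p) (Ici 0) := by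
  have : 0 < p - 1 := sub_pos.2 hp
  have hpow : Continuous fun r : ℝ => r ^ p := continuous_rpow_const (by linarith)
  refine ContinuousOn.div (by fun_prop) (by fun_prop) fun r hr => ?_
  have hr : 0 ≤ r := hr
  positivity

theorem localExponent_mul_sq_div_eight_sub_le (hν : 0 < ν) (hp : 1 < p) {R x y z : ℝ} (hR : 0 < R)
    (hx : x ∈ Icc 0 R) (hy : y ∈ Icc 0 R) (hz : 0 ≤ z) (hz_le : z ≤ (x + y) / 2) (a : ℝ) :
    localExponent ν p R * a ^ 2 / 8 - localExponent ν p R ^ 3 * a ^ 4 / 128 ≤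
      (powPotential p x + powPotential p y) / 2 - powPotential p z +
        ν * log (cosh ((powPotential p y - powPotential p x + a) / (2 * ν))) := by
  have : 0 < p - 1 := sub_pos.2 hp
  set β := (p - 1) / R ^ p with hβ
  have hβ0 : 0 < β := by positivity
  set g := localExponent ν p R with hg
  have hg0 : 0 < g := localExponent_pos hν hp hR.le
  have hβg : ν + 1 / β = 1 / g := by
    rw [hg, hβ, localExponent]
    field_simp
    ring
  have hdefect := log_cosh_div_le_of_concaveOn_exp hβ0 (concaveOn_exp_neg_mul_powPotential hp hR)
    hx hy
  have hmono : powPotential p z ≤ powPotential p ((1 / 2 : ℝ) • x + (1 / 2 : ℝ) • y) :=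
    powPotential_le_powPotential (by linarith) hz (by simp only [smul_eq_mul]; linarith)
  have hJensen := log_cosh_jensen (a := a) (w := powPotential p y - powPotential p x) hν hβ0
  have htaylor : g * a ^ 2 / 8 - g ^ 3 * a ^ 4 / 128 ≤
      (ν + 1 / β) * log (cosh (a / 2 / (ν + 1 / β))) := by
    rw [hβg, show a / 2 / (1 / g) = g * a / 2 by field_simp]
    calc g * a ^ 2 / 8 - g ^ 3 * a ^ 4 / 128
        = 1 / g * ((g * a / 2) ^ 2 / 2 - (g * a / 2) ^ 4 / 8) := by field_simp; ring
      _ ≤ 1 / g * log (cosh (g * a / 2)) := by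
        gcongr
        exact sq_div_two_sub_le_log_cosh _
  linarith

theorem exists_pos_le_powPotential_defect (hp : 1 < p) (R : ℝ) {ρ : ℝ} (hρ : 0 < ρ) :
    ∃ c > 0, ∀ x ∈ Icc 0 R, ∀ y ∈ Icc 0 R, ∀ z ∈ Icc 0 R, z ≤ (x + y) / 2 → z + ρ ≤ max x y →
      c ≤ (powPotential p x + powPotential p y) / 2 - powPotential p z := by
  let S : Set (ℝ × ℝ × ℝ) := (Icc 0 R ×ˢ Icc 0 R ×ˢ Icc 0 R) ∩
    {q | q.2.2 ≤ (q.1 + q.2.1) / 2 ∧ q.2.2 + ρ ≤ max q.1 q.2.1}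
  have hmid : IsClosed {q : ℝ × ℝ × ℝ | q.2.2 ≤ (q.1 + q.2.1) / 2} :=
    isClosed_le (by fun_prop) (by fun_prop)
  have hfar : IsClosed {q : ℝ × ℝ × ℝ | q.2.2 + ρ ≤ max q.1 q.2.1} :=
    isClosed_le (by fun_prop) (by fun_prop)
  have hS : IsCompact S :=
    (isCompact_Icc.prod (isCompact_Icc.prod isCompact_Icc)).inter_right (hmid.inter hfar)
  have hV : Continuous (powPotential p) := continuous_powPotential (by linarith)
  have hcont : Continuous fun q : ℝ × ℝ × ℝ =>
      (powPotential p q.1 + powPotential p q.2.1) / 2 - powPotential p q.2.2 := by fun_prop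
  obtain ⟨c, hc, hcS⟩ := hS.exists_forall_le' hcont.continuousOn (a := 0) fun q hq =>
    sub_pos.2 <| powPotential_lt_average hp hq.1.1.1 hq.1.2.1.1 hq.1.2.2.1 hq.2.1
      ((lt_add_of_pos_right _ hρ).trans_le hq.2.2)
  exact ⟨c, hc, fun x hx y hy z hz hz_le hz_far => hcS (x, y, z) ⟨⟨hx, hy, hz⟩, hz_le, hz_far⟩⟩

theorem exists_localExponent_sub_le (hν : 0 < ν) (hp : 1 < p) (R : ℝ) {η : ℝ} (hη : 0 < η) :
    ∃ ρ > 0, ∀ z ∈ Icc 0 R, ∀ r, z ≤ r → r < z + ρ →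
      localExponent ν p z - η ≤ localExponent ν p r := by
  have huc : UniformContinuousOn (localExponent ν p) (Icc 0 (R + 1)) :=
    isCompact_Icc.uniformContinuousOn_of_continuous
      ((continuousOn_localExponent hν hp).mono Icc_subset_Ici_self)
  obtain ⟨δ, hδ, hclose⟩ := Metric.uniformContinuousOn_iff.1 huc η hη
  refine ⟨min δ 1, by positivity, fun z hz r hzr hr => ?_⟩
  have hrδ : r < z + δ := hr.trans_le (by gcongr; exact min_le_left δ 1)
  have hr1 : r < z + 1 := hr.trans_le (by gcongr; exact min_le_right δ 1)
  have hdist := hclose z ⟨hz.1, by linarith [hz.2]⟩ r ⟨hz.1.trans hzr, by linarith [hz.2]⟩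
    (by rw [dist_comm, Real.dist_eq, abs_lt]; constructor <;> linarith)
  rw [Real.dist_eq, abs_lt] at hdist
  linarith

/-- If `z` is close to `max x y`, the concavity of `exp (-β V)` up to radius `max x y` suffices.
Otherwise strict convexity of `V` leaves a defect bounded away from `0`, which dominates `a ^ 2`. -/
theorem exists_localExponent_sub_mul_sq_le (hν : 0 < ν) (hp : 1 < p) (R : ℝ) {η : ℝ}
    (hη : 0 < η) :
    ∃ δ > 0, ∀ a : ℝ, |a| ≤ δ → ∀ x ∈ Icc 0 R, ∀ y ∈ Icc 0 R, ∀ z, 0 ≤ z → z ≤ (x + y) / 2 →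
      (localExponent ν p z - η) * a ^ 2 / 8 ≤
        (powPotential p x + powPotential p y) / 2 - powPotential p z +
          ν * log (cosh ((powPotential p y - powPotential p x + a) / (2 * ν))) := by
  obtain ⟨ρ, hρ, hnear⟩ := exists_localExponent_sub_le hν hp R (half_pos hη)
  obtain ⟨c, hc, hfar⟩ := exists_pos_le_powPotential_defect hp R (half_pos hρ)
  refine ⟨√(min (8 * ν * c) (8 * ν ^ 3 * η)), sqrt_pos.2 (by positivity),
    fun a ha x hx y hy z hz hz_le => ?_⟩
  have ha_sq : a ^ 2 ≤ min (8 * ν * c) (8 * ν ^ 3 * η) :=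
    sq_abs a ▸ (le_sqrt (abs_nonneg a) (by positivity)).1 ha
  have hzR : z ≤ R := by linarith [hx.2, hy.2]
  have hz_max : z ≤ max x y := by linarith [le_max_left x y, le_max_right x y]
  rcases le_or_gt (z + ρ / 2) (max x y) with hz_far | hz_near
  · have hdefect := hfar x hx y hy z ⟨hz, hzR⟩ hz_le hz_far
    have hlog : 0 ≤ ν * log (cosh ((powPotential p y - powPotential p x + a) / (2 * ν))) :=
      mul_nonneg hν.le (log_nonneg (one_le_cosh _))
    have hsmall : (localExponent ν p z - η) * a ^ 2 / 8 ≤ c :=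
      calc (localExponent ν p z - η) * a ^ 2 / 8 ≤ 1 / ν * (8 * ν * c) / 8 := by
            gcongr
            · linarith [localExponent_le_one_div hν hp hz]
            · exact ha_sq.trans (min_le_left _ _)
        _ = c := by field_simp
    linarith
  · set r := max x y + ρ / 4 with hr_def
    have hr : 0 < r := by linarith [hx.1, le_max_left x y]
    have hmain := localExponent_mul_sq_div_eight_sub_le hν hp hr
      ⟨hx.1, by linarith [le_max_left x y]⟩ ⟨hy.1, by linarith [le_max_right x y]⟩ hz hz_le a
    have hzr := hnear z ⟨hz, hzR⟩ r (by linarith) (by linarith)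
    set g := localExponent ν p r
    have hg : 0 ≤ g := (localExponent_pos hν hp hr.le).le
    have hquartic : g ^ 3 * a ^ 4 / 128 ≤ η / 2 * a ^ 2 / 8 :=
      calc g ^ 3 * a ^ 4 / 128 = g ^ 3 * (a ^ 2 * a ^ 2) / 128 := by ring
        _ ≤ (1 / ν) ^ 3 * ((8 * ν ^ 3 * η) * a ^ 2) / 128 := by
          gcongr
          · exact localExponent_le_one_div hν hp hr.le
          · exact ha_sq.trans (min_le_right _ _)
        _ = η / 2 * a ^ 2 / 8 := by field_simp; ring
    have hzg : (localExponent ν p z - η) * a ^ 2 / 8 ≤ (g - η / 2) * a ^ 2 / 8 := by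
      gcongr ?_ * _ / _
      linarith
    linarith

end localExponent

/-! ### The exponent of concavity -/

section concavityExponent

theorem uiGamma_nonneg (s : ℝ) {x : ℝ} (hx : 0 ≤ x) : 0 ≤ uiGamma s x :=
  setIntegral_nonneg measurableSet_Ioi fun t ht => by
    have : 0 < t := hx.trans_lt ht
    positivity

theorem uiGamma_eq_rpow_mul_integral_Ioi_one (s : ℝ) {x : ℝ} (hx : 0 < x) :
    uiGamma s x = x ^ s * ∫ v in Ioi 1, exp (-(x * v)) * v ^ (s - 1) := by
  have hsubst := integral_comp_mul_left_Ioi' (fun t => t ^ (s - 1) * exp (-t)) 1 hx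
  rw [mul_one, smul_eq_mul] at hsubst
  rw [uiGamma, ← hsubst, ← integral_const_mul, ← integral_const_mul]
  refine setIntegral_congr_fun measurableSet_Ioi fun v hv => ?_
  have hv : 0 ≤ v := zero_le_one.trans (le_of_lt hv)
  simp only [mul_rpow hx.le hv, rpow_sub_one hx.ne']
  field_simp

/-- The exponent `α` of the Brunn–Minkowski inequality for `μ_p` on a space of dimension `ν`. -/
noncomputable def concavityExponent (ν p : ℝ) : ℝ :=
  1 / ν * exp ((p - 1) * ν / p) * ((p - 1) * ν / p) ^ (ν / p) *
    uiGamma (1 - ν / p) ((p - 1) * ν / p)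

/-- The density of `‖x‖` when `x` has density `exp (-powPotential p ‖x‖)` on a space of dimension
`ν`, up to a constant factor. -/
noncomputable def radialDensity (ν p r : ℝ) : ℝ := r ^ (ν - 1) * exp (-powPotential p r)

variable {ν p : ℝ}

theorem concavityExponent_nonneg (hν : 0 ≤ ν) (hp : 1 ≤ p) : 0 ≤ concavityExponent ν p := by
  have : 0 ≤ p - 1 := sub_nonneg.2 hp
  have hx : 0 ≤ (p - 1) * ν / p := by positivity
  have := uiGamma_nonneg (1 - ν / p) hx
  unfold concavityExponent
  positivity

theorem radialDensity_nonneg {r : ℝ} (hr : 0 ≤ r) : 0 ≤ radialDensity ν p r := by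
  unfold radialDensity
  positivity

theorem integrableOn_radialDensity (hν : 0 < ν) (hp : 1 ≤ p) :
    IntegrableOn (radialDensity ν p) (Ioi 0) := by
  refine (integrableOn_rpow_mul_exp_neg_mul_rpow (s := ν - 1) (p := p) (b := 1 / p) (by linarith)
    (by linarith) (by positivity)).congr_fun (fun r _ => ?_) measurableSet_Ioi
  simp only [radialDensity, powPotential, neg_mul, one_div_mul_eq_div]

theorem integral_rpow_mul_exp_neg_mul_powPotential (hν : 0 < ν) (hp : 0 < p) {v : ℝ}
    (hv : 0 < v) :
    ∫ r in Ioi 0, r ^ (ν - 1) * exp (-(v * powPotential p r)) =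
      v ^ (-(ν / p)) * ∫ r in Ioi 0, radialDensity ν p r := by
  have hscale : ∀ b > 0, ∫ r in Ioi 0, r ^ (ν - 1) * exp (-(b * powPotential p r)) =
      (b / p) ^ (-(ν / p)) * ((1 / p) * Gamma (ν / p)) := fun b hb => by
    have hgamma := integral_rpow_mul_exp_neg_mul_rpow (p := p) (q := ν - 1) (b := b / p) hp
      (by linarith) (by positivity)
    rw [sub_add_cancel, neg_div, mul_assoc] at hgamma
    rw [← hgamma]
    congr! 4 with r
    rw [powPotential]
    ring
  have hone := hscale 1 one_pos
  simp only [one_mul] at hone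
  unfold radialDensity
  rw [hscale v hv, hone, div_eq_mul_one_div v, mul_rpow hv.le (by positivity), mul_assoc]

theorem localExponent_eq_integral (hν : 0 < ν) (hp : 1 < p) {r : ℝ} (hr : 0 ≤ r) :
    exp (-powPotential p r) * localExponent ν p r =
      (p - 1) / p * exp ((p - 1) * ν / p) *
        ∫ v in Ioi 1, exp (-((p - 1) * ν / p * v)) * exp (-(v * powPotential p r)) := by
  have : 0 < p - 1 := sub_pos.2 hp
  set x := (p - 1) * ν / p with hx
  have hrate : 0 < x + powPotential p r := by unfold powPotential; positivity
  have hrate_eq : x + powPotential p r = (r ^ p + ν * (p - 1)) / p := by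
    rw [hx, powPotential]
    ring
  have hint : ∫ v in Ioi 1, exp (-(x * v)) * exp (-(v * powPotential p r)) =
      exp (-x) * exp (-powPotential p r) / (x + powPotential p r) := by
    have hexp := integral_exp_mul_Ioi (a := -(x + powPotential p r)) (by linarith) 1
    rw [mul_one, neg_div_neg_eq, neg_add, exp_add] at hexp
    rw [← hexp]
    congr! 2 with v
    rw [← exp_add]
    ring_nf
  rw [hint, hrate_eq, localExponent, exp_neg x]
  have : 0 < r ^ p + ν * (p - 1) := by positivity
  field_simp

theorem integrable_prod_rpow_mul_exp (hν : 0 < ν) (hp : 1 ≤ p) {x : ℝ} (hx : 0 < x) :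
    Integrable
      (Function.uncurry fun r v => r ^ (ν - 1) * (exp (-(x * v)) * exp (-(v * powPotential p r))))
      ((volume.restrict (Ioi (0 : ℝ))).prod (volume.restrict (Ioi (1 : ℝ)))) := by
  have hV : Measurable (powPotential p) := (continuous_powPotential (by linarith)).measurable
  have hdom := (integrableOn_radialDensity hν hp).integrable.mul_prod
    (exp_neg_integrableOn_Ioi 1 hx).integrable
  refine hdom.mono' (by fun_prop) ?_
  rw [Measure.prod_restrict]
  filter_upwards [ae_restrict_mem (measurableSet_Ioi.prod measurableSet_Ioi)] with ⟨r, v⟩ ⟨hr, hv⟩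
  have hr : 0 < r := hr
  have hv : 1 ≤ v := le_of_lt hv
  have hVr : 0 ≤ powPotential p r := by unfold powPotential; positivity
  rw [Function.uncurry_apply_pair, norm_of_nonneg (by positivity), radialDensity, mul_assoc,
    mul_comm (exp (-(x * v))), neg_mul]
  gcongr
  exact le_mul_of_one_le_left hVr hv

/-- `localExponent` is a Laplace transform in `r ^ p / p`; Fubini's theorem then reduces the radial
integral to Gamma integrals. -/
theorem integral_radialDensity_mul_localExponent (hν : 0 < ν) (hp : 1 < p) :
    ∫ r in Ioi 0, radialDensity ν p r * localExponent ν p r =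
      concavityExponent ν p * ∫ r in Ioi 0, radialDensity ν p r := by
  have hp1 : 0 < p - 1 := sub_pos.2 hp
  set x := (p - 1) * ν / p with hx
  have hx0 : 0 < x := by positivity
  set I := ∫ r in Ioi 0, radialDensity ν p r
  calc ∫ r in Ioi 0, radialDensity ν p r * localExponent ν p r
      = ∫ r in Ioi 0, (p - 1) / p * exp x * ∫ v in Ioi 1,
          r ^ (ν - 1) * (exp (-(x * v)) * exp (-(v * powPotential p r))) := by
        refine setIntegral_congr_fun measurableSet_Ioi fun r hr => ?_
        rw [radialDensity, mul_assoc, localExponent_eq_integral hν hp (le_of_lt hr),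
          integral_const_mul, mul_left_comm]
    _ = (p - 1) / p * exp x * ∫ v in Ioi 1, ∫ r in Ioi 0,
          r ^ (ν - 1) * (exp (-(x * v)) * exp (-(v * powPotential p r))) := by
        rw [integral_const_mul, integral_integral_swap (integrable_prod_rpow_mul_exp hν hp.le hx0)]
    _ = (p - 1) / p * exp x * ∫ v in Ioi 1, exp (-(x * v)) * v ^ (-(ν / p)) * I := by
        congr 1
        refine setIntegral_congr_fun measurableSet_Ioi fun v hv => ?_
        simp only [mul_left_comm _ (exp (-(x * v))), integral_const_mul]
        rw [integral_rpow_mul_exp_neg_mul_powPotential hν (by linarith) (one_pos.trans hv),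
          mul_assoc]
    _ = concavityExponent ν p * I := by
        rw [integral_mul_const, concavityExponent, ← hx,
          uiGamma_eq_rpow_mul_integral_Ioi_one _ hx0, rpow_sub hx0, rpow_one,
          show 1 - ν / p - 1 = -(ν / p) by ring,
          show 1 / ν = (p - 1) / p / x by rw [hx]; field_simp]
        field_simp

theorem integrableOn_radialDensity_mul_localExponent (hν : 0 < ν) (hp : 1 < p) :
    IntegrableOn (fun r => radialDensity ν p r * localExponent ν p r) (Ioi 0) := by
  refine (integrableOn_radialDensity hν hp.le).mul_bdd (c := 1 / ν) ?_ ?_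
  · exact ((continuousOn_localExponent hν hp).mono Ioi_subset_Ici_self).aestronglyMeasurable
      measurableSet_Ioi
  · filter_upwards [ae_restrict_mem measurableSet_Ioi] with r hr
    rw [norm_of_nonneg (localExponent_pos hν hp (le_of_lt hr)).le]
    exact localExponent_le_one_div hν hp (le_of_lt hr)

theorem setIntegral_inter_nonneg_of_sign_change {X : Type*} [LinearOrder X] [MeasurableSpace X]
    {μ : Measure X} {f : X → ℝ} {s T : Set X} (hs : MeasurableSet s) (hT : MeasurableSet T)
    (hf : IntegrableOn f s μ) (hint : 0 ≤ ∫ x in s, f x ∂μ)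
    (hsign : ∀ x ∈ s, ∀ y ∈ s, x ≤ y → f x < 0 → f y ≤ 0)
    (hlower : ∀ x ∈ s ∩ T, ∀ y ∈ s, y ≤ x → y ∈ T) :
    0 ≤ ∫ x in s ∩ T, f x ∂μ := by
  by_cases hpos : ∀ x ∈ s ∩ T, 0 ≤ f x
  · exact setIntegral_nonneg (hs.inter hT) hpos
  push Not at hpos
  obtain ⟨x, hx, hfx⟩ := hpos
  have houter : ∫ y in s \ T, f y ∂μ ≤ 0 :=
    setIntegral_nonpos (hs.diff hT) fun y hy =>
      hsign x hx.1 y hy.1 (le_of_not_ge fun hyx => hy.2 (hlower x hx y hy.1 hyx)) hfx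
  linarith [integral_inter_add_sdiff hT hf]

theorem integral_radialDensity_mul_localExponent_sub_nonneg (hν : 0 < ν) (hp : 1 < p) {T : Set ℝ}
    (hT : MeasurableSet T) (hlower : ∀ r ∈ T, ∀ r', 0 < r' → r' ≤ r → r' ∈ T) :
    0 ≤ ∫ r in Ioi 0 ∩ T,
      radialDensity ν p r * (localExponent ν p r - concavityExponent ν p) := by
  have hint := integrableOn_radialDensity_mul_localExponent hν hp
  have hint' := (integrableOn_radialDensity hν hp.le).mul_const (concavityExponent ν p)
  refine setIntegral_inter_nonneg_of_sign_change measurableSet_Ioi hT ?_ ?_ ?_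
    fun r hr r' hr' => hlower r hr.2 r' hr'
  · simp only [mul_sub]
    exact hint.sub hint'
  · simp only [mul_sub]
    rw [integral_sub hint hint', integral_radialDensity_mul_localExponent hν hp,
      integral_mul_const, mul_comm, sub_self]
  · intro r hr r' hr' hrr' hneg
    have hsub := neg_of_mul_neg_right hneg (radialDensity_nonneg (le_of_lt hr))
    have hanti := localExponent_le_localExponent hν hp (le_of_lt hr) hrr'
    exact mul_nonpos_of_nonneg_of_nonpos (radialDensity_nonneg (le_of_lt hr')) (by linarith)

end concavityExponent

section polar

theorem homeomorphUnitSphereProd_snd_smul_fst {E : Type*} [NormedAddCommGroup E]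
    [NormedSpace ℝ E] (x : ({0}ᶜ : Set E)) :
    (homeomorphUnitSphereProd E x).2.1 • (homeomorphUnitSphereProd E x).1.1 = x.1 := by
  rw [← homeomorphUnitSphereProd_symm_apply_coe, Homeomorph.symm_apply_apply]

theorem integral_volumeIoiPow (k : ℕ) (f : ℝ → ℝ) :
    ∫ r : Ioi (0 : ℝ), f r ∂.volumeIoiPow k = ∫ r in Ioi (0 : ℝ), r ^ k * f r := by
  simp only [Measure.volumeIoiPow, ENNReal.ofReal]
  rw [integral_withDensity_eq_integral_smul (by fun_prop),
    integral_subtype_comap measurableSet_Ioi fun r : ℝ => (r ^ k).toNNReal • f r]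
  refine setIntegral_congr_fun measurableSet_Ioi fun r hr => ?_
  have hr : 0 < r := hr
  simp only [NNReal.smul_def, coe_toNNReal _ (pow_nonneg hr.le k), smul_eq_mul]

theorem continuous_localExponent_norm {E : Type*} [SeminormedAddGroup E] {ν p : ℝ}
    (hν : 0 < ν) (hp : 1 < p) :
    Continuous fun x : E => localExponent ν p ‖x‖ :=
  (continuousOn_localExponent hν hp).comp_continuous continuous_norm norm_nonneg

variable {E : Type*} [NormedAddCommGroup E] [NormedSpace ℝ E] [FiniteDimensional ℝ E]
  [Nontrivial E] [MeasurableSpace E] [BorelSpace E] (μ : Measure E) [μ.IsAddHaarMeasure]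

theorem integral_eq_integral_toSphere_integral_Ioi {f : E → ℝ} (hf : Integrable f μ) :
    ∫ x, f x ∂μ = ∫ u : Metric.sphere (0 : E) 1,
      (∫ r in Ioi (0 : ℝ), r ^ (Module.finrank ℝ E - 1) * f (r • u.1)) ∂μ.toSphere := by
  let g : Metric.sphere (0 : E) 1 × Ioi (0 : ℝ) → ℝ := fun z => f (z.2.1 • z.1.1)
  have hg : ∀ x : ({0}ᶜ : Set E), g (homeomorphUnitSphereProd E x) = f x.1 := fun x =>
    congrArg f (homeomorphUnitSphereProd_snd_smul_fst x)
  have hpres := μ.measurePreserving_homeomorphUnitSphereProd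
  have hemb := (homeomorphUnitSphereProd E).measurableEmbedding
  have hgint : Integrable g (μ.toSphere.prod (.volumeIoiPow (Module.finrank ℝ E - 1))) := by
    rw [← hpres.integrable_comp_emb hemb]
    simp only [Function.comp_def, hg]
    exact (integrableOn_iff_comap_subtypeVal (measurableSet_singleton (0 : E)).compl).1
      hf.integrableOn
  calc ∫ x, f x ∂μ = ∫ x : ({0}ᶜ : Set E), f x.1 ∂(μ.comap Subtype.val) := by
        rw [integral_subtype_comap (measurableSet_singleton _).compl, restrict_compl_singleton]
    _ = ∫ z, g z ∂μ.toSphere.prod (.volumeIoiPow (Module.finrank ℝ E - 1)) := by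
        rw [← hpres.integral_comp hemb]
        simp only [hg]
    _ = _ := by
        rw [integral_prod _ hgint]
        exact integral_congr_ae (.of_forall fun u => integral_volumeIoiPow _ fun r => f (r • u.1))

/-- On every ray from the origin the sign of `localExponent - concavityExponent` changes once, from
positive to negative, and the radial integral over the whole ray is `0`. -/
theorem integral_exp_mul_localExponent_sub_nonneg {p : ℝ} (hp : 1 < p) {C : Set E}
    (hC : IsCompact C) (hstar : StarConvex ℝ 0 C) :
    0 ≤ ∫ x in C, exp (-powPotential p ‖x‖) *
      (localExponent (Module.finrank ℝ E) p ‖x‖ - concavityExponent (Module.finrank ℝ E) p) ∂μ := by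
  set d := Module.finrank ℝ E
  have hd : 0 < d := Module.finrank_pos
  have hd' : (0 : ℝ) < d := Nat.cast_pos.2 hd
  have hcont : Continuous fun x : E => exp (-powPotential p ‖x‖) *
      (localExponent d p ‖x‖ - concavityExponent d p) := by
    have := continuous_powPotential (p := p) (by linarith)
    have := continuous_localExponent_norm (E := E) hd' hp
    fun_prop
  rw [← integral_indicator hC.measurableSet, integral_eq_integral_toSphere_integral_Ioi μ
    ((integrable_indicator_iff hC.measurableSet).2 (hcont.continuousOn.integrableOn_compact hC))]
  refine integral_nonneg fun u => ?_
  let T : Set ℝ := (fun r : ℝ => r • u.1) ⁻¹' C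
  have hT : MeasurableSet T := by
    have : Measurable fun r : ℝ => r • u.1 := by fun_prop
    exact this hC.measurableSet
  have hlower : ∀ r ∈ T, ∀ r', 0 < r' → r' ≤ r → r' ∈ T := fun r hr r' hr' hrr' => by
    have hr0 : 0 < r := hr'.trans_le hrr'
    have := hstar.smul_mem hr (div_nonneg hr'.le hr0.le) ((div_le_one hr0).2 hrr')
    rwa [smul_smul, div_mul_cancel₀ _ hr0.ne'] at this
  refine (integral_radialDensity_mul_localExponent_sub_nonneg hd' hp hT hlower).trans_eq ?_
  rw [← setIntegral_indicator hT]
  refine setIntegral_congr_fun measurableSet_Ioi fun r hr => ?_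
  have hnorm : ‖r • u.1‖ = r := by
    rw [norm_smul, norm_eq_of_mem_sphere, mul_one, norm_of_nonneg (le_of_lt hr)]
  by_cases hrC : r • u.1 ∈ C
  · rw [indicator_of_mem (show r ∈ T from hrC), indicator_of_mem hrC, hnorm, radialDensity,
      mul_assoc, ← Nat.cast_pred hd, rpow_natCast]
  · rw [indicator_of_notMem (show r ∉ T from hrC), indicator_of_notMem hrC, mul_zero]

end polar

/-! ### The local midpoint inequality -/

theorem negPowerMean_half_exp_neg {κ : ℝ} (hκ : 0 < κ) (P Q : ℝ) :
    negPowerMean κ (1 / 2) (1 / 2) (exp (-P)) (exp (-Q)) =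
      exp (-((P + Q) / 2 + κ * log (cosh ((Q - P) / (2 * κ))))) := by
  have hmean : 1 / 2 * exp (-P) ^ (-1 / κ) + 1 / 2 * exp (-Q) ^ (-1 / κ) =
      exp ((P + Q) / (2 * κ) + log (cosh ((Q - P) / (2 * κ)))) := by
    rw [← exp_mul, ← exp_mul, exp_add, exp_log (cosh_pos _), cosh_eq,
      show -P * (-1 / κ) = (P + Q) / (2 * κ) + -((Q - P) / (2 * κ)) by field_simp; ring,
      show -Q * (-1 / κ) = (P + Q) / (2 * κ) + (Q - P) / (2 * κ) by field_simp; ring,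
      exp_add, exp_add]
    ring
  rw [negPowerMean_of_pos hκ, hmean, ← exp_mul]
  congr 1
  field_simp

theorem isBoundedDensity_indicator {X : Type*} [PseudoMetricSpace X] [T2Space X]
    [MeasurableSpace X] [OpensMeasurableSpace X] {S : Set X} (hS : IsCompact S) {f : X → ℝ}
    (hf : Continuous f) (hf_nonneg : 0 ≤ f) : IsBoundedDensity (S.indicator f) where
  measurable := hf.measurable.indicator hS.measurableSet
  nonneg := indicator_nonneg fun x _ => hf_nonneg x
  bddAbove := by
    obtain ⟨C, hC⟩ := hS.bddAbove_image hf.continuousOn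
    refine ⟨max C 0, forall_mem_range.2 fun x => ?_⟩
    by_cases hx : x ∈ S
    · rw [indicator_of_mem hx]
      exact (hC (mem_image_of_mem f hx)).trans (le_max_left C 0)
    · rw [indicator_of_notMem hx]
      exact le_max_right C 0
  isBounded_support := hS.isBounded.subset support_indicator_subset

theorem rpow_add_rpow_le_two_mul_rpow {a b c β : ℝ} (ha : 0 < a) (hb : 0 < b) (hβ : 0 ≤ β)
    (h : exp ((log a + log b) / 2 + β * (log b - log a) ^ 2 / 8) ≤ c) :
    a ^ β + b ^ β ≤ 2 * c ^ β := by
  set k := log a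
  set l := log b
  calc a ^ β + b ^ β = exp (k * β) + exp (l * β) := by
        rw [rpow_def_of_pos ha, rpow_def_of_pos hb]
    _ = 2 * (exp (β * (k + l) / 2) * cosh (β * (l - k) / 2)) := by
        rw [show k * β = β * (k + l) / 2 + -(β * (l - k) / 2) by ring,
          show l * β = β * (k + l) / 2 + β * (l - k) / 2 by ring, exp_add, exp_add, cosh_eq]
        ring
    _ ≤ 2 * (exp (β * (k + l) / 2) * exp ((β * (l - k) / 2) ^ 2 / 2)) := by
        gcongr
        exact cosh_le_exp_half_sq _
    _ = 2 * exp ((k + l) / 2 + β * (l - k) ^ 2 / 8) ^ β := by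
        rw [← exp_add, ← exp_mul]
        ring_nf
    _ ≤ 2 * c ^ β := by gcongr

theorem exp_neg_mul_le_one_sub {g η q : ℝ} (hg : 0 ≤ g) (hg1 : g ≤ 1) (hη : 0 ≤ η) (hη1 : η ≤ 1)
    (hq : 0 ≤ q) (hqη : q ≤ η) : exp (-((g - η) * q)) ≤ 1 - (g - 2 * η) * q := by
  have habs : |-((g - η) * q)| ≤ q := by
    rw [abs_neg, abs_mul, abs_of_nonneg hq]
    exact mul_le_of_le_one_left hq (abs_le.2 ⟨by linarith, by linarith⟩)
  have htaylor := (abs_le.1 (abs_exp_sub_one_sub_id_le (habs.trans (hqη.trans hη1)))).2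
  have hsq : (-((g - η) * q)) ^ 2 ≤ η * q :=
    calc (-((g - η) * q)) ^ 2 ≤ q ^ 2 := sq_le_sq' (abs_le.1 habs).1 (abs_le.1 habs).2
      _ = q * q := sq q
      _ ≤ η * q := by gcongr
  linarith

/-- The mass of `S` under the measure with density `exp (-‖x‖ ^ p / p)`, that is, under `μ_p` up to
its normalizing constant. -/
noncomputable def potentialMass {E : Type*} [NormedAddCommGroup E] [MeasureSpace E] (p : ℝ)
    (S : Set E) : ℝ :=
  ∫ x in S, exp (-powPotential p ‖x‖)

theorem setIntegral_exp_neg_powPotential_add_log {E : Type*} [NormedAddCommGroup E] [MeasureSpace E]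
    {p : ℝ} {S : Set E} (hS : 0 < potentialMass p S) :
    ∫ x in S, exp (-(powPotential p ‖x‖ + log (potentialMass p S))) = 1 := by
  simp only [neg_add, exp_add, integral_mul_const]
  rw [exp_neg (log _), exp_log hS]
  exact mul_inv_cancel₀ hS.ne'

theorem norm_half_smul_add_half_smul_le {E : Type*} [NormedAddCommGroup E] [NormedSpace ℝ E]
    (x y : E) : ‖(1 / 2 : ℝ) • x + (1 / 2 : ℝ) • y‖ ≤ (‖x‖ + ‖y‖) / 2 := by
  rw [← smul_add, norm_smul, norm_of_nonneg one_half_pos.le]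
  linarith [norm_add_le x y]

theorem continuous_powPotential_norm {E : Type*} [SeminormedAddGroup E] {p : ℝ} (hp : 0 ≤ p) :
    Continuous fun x : E => powPotential p ‖x‖ :=
  (continuous_powPotential hp).comp continuous_norm

section midpoint

variable {E : Type*} [NormedAddCommGroup E] [InnerProductSpace ℝ E] [FiniteDimensional ℝ E]
  [Nontrivial E] [MeasurableSpace E] [BorelSpace E] {p : ℝ}

theorem min_setIntegral_exp_neg_le {A B C : Set E} (hA : IsCompact A) (hB : IsCompact B)
    (hC : IsCompact C) {P Q W : E → ℝ} (hP : Continuous P) (hQ : Continuous Q) (hW : Continuous W)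
    (hmid : ∀ x ∈ A, ∀ y ∈ B, (1 / 2 : ℝ) • x + (1 / 2 : ℝ) • y ∈ C)
    (hle : ∀ x ∈ A, ∀ y ∈ B, W ((1 / 2 : ℝ) • x + (1 / 2 : ℝ) • y) ≤ (P x + Q y) / 2 +
      Module.finrank ℝ E * log (cosh ((Q y - P x) / (2 * Module.finrank ℝ E))))
    (hA_pos : 0 < ∫ x in A, exp (-P x)) (hB_pos : 0 < ∫ x in B, exp (-Q x)) :
    min (∫ x in A, exp (-P x)) (∫ x in B, exp (-Q x)) ≤ ∫ x in C, exp (-W x) := by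
  have hdensity {S : Set E} (hS : IsCompact S) {F : E → ℝ} (hF : Continuous F) :
      IsBoundedDensity (S.indicator fun x => exp (-F x)) :=
    isBoundedDensity_indicator hS (by fun_prop) fun x => (exp_pos _).le
  have hmem {S : Set E} {F : E → ℝ} {x : E} (hx : 0 < S.indicator (fun x => exp (-F x)) x) :
      x ∈ S := mem_of_indicator_ne_zero hx.ne'
  have hd : (0 : ℝ) < Module.finrank ℝ E := Nat.cast_pos.2 Module.finrank_pos
  simp only [← integral_indicator hA.measurableSet, ← integral_indicator hB.measurableSet,
    ← integral_indicator hC.measurableSet] at hA_pos hB_pos ⊢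
  rw [← negPowerMean_zero (s := 1 / 2) (t := 1 / 2)]
  refine BorellBrascampLieb.euclidean E le_rfl one_half_pos one_half_pos (hdensity hA hP)
    (hdensity hB hQ) (hdensity hC hW) (fun x y hx hy => ?_) hA_pos hB_pos
  have hxA := hmem hx
  have hyB := hmem hy
  rw [indicator_of_mem hxA, indicator_of_mem hyB, indicator_of_mem (hmid x hxA y hyB), zero_add,
    negPowerMean_half_exp_neg hd]
  exact exp_le_exp.2 (neg_le_neg (hle x hxA y hyB))

theorem setIntegral_exp_neg_mul_le {C : Set E} (hC : IsCompact C) (hstar : StarConvex ℝ 0 C)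
    (hp : 1 < p) {η q : ℝ} (hη : 0 ≤ η) (hη1 : η ≤ 1) (hq : 0 ≤ q) (hqη : q ≤ η) :
    ∫ x in C, exp (-powPotential p ‖x‖) *
        exp (-((localExponent (Module.finrank ℝ E) p ‖x‖ - η) * q)) ≤
      potentialMass p C * exp (-((concavityExponent (Module.finrank ℝ E) p - 2 * η) * q)) := by
  have hd1 : (1 : ℝ) ≤ Module.finrank ℝ E := Nat.one_le_cast.2 Module.finrank_pos
  set d := (Module.finrank ℝ E : ℝ)
  have hd : 0 < d := one_pos.trans_le hd1
  set α := concavityExponent d p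
  have hV := continuous_powPotential_norm (E := E) (p := p) (by linarith)
  have hG := continuous_localExponent_norm (E := E) hd hp
  have hint {f : E → ℝ} (hf : Continuous f) : IntegrableOn f C :=
    hf.continuousOn.integrableOn_compact hC
  have hnonneg : 0 ≤ q * ∫ x in C, exp (-powPotential p ‖x‖) * (localExponent d p ‖x‖ - α) :=
    mul_nonneg hq (integral_exp_mul_localExponent_sub_nonneg volume hp hC hstar)
  have hmass : 0 ≤ potentialMass p C :=
    setIntegral_nonneg hC.measurableSet fun x _ => (exp_pos _).le
  calc ∫ x in C, exp (-powPotential p ‖x‖) * exp (-((localExponent d p ‖x‖ - η) * q))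
      ≤ ∫ x in C, ((1 - (α - 2 * η) * q) * exp (-powPotential p ‖x‖) -
          q * (exp (-powPotential p ‖x‖) * (localExponent d p ‖x‖ - α))) := by
        refine integral_mono (hint (by fun_prop)) (hint (by fun_prop)) fun x => ?_
        have hG_le := (localExponent_le_one_div hd hp (norm_nonneg x)).trans
          ((div_le_one hd).2 hd1)
        have hexp := exp_neg_mul_le_one_sub (localExponent_pos hd hp (norm_nonneg x)).le hG_le hη
          hη1 hq hqη
        linarith [mul_le_mul_of_nonneg_left hexp (exp_pos (-powPotential p ‖x‖)).le]
    _ = potentialMass p C * (1 - (α - 2 * η) * q) -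
          q * ∫ x in C, exp (-powPotential p ‖x‖) * (localExponent d p ‖x‖ - α) := by
        rw [integral_sub (hint (by fun_prop)) (hint (by fun_prop)), integral_const_mul,
          integral_const_mul, potentialMass, mul_comm]
    _ ≤ potentialMass p C * (1 - (α - 2 * η) * q) := sub_le_self _ hnonneg
    _ ≤ potentialMass p C * exp (-((α - 2 * η) * q)) := by
        gcongr
        exact one_sub_le_exp_neg _

/-- `min_setIntegral_exp_neg_le` for the densities on `A` and `B` normalized to total mass `1`. -/
theorem exp_half_log_add_log_le_setIntegral (hp : 1 < p) {A B C : Set E} (hA : IsCompact A)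
    (hB : IsCompact B) (hC : IsCompact C) (hA_pos : 0 < potentialMass p A)
    (hB_pos : 0 < potentialMass p B) {W : E → ℝ} (hW : Continuous W)
    (hmid : ∀ x ∈ A, ∀ y ∈ B, (1 / 2 : ℝ) • x + (1 / 2 : ℝ) • y ∈ C)
    (hle : ∀ x ∈ A, ∀ y ∈ B, W ((1 / 2 : ℝ) • x + (1 / 2 : ℝ) • y) ≤
      (powPotential p ‖x‖ + powPotential p ‖y‖) / 2 + Module.finrank ℝ E *
        log (cosh ((powPotential p ‖y‖ - powPotential p ‖x‖ +
          (log (potentialMass p B) - log (potentialMass p A))) / (2 * Module.finrank ℝ E)))) :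
    exp ((log (potentialMass p A) + log (potentialMass p B)) / 2) ≤ ∫ x in C, exp (-W x) := by
  set k := log (potentialMass p A)
  set l := log (potentialMass p B)
  have hV := continuous_powPotential_norm (E := E) (p := p) (by linarith)
  have hA_one : ∫ x in A, exp (-(powPotential p ‖x‖ + k)) = 1 :=
    setIntegral_exp_neg_powPotential_add_log hA_pos
  have hB_one : ∫ x in B, exp (-(powPotential p ‖x‖ + l)) = 1 :=
    setIntegral_exp_neg_powPotential_add_log hB_pos
  have hmin := min_setIntegral_exp_neg_le hA hB hC (P := fun x => powPotential p ‖x‖ + k)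
    (Q := fun x => powPotential p ‖x‖ + l) (W := fun x => W x + (k + l) / 2) (by fun_prop)
    (by fun_prop) (by fun_prop) hmid (fun x hx y hy => by
      rw [add_sub_add_comm]
      linarith [hle x hx y hy]) (hA_one ▸ one_pos) (hB_one ▸ one_pos)
  rw [hA_one, hB_one, min_self] at hmin
  simp only [neg_add, exp_add, integral_mul_const] at hmin
  rwa [exp_neg ((k + l) / 2), ← div_eq_mul_inv, one_le_div (exp_pos _)] at hmin

theorem exists_rpow_potentialMass_midpoint (hp : 1 < p) (R : ℝ) {β : ℝ} (hβ0 : 0 ≤ β)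
    (hβ : β < concavityExponent (Module.finrank ℝ E) p) :
    ∃ δ > 0, ∀ A B C : Set E, IsCompact A → IsCompact B → IsCompact C →
      A ⊆ Metric.closedBall 0 R → B ⊆ Metric.closedBall 0 R → StarConvex ℝ 0 C →
      (∀ x ∈ A, ∀ y ∈ B, (1 / 2 : ℝ) • x + (1 / 2 : ℝ) • y ∈ C) →
      0 < potentialMass p A → 0 < potentialMass p B →
      |log (potentialMass p B) - log (potentialMass p A)| ≤ δ →
      potentialMass p A ^ β + potentialMass p B ^ β ≤ 2 * potentialMass p C ^ β := by
  have hd : (0 : ℝ) < Module.finrank ℝ E := Nat.cast_pos.2 Module.finrank_pos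
  set d := (Module.finrank ℝ E : ℝ)
  set α := concavityExponent d p
  obtain ⟨η, hη, hη_lt⟩ := exists_between (lt_min (half_pos (sub_pos.2 hβ)) one_pos)
  rw [lt_min_iff] at hη_lt
  obtain ⟨δ, hδ, hpointwise⟩ := exists_localExponent_sub_mul_sq_le hd hp R hη
  refine ⟨min δ η, lt_min hδ hη, fun A B C hA hB hC hAR hBR hstar hmid hA_pos hB_pos ha => ?_⟩
  set k := log (potentialMass p A)
  set l := log (potentialMass p B)
  set q := (l - k) ^ 2 / 8 with hq
  have hq_nonneg : 0 ≤ q := by positivity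
  have hqη : q ≤ η := by
    rw [hq, ← sq_abs]
    nlinarith [abs_nonneg (l - k), ha.trans (min_le_right δ η)]
  have hV := continuous_powPotential_norm (E := E) (p := p) (by linarith)
  have hG := continuous_localExponent_norm (E := E) hd hp
  have hbbl : exp ((k + l) / 2) ≤
      ∫ x in C, exp (-(powPotential p ‖x‖ + (localExponent d p ‖x‖ - η) * q)) := by
    refine exp_half_log_add_log_le_setIntegral hp hA hB hC hA_pos hB_pos (by fun_prop) hmid
      fun x hx y hy => ?_
    have := hpointwise (l - k) (ha.trans (min_le_left δ η)) ‖x‖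
      ⟨norm_nonneg x, mem_closedBall_zero_iff.1 (hAR hx)⟩ ‖y‖
      ⟨norm_nonneg y, mem_closedBall_zero_iff.1 (hBR hy)⟩ _ (norm_nonneg _)
      (norm_half_smul_add_half_smul_le x y)
    rw [mul_div_assoc, sub_add_eq_add_sub, le_sub_iff_add_le'] at this
    exact this
  simp only [neg_add, exp_add] at hbbl
  have hupper := hbbl.trans (setIntegral_exp_neg_mul_le hC hstar hp hη.le hη_lt.2.le hq_nonneg hqη)
  rw [exp_neg, ← div_eq_mul_inv, le_div_iff₀ (exp_pos _), ← exp_add] at hupper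
  refine rpow_add_rpow_le_two_mul_rpow hA_pos hB_pos hβ0 ((exp_le_exp.2 ?_).trans hupper)
  rw [mul_div_assoc]
  gcongr
  linarith

end midpoint

/-! ### Concavity from a local midpoint condition -/

section concavity

open Filter Topology

theorem nonneg_of_eventually_midpoint {G : ℝ → ℝ} {u v : ℝ}
    (hG : LowerSemicontinuousOn G (Icc u v)) (hu : 0 ≤ G u) (hv : 0 ≤ G v)
    (hmid : ∀ t ∈ Ioo u v, ∀ᶠ δ in 𝓝[>] 0, G (t - δ) + G (t + δ) ≤ 2 * G t) {t : ℝ}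
    (ht : t ∈ Icc u v) : 0 ≤ G t := by
  obtain ⟨t₁, ht₁, hmin⟩ := hG.exists_isMinOn ⟨t, ht⟩ isCompact_Icc
  obtain ⟨t₀, ⟨ht₀, ht₀_le⟩, hleast⟩ :=
    (hG.isCompact_inter_preimage_Iic isCompact_Icc (G t₁)).exists_isLeast ⟨t₁, ht₁, le_refl (G t₁)⟩
  refine le_trans (not_lt.1 fun hneg => ?_) (hmin ht)
  have ht₀_neg : G t₀ < 0 := lt_of_le_of_lt ht₀_le hneg
  have ht₀_mem : t₀ ∈ Ioo u v :=
    ⟨ht₀.1.lt_of_ne (by rintro rfl; exact ht₀_neg.not_ge hu),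
      ht₀.2.lt_of_ne (by rintro rfl; exact ht₀_neg.not_ge hv)⟩
  obtain ⟨δ, hδ_mid, hδ_pos, hδ_lt⟩ := ((hmid t₀ ht₀_mem).and (Ioo_mem_nhdsGT
    (lt_min (sub_pos.2 ht₀_mem.1) (sub_pos.2 ht₀_mem.2)))).exists
  obtain ⟨hδ_left, hδ_right⟩ := lt_min_iff.1 hδ_lt
  have hleft : G t₁ < G (t₀ - δ) := lt_of_not_ge fun h =>
    (sub_lt_self t₀ hδ_pos).not_ge (hleast ⟨⟨by linarith, by linarith [ht₀.2]⟩, h⟩)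
  have hright : G t₁ ≤ G (t₀ + δ) := hmin ⟨by linarith [ht₀.1], by linarith⟩
  linarith [mem_Iic.1 (mem_preimage.1 ht₀_le)]

theorem concaveOn_of_eventually_midpoint {s : Set ℝ} (hs : Convex ℝ s) {F : ℝ → ℝ}
    (hF : LowerSemicontinuousOn F s)
    (hmid : ∀ t ∈ interior s, ∀ᶠ δ in 𝓝[>] 0, F (t - δ) + F (t + δ) ≤ 2 * F t) :
    ConcaveOn ℝ s F := by
  refine LinearOrder.concaveOn_of_lt hs fun x hx y hy hxy a b ha hb hab => ?_
  have hIcc : Icc x y ⊆ s := hs.ordConnected.out hx hy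
  have hyx : y - x ≠ 0 := (sub_pos.2 hxy).ne'
  set chord : ℝ → ℝ := fun t => F x + (t - x) / (y - x) * (F y - F x) with hchord
  have hchord_cont : Continuous chord := by fun_prop
  have hchord_y : chord y = F y := by simp only [hchord, div_self hyx]; ring
  have hnonneg : 0 ≤ F (a • x + b • y) + -chord (a • x + b • y) := by
    refine nonneg_of_eventually_midpoint (G := fun t => F t + -chord t) (u := x) (v := y)
      ((hF.mono hIcc).add
        (hchord_cont.neg.lowerSemicontinuous.lowerSemicontinuousOn _))
      (by simp [hchord]) (by simp [hchord_y]) (fun t ht => ?_)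
      (convex_Icc x y ⟨le_rfl, hxy.le⟩ ⟨hxy.le, le_rfl⟩ ha.le hb.le hab)
    filter_upwards [hmid t (interior_maximal (Ioo_subset_Icc_self.trans hIcc) isOpen_Ioo ht)]
      with δ hδ
    simp only [hchord]
    linear_combination hδ
  have hcomb : chord (a • x + b • y) = a • F x + b • F y := by
    obtain rfl : a = 1 - b := eq_sub_of_add_eq hab
    simp only [hchord, smul_eq_mul]
    field_simp
    ring
  linarith

end concavity

/-! ### Segments of convex sets -/

/-- The segment of sets `t K + (1 - t) L`, joining `L` at `t = 0` to `K` at `t = 1`. -/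
def minkowskiSegment {E : Type*} [AddCommGroup E] [Module ℝ E] (K L : Set E) (t : ℝ) : Set E :=
  t • K + (1 - t) • L

theorem smul_subset_smul_of_le {E : Type*} [AddCommGroup E] [Module ℝ E] {K : Set E}
    (hK : Convex ℝ K) (hK0 : 0 ∈ K) {a b : ℝ} (ha : 0 ≤ a) (hab : a ≤ b) : a • K ⊆ b • K := by
  rw [← add_sub_cancel a b, hK.add_smul ha (sub_nonneg.2 hab)]
  exact subset_add_left _ ⟨0, hK0, smul_zero _⟩

namespace minkowskiSegment

section module

variable {E : Type*} [AddCommGroup E] [Module ℝ E] {K L : Set E}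

theorem zero (hK0 : (0 : E) ∈ K) : minkowskiSegment K L 0 = L := by
  rw [minkowskiSegment, sub_zero, one_smul, zero_smul_set ⟨0, hK0⟩, zero_add]

theorem one (hL0 : (0 : E) ∈ L) : minkowskiSegment K L 1 = K := by
  rw [minkowskiSegment, sub_self, one_smul, zero_smul_set ⟨0, hL0⟩, add_zero]

theorem subset {S : Set E} (hS : Convex ℝ S) (hKS : K ⊆ S) (hLS : L ⊆ S) {t : ℝ}
    (ht : t ∈ Icc (0 : ℝ) 1) : minkowskiSegment K L t ⊆ S :=
  (add_subset_add (smul_set_mono hKS) (smul_set_mono hLS)).trans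
    (hS.set_combo_subset ht.1 (sub_nonneg.2 ht.2) (add_sub_cancel t 1))

theorem starConvex (hK : StarConvex ℝ 0 K) (hL : StarConvex ℝ 0 L) (t : ℝ) :
    StarConvex ℝ 0 (minkowskiSegment K L t) := by
  simpa only [minkowskiSegment, smul_zero, add_zero] using (hK.smul t).add (hL.smul (1 - t))

theorem half_smul_add_half_smul (hK : Convex ℝ K) (hL : Convex ℝ L) {s t : ℝ}
    (hs : s ∈ Icc (0 : ℝ) 1) (ht : t ∈ Icc (0 : ℝ) 1) :
    (1 / 2 : ℝ) • minkowskiSegment K L s + (1 / 2 : ℝ) • minkowskiSegment K L t =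
      minkowskiSegment K L ((s + t) / 2) := by
  have hs' := sub_nonneg.2 hs.2
  have ht' := sub_nonneg.2 ht.2
  simp only [minkowskiSegment, smul_add, smul_smul]
  rw [add_add_add_comm, ← hK.add_smul (by linarith [hs.1]) (by linarith [ht.1]),
    ← hL.add_smul (by linarith) (by linarith)]
  congr 2 <;> ring

theorem smul_subset (hK : Convex ℝ K) (hL : Convex ℝ L) (hK0 : 0 ∈ K) (hL0 : 0 ∈ L) {c s t : ℝ}
    (hs : s ∈ Icc (0 : ℝ) 1) (hc : 0 ≤ c) (hcs : c * s ≤ t) (hcs' : c * (1 - s) ≤ 1 - t) :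
    c • minkowskiSegment K L s ⊆ minkowskiSegment K L t := by
  simp only [minkowskiSegment, smul_add, smul_smul]
  exact add_subset_add (smul_subset_smul_of_le hK hK0 (mul_nonneg hc hs.1) hcs)
    (smul_subset_smul_of_le hL hL0 (mul_nonneg hc (sub_nonneg.2 hs.2)) hcs')

end module

theorem isCompact {E : Type*} [NormedAddCommGroup E] [NormedSpace ℝ E] {K L : Set E}
    (hK : IsCompact K) (hL : IsCompact L) (t : ℝ) : IsCompact (minkowskiSegment K L t) :=
  (hK.smul t).add (hL.smul (1 - t))

end minkowskiSegment

section potentialMass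

open Filter Topology

section basic

variable {E : Type*} [NormedAddCommGroup E] [MeasureSpace E] {p : ℝ} {S T : Set E}

theorem potentialMass_nonneg : 0 ≤ potentialMass p S :=
  integral_nonneg fun _ => (exp_pos _).le

variable [OpensMeasurableSpace E] [IsFiniteMeasureOnCompacts (volume : Measure E)]

theorem integrableOn_exp_neg_powPotential (hp : 0 ≤ p) (hS : IsCompact S) :
    IntegrableOn (fun x => exp (-powPotential p ‖x‖)) S :=
  (continuous_powPotential_norm hp).neg.rexp.continuousOn.integrableOn_compact hS

theorem potentialMass_mono (hp : 0 ≤ p) (hT : IsCompact T) (hST : S ⊆ T) :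
    potentialMass p S ≤ potentialMass p T :=
  setIntegral_mono_set (integrableOn_exp_neg_powPotential hp hT)
    (Eventually.of_forall fun _ => (exp_pos _).le) hST.eventuallyLE

theorem toReal_withDensity_eq_mul_potentialMass {μ : Measure E} {c : ℝ} (hc : 0 ≤ c) (hp : 0 ≤ p)
    (hμ : μ = volume.withDensity fun x => ENNReal.ofReal (c * exp (-‖x‖ ^ p / p)))
    (hS : IsCompact S) : (μ S).toReal = c * potentialMass p S := by
  simp only [neg_div, ← powPotential.eq_1] at hμ
  rw [hμ, withDensity_apply _ hS.measurableSet, ← ofReal_integral_eq_lintegral_ofReal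
    ((integrableOn_exp_neg_powPotential hp hS).integrable.const_mul c)
    (Eventually.of_forall fun _ => by positivity), integral_const_mul]
  exact ENNReal.toReal_ofReal (mul_nonneg hc potentialMass_nonneg)

end basic

theorem pow_finrank_mul_potentialMass_le {E : Type*} [NormedAddCommGroup E] [NormedSpace ℝ E]
    [FiniteDimensional ℝ E] [MeasureSpace E] [BorelSpace E]
    [(volume : Measure E).IsAddHaarMeasure] {p : ℝ} (hp : 0 ≤ p) {S : Set E} (hS : IsCompact S)
    {c : ℝ} (hc : 0 < c) (hc1 : c ≤ 1) :
    c ^ Module.finrank ℝ E * potentialMass p S ≤ potentialMass p (c • S) := by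
  have hscale := Measure.setIntegral_comp_smul_of_pos volume
    (fun x : E => exp (-powPotential p ‖x‖)) S hc
  rw [smul_eq_mul, eq_inv_mul_iff_mul_eq₀ (pow_pos hc _).ne'] at hscale
  rw [potentialMass, potentialMass, ← hscale]
  gcongr c ^ _ * ?_
  refine integral_mono_of_nonneg (Eventually.of_forall fun _ => (exp_pos _).le)
    (((continuous_powPotential_norm hp).comp (continuous_const_smul c)).neg.rexp.continuousOn
      |>.integrableOn_compact hS) (Eventually.of_forall fun x => ?_)
  have hnorm : ‖c • x‖ ≤ ‖x‖ := by
    rw [norm_smul, norm_of_nonneg hc.le]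
    exact mul_le_of_le_one_left (norm_nonneg x) hc1
  exact exp_le_exp.2 (neg_le_neg (powPotential_le_powPotential hp (norm_nonneg _) hnorm))

theorem exists_lt_pow_mul {a b : ℝ} (d : ℕ) (hab : a < b) :
    ∃ c ∈ Ioo (0 : ℝ) 1, a < c ^ d * b := by
  have hlim : Tendsto (fun c : ℝ => c ^ d * b) (𝓝[<] 1) (𝓝 b) := by
    have : Continuous fun c : ℝ => c ^ d * b := by fun_prop
    simpa using (this.tendsto 1).mono_left nhdsWithin_le_nhds
  obtain ⟨c, hac, hc⟩ := ((hlim.eventually_const_lt hab).and (Ioo_mem_nhdsLT one_pos)).exists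
  exact ⟨c, hc, hac⟩

section segment

variable {E : Type*} [NormedAddCommGroup E] [NormedSpace ℝ E] [FiniteDimensional ℝ E]
  [MeasureSpace E] [BorelSpace E] [(volume : Measure E).IsAddHaarMeasure] {p : ℝ} {K L : Set E}

theorem pow_mul_potentialMass_minkowskiSegment_le (hp : 0 ≤ p) (hKc : IsCompact K)
    (hLc : IsCompact L) (hK : Convex ℝ K) (hL : Convex ℝ L) (hK0 : 0 ∈ K) (hL0 : 0 ∈ L)
    {c s t : ℝ} (hs : s ∈ Icc (0 : ℝ) 1) (hc : 0 < c) (hcs : c * s ≤ t)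
    (hcs' : c * (1 - s) ≤ 1 - t) :
    c ^ Module.finrank ℝ E * potentialMass p (minkowskiSegment K L s) ≤
      potentialMass p (minkowskiSegment K L t) :=
  (pow_finrank_mul_potentialMass_le hp (minkowskiSegment.isCompact hKc hLc s) hc
    (by linarith)).trans (potentialMass_mono hp (minkowskiSegment.isCompact hKc hLc t)
      (minkowskiSegment.smul_subset hK hL hK0 hL0 hs hc.le hcs hcs'))

theorem lowerSemicontinuousOn_potentialMass_minkowskiSegment (hp : 0 ≤ p) (hKc : IsCompact K)
    (hLc : IsCompact L) (hK : Convex ℝ K) (hL : Convex ℝ L) (hK0 : 0 ∈ K) (hL0 : 0 ∈ L) :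
    LowerSemicontinuousOn (fun t => potentialMass p (minkowskiSegment K L t)) (Icc 0 1) := by
  intro s hs y hy
  obtain ⟨c, ⟨hc0, hc1⟩, hyc⟩ := exists_lt_pow_mul (Module.finrank ℝ E) hy
  have hcs : ∀ᶠ t in 𝓝[Icc 0 1] s, c * s ≤ t := by
    rcases hs.1.eq_or_lt with rfl | hs0
    · filter_upwards [self_mem_nhdsWithin] with t ht using by simpa using ht.1
    · exact nhdsWithin_le_nhds (Ici_mem_nhds (mul_lt_of_lt_one_left hs0 hc1))
  have hcs' : ∀ᶠ t in 𝓝[Icc 0 1] s, t ≤ 1 - c * (1 - s) := by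
    rcases hs.2.eq_or_lt with rfl | hs1
    · filter_upwards [self_mem_nhdsWithin] with t ht using by simpa using ht.2
    · exact nhdsWithin_le_nhds (Iic_mem_nhds
        (by linarith [mul_lt_of_lt_one_left (sub_pos.2 hs1) hc1]))
  filter_upwards [hcs, hcs'] with t ht ht'
  exact hyc.trans_le (pow_mul_potentialMass_minkowskiSegment_le hp hKc hLc hK hL hK0 hL0 hs hc0 ht
    (by linarith))

theorem continuousAt_potentialMass_minkowskiSegment (hp : 0 ≤ p) (hKc : IsCompact K)
    (hLc : IsCompact L) (hK : Convex ℝ K) (hL : Convex ℝ L) (hK0 : 0 ∈ K) (hL0 : 0 ∈ L) {s : ℝ}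
    (hs : s ∈ Ioo (0 : ℝ) 1) :
    ContinuousAt (fun t => potentialMass p (minkowskiSegment K L t)) s := by
  refine continuousAt_iff_lower_upperSemicontinuousAt.2 ⟨fun y hy => ?_, fun y hy => ?_⟩
  · rw [← nhdsWithin_eq_nhds.2 (Icc_mem_nhds hs.1 hs.2)]
    exact lowerSemicontinuousOn_potentialMass_minkowskiSegment hp hKc hLc hK hL hK0 hL0 s
      (Ioo_subset_Icc_self hs) y hy
  obtain ⟨c, ⟨hc0, hc1⟩, hyc⟩ := exists_lt_pow_mul (Module.finrank ℝ E) hy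
  have hlim : Tendsto (fun t => c * t) (𝓝 s) (𝓝 (c * s)) := tendsto_id.const_mul c
  filter_upwards [hlim.eventually_lt_const (mul_lt_of_lt_one_left hs.1 hc1),
    hlim.eventually_const_lt (u := c - 1 + s)
      (by linarith [mul_lt_of_lt_one_left (sub_pos.2 hs.2) hc1]),
    Icc_mem_nhds hs.1 hs.2] with t ht ht' ht_mem
  have hle := pow_mul_potentialMass_minkowskiSegment_le hp hKc hLc hK hL hK0 hL0 ht_mem hc0 ht.le
    (by linarith)
  exact lt_of_mul_lt_mul_left (hle.trans_lt hyc) (pow_nonneg hc0.le _)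

theorem potentialMass_minkowskiSegment_pos (hp : 0 ≤ p) (hKc : IsCompact K)
    (hLc : IsCompact L) (hK : Convex ℝ K) (hL : Convex ℝ L) (hK0 : 0 ∈ K) (hL0 : 0 ∈ L)
    (hpos : 0 < potentialMass p K ∨ 0 < potentialMass p L) {t : ℝ} (ht : t ∈ Ioo (0 : ℝ) 1) :
    0 < potentialMass p (minkowskiSegment K L t) := by
  obtain ⟨ht0, ht1⟩ := ht
  rcases hpos with hpos | hpos
  · rw [← minkowskiSegment.one (K := K) hL0] at hpos
    exact (mul_pos (pow_pos ht0 _) hpos).trans_le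
      (pow_mul_potentialMass_minkowskiSegment_le hp hKc hLc hK hL hK0 hL0 ⟨zero_le_one, le_rfl⟩ ht0
        (by simp) (by simpa using ht1.le))
  · rw [← minkowskiSegment.zero (L := L) hK0] at hpos
    exact (mul_pos (pow_pos (sub_pos.2 ht1) _) hpos).trans_le
      (pow_mul_potentialMass_minkowskiSegment_le hp hKc hLc hK hL hK0 hL0 ⟨le_rfl, zero_le_one⟩
        (sub_pos.2 ht1) (by simpa using ht0.le) (by simp))

end segment

end potentialMass

/-! ### The Brunn–Minkowski inequality for `μ_p` -/

section brunnMinkowski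

open Filter Topology

theorem continuous_max_rpow {β : ℝ} (hβ : 0 ≤ β) : Continuous fun x : ℝ => max x 0 ^ β :=
  (continuous_id.max continuous_const).rpow_const fun _ => Or.inr hβ

variable {E : Type*} [NormedAddCommGroup E] [InnerProductSpace ℝ E] [FiniteDimensional ℝ E]
  [Nontrivial E] [MeasurableSpace E] [BorelSpace E] {p : ℝ} {K L : Set E}

theorem eventually_rpow_potentialMass_minkowskiSegment_midpoint (hp : 1 < p) (hKc : IsCompact K)
    (hLc : IsCompact L) (hK : Convex ℝ K) (hL : Convex ℝ L) (hK0 : 0 ∈ K) (hL0 : 0 ∈ L)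
    (hpos : 0 < potentialMass p K ∨ 0 < potentialMass p L) {β : ℝ} (hβ0 : 0 ≤ β)
    (hβ : β < concavityExponent (Module.finrank ℝ E) p) {t : ℝ} (ht : t ∈ Ioo (0 : ℝ) 1) :
    ∀ᶠ δ in 𝓝[>] 0, potentialMass p (minkowskiSegment K L (t - δ)) ^ β +
      potentialMass p (minkowskiSegment K L (t + δ)) ^ β ≤
        2 * potentialMass p (minkowskiSegment K L t) ^ β := by
  have hp0 : 0 ≤ p := by linarith
  have hmass_pos : ∀ {s}, s ∈ Ioo (0 : ℝ) 1 → 0 < potentialMass p (minkowskiSegment K L s) :=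
    potentialMass_minkowskiSegment_pos hp0 hKc hLc hK hL hK0 hL0 hpos
  obtain ⟨R, hR⟩ := (hKc.union hLc).isBounded.subset_closedBall 0
  obtain ⟨hKR, hLR⟩ := union_subset_iff.1 hR
  obtain ⟨ε, hε, hmid⟩ := exists_rpow_potentialMass_midpoint (E := E) hp R hβ0 hβ
  have hlog : ContinuousAt (fun s => log (potentialMass p (minkowskiSegment K L s))) t :=
    (continuousAt_potentialMass_minkowskiSegment hp0 hKc hLc hK hL hK0 hL0 ht).log
      (hmass_pos ht).ne'
  have hsub : Tendsto (fun δ => t - δ) (𝓝 0) (𝓝 t) := by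
    simpa using (tendsto_id (x := 𝓝 (0 : ℝ))).const_sub t
  have hadd : Tendsto (fun δ => t + δ) (𝓝 0) (𝓝 t) := by
    simpa using (tendsto_id (x := 𝓝 (0 : ℝ))).const_add t
  have hosc := ((hlog.tendsto.comp hadd).sub (hlog.tendsto.comp hsub)).abs
  rw [sub_self, abs_zero] at hosc
  filter_upwards [nhdsWithin_le_nhds (hosc.eventually_lt_const hε),
    nhdsWithin_le_nhds (hsub (Ioo_mem_nhds ht.1 ht.2)),
    nhdsWithin_le_nhds (hadd (Ioo_mem_nhds ht.1 ht.2))] with δ hδ hδ_sub hδ_add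
  have hcombo := minkowskiSegment.half_smul_add_half_smul hK hL (Ioo_subset_Icc_self hδ_sub)
    (Ioo_subset_Icc_self hδ_add)
  rw [sub_add_add_cancel, add_self_div_two] at hcombo
  have hsubset {s} (hs : s ∈ Ioo (0 : ℝ) 1) : minkowskiSegment K L s ⊆ Metric.closedBall 0 R :=
    minkowskiSegment.subset (convex_closedBall 0 R) hKR hLR (Ioo_subset_Icc_self hs)
  have hcompact := minkowskiSegment.isCompact hKc hLc
  exact hmid _ _ _ (hcompact _) (hcompact _) (hcompact _) (hsubset hδ_sub) (hsubset hδ_add)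
    (minkowskiSegment.starConvex (hK.starConvex hK0) (hL.starConvex hL0) t)
    (fun x hx y hy => hcombo ▸ add_mem_add (smul_mem_smul_set hx) (smul_mem_smul_set hy))
    (hmass_pos hδ_sub) (hmass_pos hδ_add) hδ.le

theorem concaveOn_rpow_potentialMass_minkowskiSegment (hp : 1 < p) (hKc : IsCompact K)
    (hLc : IsCompact L) (hK : Convex ℝ K) (hL : Convex ℝ L) (hK0 : 0 ∈ K) (hL0 : 0 ∈ L)
    (hpos : 0 < potentialMass p K ∨ 0 < potentialMass p L) {β : ℝ} (hβ0 : 0 ≤ β)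
    (hβ : β < concavityExponent (Module.finrank ℝ E) p) :
    ConcaveOn ℝ (Icc 0 1) fun t => potentialMass p (minkowskiSegment K L t) ^ β := by
  refine concaveOn_of_eventually_midpoint (convex_Icc 0 1) ?_ fun t ht => ?_
  · have hlsc := (continuous_max_rpow hβ0).comp_lowerSemicontinuousOn
      (lowerSemicontinuousOn_potentialMass_minkowskiSegment (p := p) (by linarith) hKc hLc hK hL hK0
        hL0) fun x y hxy =>
          rpow_le_rpow (le_max_right x 0) (max_le_max_right 0 hxy) hβ0
    simpa only [Function.comp_def, max_eq_left potentialMass_nonneg] using hlsc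
  · rw [interior_Icc] at ht
    exact eventually_rpow_potentialMass_minkowskiSegment_midpoint hp hKc hLc hK hL hK0 hL0 hpos hβ0
      hβ ht

theorem rpow_potentialMass_add_le_of_lt_concavityExponent (hp : 1 < p) (hKc : IsCompact K)
    (hLc : IsCompact L) (hK : Convex ℝ K) (hL : Convex ℝ L) (hK0 : 0 ∈ K) (hL0 : 0 ∈ L) {β : ℝ}
    (hβ0 : 0 < β) (hβ : β < concavityExponent (Module.finrank ℝ E) p) {t : ℝ}
    (ht : t ∈ Icc (0 : ℝ) 1) :
    t * potentialMass p K ^ β + (1 - t) * potentialMass p L ^ β ≤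
      potentialMass p (t • K + (1 - t) • L) ^ β := by
  by_cases hpos : 0 < potentialMass p K ∨ 0 < potentialMass p L
  · have hconc := (concaveOn_rpow_potentialMass_minkowskiSegment hp hKc hLc hK hL hK0 hL0 hpos
      hβ0.le hβ).2 (right_mem_Icc.2 zero_le_one) (left_mem_Icc.2 zero_le_one) ht.1
      (sub_nonneg.2 ht.2) (add_sub_cancel t 1)
    simpa [minkowskiSegment.one hL0, minkowskiSegment.zero hK0,
      ← minkowskiSegment.eq_1 K L t] using hconc
  · obtain ⟨hK_le, hL_le⟩ := not_or.1 hpos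
    rw [le_antisymm (not_lt.1 hK_le) potentialMass_nonneg,
      le_antisymm (not_lt.1 hL_le) potentialMass_nonneg, zero_rpow hβ0.ne', mul_zero, mul_zero,
      add_zero]
    exact rpow_nonneg potentialMass_nonneg β

theorem rpow_potentialMass_add_le (hp : 1 < p) (hKc : IsCompact K)
    (hLc : IsCompact L) (hK : Convex ℝ K) (hL : Convex ℝ L) (hK0 : 0 ∈ K) (hL0 : 0 ∈ L) {t : ℝ}
    (ht : t ∈ Icc (0 : ℝ) 1) :
    t * potentialMass p K ^ concavityExponent (Module.finrank ℝ E) p +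
        (1 - t) * potentialMass p L ^ concavityExponent (Module.finrank ℝ E) p ≤
      potentialMass p (t • K + (1 - t) • L) ^ concavityExponent (Module.finrank ℝ E) p := by
  rcases (concavityExponent_nonneg (Module.finrank ℝ E).cast_nonneg hp.le).eq_or_lt with hα | hα
  · simp [← hα]
  have hlim (x : ℝ) : Tendsto (fun β => x ^ β) (𝓝[<] concavityExponent (Module.finrank ℝ E) p)
      (𝓝 (x ^ concavityExponent (Module.finrank ℝ E) p)) :=
    (continuousAt_const_rpow' hα.ne').tendsto.mono_left nhdsWithin_le_nhds
  refine le_of_tendsto_of_tendsto (((hlim _).const_mul t).add ((hlim _).const_mul (1 - t)))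
    (hlim _) ?_
  filter_upwards [Ioo_mem_nhdsLT hα] with β hβ
  exact rpow_potentialMass_add_le_of_lt_concavityExponent hp hKc hLc hK hL hK0 hL0 hβ.1 hβ.2 ht

end brunnMinkowski

theorem stmt_0_general {E : Type*} [NormedAddCommGroup E] [InnerProductSpace ℝ E]
    [FiniteDimensional ℝ E] [Nontrivial E] [MeasurableSpace E] [BorelSpace E] {p : ℝ} (hp : 1 < p)
    {c : ℝ} (hc : 0 ≤ c) {μ : Measure E}
    (hμ : μ = volume.withDensity fun x => ENNReal.ofReal (c * exp (-‖x‖ ^ p / p)))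
    {K L : Set E} (hKc : IsCompact K) (hK : Convex ℝ K) (hK0 : 0 ∈ K) (hLc : IsCompact L)
    (hL : Convex ℝ L) (hL0 : 0 ∈ L) {t : ℝ} (ht : t ∈ Icc (0 : ℝ) 1) :
    t * (μ K).toReal ^ concavityExponent (Module.finrank ℝ E) p +
        (1 - t) * (μ L).toReal ^ concavityExponent (Module.finrank ℝ E) p ≤
      (μ (t • K + (1 - t) • L)).toReal ^ concavityExponent (Module.finrank ℝ E) p := by
  have hmass {S : Set E} (hS : IsCompact S) :
      (μ S).toReal ^ concavityExponent (Module.finrank ℝ E) p =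
        c ^ concavityExponent (Module.finrank ℝ E) p *
          potentialMass p S ^ concavityExponent (Module.finrank ℝ E) p := by
    rw [toReal_withDensity_eq_mul_potentialMass hc (by linarith) hμ hS,
      mul_rpow hc potentialMass_nonneg]
  rw [hmass hKc, hmass hLc, hmass ((hKc.smul t).add (hLc.smul (1 - t))), mul_left_comm t,
    mul_left_comm (1 - t), ← mul_add]
  gcongr
  exact rpow_potentialMass_add_le hp hKc hLc hK hL hK0 hL0 ht

theorem stmt_0 (n : ℕ) (hn : 2 ≤ n) (p : ℝ) (hp : 1 < p)
    (μ : Measure (EuclideanSpace ℝ (Fin n)))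
    (hμ : μ = volume.withDensity (fun x => ENNReal.ofReal
      (Real.Gamma ((n : ℝ) / 2) / (2 * Real.pi ^ ((n : ℝ) / 2) * p ^ ((n : ℝ) / p - 1) *
        Real.Gamma ((n : ℝ) / p)) * Real.exp (-‖x‖ ^ p / p))))
    (α : ℝ)
    (hα : α = (1 / (n : ℝ)) * Real.exp ((p - 1) * n / p) * ((p - 1) * n / p) ^ ((n : ℝ) / p) *
      uiGamma (1 - (n : ℝ) / p) ((p - 1) * n / p))
    (K L : Set (EuclideanSpace ℝ (Fin n)))
    (hKc : IsCompact K) (hKv : Convex ℝ K) (hKi : (interior K).Nonempty) (hK0 : 0 ∈ K)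
    (hLc : IsCompact L) (hLv : Convex ℝ L) (hLi : (interior L).Nonempty) (hL0 : 0 ∈ L)
    (lam : ℝ) (hlam : lam ∈ Set.Icc (0 : ℝ) 1) :
    lam * (μ K).toReal ^ α + (1 - lam) * (μ L).toReal ^ α ≤
      (μ (lam • K + (1 - lam) • L)).toReal ^ α := by
  have : Nonempty (Fin n) := ⟨⟨0, by linarith⟩⟩
  have hα' : α = concavityExponent (Module.finrank ℝ (EuclideanSpace ℝ (Fin n))) p := by
    rw [hα, finrank_euclideanSpace_fin, concavityExponent]
  rw [hα']
  exact stmt_0_general hp (by positivity) hμ hKc hKv hK0 hLc hLv hL0 hlam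
end

section
/- Let n ≥ 2, p ≥ 1, and let q > 0 satisfy q > 1 - (p/(n-1)) · Γ((n+p-2)/p) · Γ(n/p) / Γ((n-1)/p)². Then there exist convex bodies K, L in ℝⁿ containing the origin and λ ∈ (0,1) such that μ_p(λK + (1-λ)L)^q < λ·μ_p(K)^q + (1-λ)·μ_p(L)^q. -/
open MeasureTheory Real Set Pointwise

/-!
The counterexamples are thin cones along a fixed axis, cut off far away, with apex at distance `t`
behind the origin. As the opening `ε` tends to `0`, their mass divided by a power of `ε` tends to
`G t = ∫ s in (-t, ∞), (s + t) ^ (n - 1) * φ |s|`, where `φ` is the radial part of the density. The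
function `G` is `C²`, and `(G ^ q)'' 0` has the sign of `G 0 * G'' 0 + (q - 1) * G' 0 ^ 2`; the
derivatives of `G` at `0` are moments of `φ`, hence Gamma values, and this quantity is positive
exactly when `q` exceeds the stated threshold. Then `G ^ q` is strictly convex near `0`. Since the
cone with apex parameter `lam * t₁ + (1 - lam) * t₂` contains the Minkowski combination of those
with parameters `t₁` and `t₂`, the strict convexity passes to the masses of thin enough cones.
-/

open Filter Topology

section PowerConvexity

variable {G G' G'' : ℝ → ℝ} {a q : ℝ}

lemma hasDerivAt_deriv_rpow_const (hG : ∀ t, HasDerivAt G (G' t) t)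
    (hG' : HasDerivAt G' (G'' a) a) (ha : 0 < G a) :
    HasDerivAt (deriv fun t => G t ^ q)
      (q * G a ^ (q - 2) * (G a * G'' a + (q - 1) * G' a ^ 2)) a := by
  have hpos : ∀ᶠ t in 𝓝 a, 0 < G t := (hG a).continuousAt.eventually (lt_mem_nhds ha)
  have hderiv : (deriv fun t => G t ^ q) =ᶠ[𝓝 a] fun t => G' t * q * G t ^ (q - 1) := by
    filter_upwards [hpos] with t ht
    exact ((hG t).rpow_const (Or.inl ht.ne')).deriv
  have hsplit : G a ^ (q - 1) = G a ^ (q - 2) * G a := by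
    rw [← rpow_add_one ha.ne']
    ring_nf
  refine HasDerivAt.congr_of_eventuallyEq ?_ hderiv
  refine ((hG'.mul_const q).mul
    ((hG a).rpow_const (p := q - 1) (Or.inl ha.ne'))).congr_deriv ?_
  rw [hsplit, show q - 1 - 1 = q - 2 by ring]
  ring

lemma exists_strictConvexOn_ball_rpow (hG : ∀ t, HasDerivAt G (G' t) t)
    (hG' : ∀ t, HasDerivAt G' (G'' t) t) (hG'' : ContinuousAt G'' a) (ha : 0 < G a) (hq : 0 < q)
    (hpos : 0 < G a * G'' a + (q - 1) * G' a ^ 2) :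
    ∃ δ > 0, StrictConvexOn ℝ (Metric.ball a δ) fun t => G t ^ q := by
  have hGa : ContinuousAt G a := (hG a).continuousAt
  have hG'a : ContinuousAt G' a := (hG' a).continuousAt
  have hnear : ∀ᶠ t in 𝓝 a, 0 < G t ∧ 0 < G t * G'' t + (q - 1) * G' t ^ 2 :=
    (hGa.eventually (lt_mem_nhds ha)).and <|
      ((hGa.mul hG'').add (continuousAt_const.mul (hG'a.pow 2))).eventually (lt_mem_nhds hpos)
  obtain ⟨δ, hδ, hball⟩ := Metric.eventually_nhds_iff_ball.1 hnear
  refine ⟨δ, hδ, strictConvexOn_of_deriv2_pos' (convex_ball a δ) (fun t ht => ?_) fun t ht => ?_⟩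
  · exact ((hG t).continuousAt.rpow_const (Or.inl (hball t ht).1.ne')).continuousWithinAt
  · obtain ⟨hGt, hGt'⟩ := hball t ht
    rw [Function.iterate_succ_apply, Function.iterate_one,
      (hasDerivAt_deriv_rpow_const hG (hG' t) hGt).deriv]
    positivity

end PowerConvexity

/-- Continuous functions on `ℝ` all of whose moments over the right half-line converge. -/
structure HasRightMoments (ψ : ℝ → ℝ) : Prop where
  continuous : Continuous ψ
  integrableOn_Ioi_zero : ∀ k : ℕ, IntegrableOn (fun s => s ^ k * ψ s) (Ioi 0)

/-- The `m`-th moment of `ψ` about `-t` over the half-line to the right of `-t`. For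
`ψ s = φ |s|` it is, up to a constant, the limiting mass of thin cones with apex at distance `t`
behind the origin under the measure with density `φ ‖x‖` on `ℝ ^ (m + 1)`. -/
noncomputable def shiftedMoment (ψ : ℝ → ℝ) (m : ℕ) (t : ℝ) : ℝ :=
  ∫ s in Ioi (-t), (s + t) ^ m * ψ s

namespace HasRightMoments

variable {ψ : ℝ → ℝ}

lemma id_mul (hψ : HasRightMoments ψ) : HasRightMoments fun s => s * ψ s where
  continuous := continuous_id.mul hψ.continuous
  integrableOn_Ioi_zero k := by
    simpa only [pow_succ, mul_assoc] using hψ.integrableOn_Ioi_zero (k + 1)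

lemma integrableOn_Ioi (hψ : HasRightMoments ψ) (k : ℕ) (a : ℝ) :
    IntegrableOn (fun s => s ^ k * ψ s) (Ioi a) := by
  have hcont : Continuous fun s => s ^ k * ψ s := (continuous_pow k).mul hψ.continuous
  refine ((hcont.integrableOn_Icc (a := a) (b := 0)).union
    (hψ.integrableOn_Ioi_zero k)).mono_set fun s hs => ?_
  rcases le_or_gt s 0 with h | h
  · exact Or.inl ⟨(mem_Ioi.1 hs).le, h⟩
  · exact Or.inr h

lemma integrableOn_Ioi_add_pow_mul (hψ : HasRightMoments ψ) (m : ℕ) (a t : ℝ) :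
    IntegrableOn (fun s => (s + t) ^ m * ψ s) (Ioi a) := by
  simp only [add_pow, Finset.sum_mul]
  refine integrable_finsetSum _ fun k _ => ?_
  refine ((hψ.integrableOn_Ioi k a).const_mul (t ^ (m - k) * m.choose k)).congr (ae_of_all _ ?_)
  exact fun s => by ring

lemma shiftedMoment_succ (hψ : HasRightMoments ψ) (m : ℕ) (t : ℝ) :
    shiftedMoment ψ (m + 1) t =
      shiftedMoment (fun s => s * ψ s) m t + t * shiftedMoment ψ m t := by
  rw [shiftedMoment, shiftedMoment, shiftedMoment, ← integral_const_mul,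
    ← integral_add (hψ.id_mul.integrableOn_Ioi_add_pow_mul m _ t)
      ((hψ.integrableOn_Ioi_add_pow_mul m _ t).const_mul t)]
  exact integral_congr_ae (ae_of_all _ fun s => by ring)

lemma hasDerivAt_shiftedMoment_zero (hψ : HasRightMoments ψ) (t : ℝ) :
    HasDerivAt (shiftedMoment ψ 0) (ψ (-t)) t := by
  have hIoi (a : ℝ) : IntegrableOn ψ (Ioi a) := by
    simpa only [pow_zero, one_mul] using hψ.integrableOn_Ioi 0 a
  have hsplit : shiftedMoment ψ 0 = fun t => (∫ s in (-t)..0, ψ s) + ∫ s in Ioi 0, ψ s := by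
    funext t
    simp only [shiftedMoment, pow_zero, one_mul,
      ← intervalIntegral.integral_Ioi_sub_Ioi' (hIoi (-t)) (hIoi 0), sub_add_cancel]
  have hFTC : HasDerivAt (fun a => ∫ s in a..0, ψ s) (-ψ (-t)) (-t) :=
    intervalIntegral.integral_hasDerivAt_left (hψ.continuous.intervalIntegrable _ _)
      hψ.continuous.stronglyMeasurable.stronglyMeasurableAtFilter hψ.continuous.continuousAt
  rw [hsplit]
  simpa using (hFTC.comp t (hasDerivAt_neg t)).add_const (∫ s in Ioi 0, ψ s)

lemma hasDerivAt_shiftedMoment_succ (hψ : HasRightMoments ψ) (m : ℕ) (t : ℝ) :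
    HasDerivAt (shiftedMoment ψ (m + 1)) ((m + 1) * shiftedMoment ψ m t) t := by
  induction m generalizing ψ with
  | zero =>
    -- The boundary terms `∓ t * ψ (-t)` of the two summands cancel.
    rw [funext (hψ.shiftedMoment_succ 0)]
    refine (hψ.id_mul.hasDerivAt_shiftedMoment_zero t).add
      ((hasDerivAt_id t).mul (hψ.hasDerivAt_shiftedMoment_zero t)) |>.congr_deriv ?_
    simp
  | succ m ih =>
    rw [funext (hψ.shiftedMoment_succ (m + 1))]
    refine (ih hψ.id_mul).add ((hasDerivAt_id t).mul (ih hψ)) |>.congr_deriv ?_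
    rw [hψ.shiftedMoment_succ m t]
    push_cast [id]
    ring

lemma hasDerivAt_shiftedMoment (hψ : HasRightMoments ψ) (m : ℕ) (t : ℝ) :
    HasDerivAt (shiftedMoment ψ m) (m * shiftedMoment ψ (m - 1) t + 0 ^ m * ψ (-t)) t := by
  cases m with
  | zero => simpa using hψ.hasDerivAt_shiftedMoment_zero t
  | succ m => simpa using hψ.hasDerivAt_shiftedMoment_succ m t

lemma continuous_shiftedMoment (hψ : HasRightMoments ψ) (m : ℕ) :
    Continuous (shiftedMoment ψ m) :=
  continuous_iff_continuousAt.2 fun t => (hψ.hasDerivAt_shiftedMoment m t).continuousAt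

end HasRightMoments

lemma volume_real_pi_closedBall {ι : Type*} [Fintype ι] (a : ι → ℝ) {r : ℝ} (hr : 0 ≤ r) :
    volume.real (Metric.closedBall a r) = (2 * r) ^ Fintype.card ι := by
  rw [measureReal_def, Real.volume_pi_closedBall a hr, ENNReal.toReal_ofReal (by positivity)]

lemma integral_euclideanSpace_fin_succ {E : Type*} [NormedAddCommGroup E] [NormedSpace ℝ E]
    {m : ℕ} {f : EuclideanSpace ℝ (Fin (m + 1)) → E} (hf : Integrable f) :
    ∫ x, f x = ∫ s, ∫ y : Fin m → ℝ, f (WithLp.toLp 2 (Fin.cons s y : Fin (m + 1) → ℝ)) := by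
  let e : ℝ × (Fin m → ℝ) ≃ᵐ EuclideanSpace ℝ (Fin (m + 1)) :=
    (MeasurableEquiv.piFinSuccAbove (fun _ => ℝ) 0).symm.trans (MeasurableEquiv.toLp 2 _)
  have he : MeasurePreserving e :=
    (PiLp.volume_preserving_toLp (Fin (m + 1))).comp
      (volume_preserving_piFinSuccAbove (fun _ : Fin (m + 1) => ℝ) 0).symm
  have he_apply (z : ℝ × (Fin m → ℝ)) :
      e z = WithLp.toLp 2 (Fin.cons z.1 z.2 : Fin (m + 1) → ℝ) := by
    simp [e, MeasurableEquiv.piFinSuccAbove, Fin.consEquiv]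
  have hfe : Integrable (fun z => f (e z)) :=
    (he.integrable_comp_emb e.measurableEmbedding).2 hf
  rw [← he.integral_comp e.measurableEmbedding, Measure.volume_eq_prod, integral_prod _ hfe]
  simp only [he_apply]

/-- Compact convex sets with nonempty interior that contain the origin. -/
def IsConvexBodyWithZero {E : Type*} [AddCommGroup E] [Module ℝ E] [TopologicalSpace E]
    (K : Set E) : Prop :=
  IsCompact K ∧ Convex ℝ K ∧ (interior K).Nonempty ∧ 0 ∈ K

/-- The cone with apex `-t • e₀`, axis `e₀` and the cube `[-ε, ε] ^ m` as cross-section at unit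
distance from the apex, truncated at height `R`. -/
def truncCone (m : ℕ) (t ε R : ℝ) : Set (EuclideanSpace ℝ (Fin (m + 1))) :=
  {x | x 0 ∈ Icc (-t) R ∧ ∀ i : Fin m, |x i.succ| ≤ ε * (x 0 + t)}

section TruncCone

variable {m : ℕ} {s t ε R : ℝ}

lemma norm_le_of_mem_truncCone {x : EuclideanSpace ℝ (Fin (m + 1))} (hx : x ∈ truncCone m t ε R) :
    ‖x‖ ≤ |x 0| + m * (ε * (x 0 + t)) := by
  have hsum : ‖x‖ ≤ ∑ i, |x i| := by
    rw [EuclideanSpace.norm_eq]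
    refine (Real.sqrt_le_left (Finset.sum_nonneg fun i _ => abs_nonneg _)).2 ?_
    simp only [Real.norm_eq_abs]
    exact Finset.sum_sq_le_sq_sum_of_nonneg fun i _ => abs_nonneg _
  calc ‖x‖ ≤ |x 0| + ∑ i : Fin m, |x i.succ| := hsum.trans_eq (Fin.sum_univ_succ _)
    _ ≤ |x 0| + ∑ _i : Fin m, ε * (x 0 + t) := by gcongr with i; exact hx.2 i
    _ = |x 0| + m * (ε * (x 0 + t)) := by simp

lemma combo_mem_truncCone {x y : EuclideanSpace ℝ (Fin (m + 1))} (hx : x ∈ truncCone m s ε R)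
    (hy : y ∈ truncCone m t ε R) {a b : ℝ} (ha : 0 ≤ a) (hb : 0 ≤ b) (hab : a + b = 1) :
    a • x + b • y ∈ truncCone m (a * s + b * t) ε R := by
  have combo_le {u v u' v' : ℝ} (hu : u ≤ u') (hv : v ≤ v') : a * u + b * v ≤ a * u' + b * v' :=
    add_le_add (mul_le_mul_of_nonneg_left hu ha) (mul_le_mul_of_nonneg_left hv hb)
  simp only [truncCone, mem_ofPred_eq, PiLp.add_apply, PiLp.smul_apply, smul_eq_mul]
  refine ⟨⟨?_, ?_⟩, fun i => ?_⟩
  · linarith [combo_le hx.1.1 hy.1.1]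
  · calc a * x 0 + b * y 0 ≤ a * R + b * R := combo_le hx.1.2 hy.1.2
      _ = R := by rw [← add_mul, hab, one_mul]
  · calc |a * x i.succ + b * y i.succ| ≤ a * |x i.succ| + b * |y i.succ| := by
          simpa only [abs_mul, abs_of_nonneg ha, abs_of_nonneg hb] using
            abs_add_le (a * x i.succ) (b * y i.succ)
      _ ≤ a * (ε * (x 0 + s)) + b * (ε * (y 0 + t)) := combo_le (hx.2 i) (hy.2 i)
      _ = ε * (a * x 0 + b * y 0 + (a * s + b * t)) := by ring

lemma smul_truncCone_add_smul_truncCone_subset {a b : ℝ} (ha : 0 ≤ a) (hb : 0 ≤ b)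
    (hab : a + b = 1) :
    a • truncCone m s ε R + b • truncCone m t ε R ⊆ truncCone m (a * s + b * t) ε R := by
  rintro _ ⟨_, ⟨x, hx, rfl⟩, _, ⟨y, hy, rfl⟩, rfl⟩
  exact combo_mem_truncCone hx hy ha hb hab

lemma convex_truncCone : Convex ℝ (truncCone m t ε R) := by
  intro x hx y hy a b ha hb hab
  simpa only [← add_mul, hab, one_mul] using combo_mem_truncCone hx hy ha hb hab

lemma isClosed_truncCone : IsClosed (truncCone m t ε R) := by
  have haxis : IsClosed {x : EuclideanSpace ℝ (Fin (m + 1)) | x 0 ∈ Icc (-t) R} :=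
    isClosed_Icc.preimage (by fun_prop)
  have hcross : IsClosed
      {x : EuclideanSpace ℝ (Fin (m + 1)) | ∀ i : Fin m, |x i.succ| ≤ ε * (x 0 + t)} := by
    simp only [ofPred_forall]
    exact isClosed_iInter fun i => isClosed_le (by fun_prop) (by fun_prop)
  exact haxis.inter hcross

lemma isCompact_truncCone (hε : 0 ≤ ε) : IsCompact (truncCone m t ε R) := by
  refine Metric.isCompact_of_isClosed_isBounded isClosed_truncCone
    (isBounded_iff_forall_norm_le.2 ⟨max |-t| |R| + m * (ε * (R + t)), fun x hx => ?_⟩)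
  refine (norm_le_of_mem_truncCone hx).trans ?_
  gcongr
  · exact abs_le_max_abs_abs hx.1.1 hx.1.2
  · exact hx.1.2

lemma nonempty_interior_truncCone (ht : 0 ≤ t) (hε : 0 < ε) (hR : 0 < R) :
    (interior (truncCone m t ε R)).Nonempty := by
  let U : Set (EuclideanSpace ℝ (Fin (m + 1))) :=
    {x | x 0 ∈ Ioo (-t) R} ∩ ⋂ i : Fin m, {x | |x i.succ| < ε * (x 0 + t)}
  have hU : IsOpen U := (isOpen_Ioo.preimage (by fun_prop)).inter
    (isOpen_iInter_of_finite fun i => isOpen_lt (by fun_prop) (by fun_prop))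
  have hsub : U ⊆ truncCone m t ε R := fun x hx =>
    ⟨Ioo_subset_Icc_self hx.1, fun i => (mem_iInter.1 hx.2 i).le⟩
  refine ⟨EuclideanSpace.single 0 (R / 2), interior_maximal hsub hU ⟨?_, mem_iInter.2 fun i => ?_⟩⟩
  · simp only [mem_ofPred_eq, PiLp.single_apply, if_true, mem_Ioo]
    constructor <;> linarith
  · simpa using mul_pos hε (by positivity : 0 < R / 2 + t)

lemma zero_mem_truncCone (ht : 0 ≤ t) (hε : 0 ≤ ε) (hR : 0 ≤ R) : 0 ∈ truncCone m t ε R :=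
  ⟨by simpa using ⟨ht, hR⟩, fun i => by simpa using mul_nonneg hε ht⟩

lemma isConvexBodyWithZero_truncCone (ht : 0 ≤ t) (hε : 0 < ε) (hR : 0 < R) :
    IsConvexBodyWithZero (truncCone m t ε R) :=
  ⟨isCompact_truncCone hε.le, convex_truncCone, nonempty_interior_truncCone ht hε hR,
    zero_mem_truncCone ht hε.le hR.le⟩

lemma toLp_cons_mem_truncCone {y : Fin m → ℝ} (hs : s ∈ Icc (-t) R) (hε : 0 ≤ ε) :
    WithLp.toLp 2 (Fin.cons s y : Fin (m + 1) → ℝ) ∈ truncCone m t ε R ↔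
      y ∈ Metric.closedBall 0 (ε * (s + t)) := by
  have hr : 0 ≤ ε * (s + t) := mul_nonneg hε (by linarith [hs.1])
  simp [truncCone, hs.1, hs.2, pi_norm_le_iff_of_nonneg hr]

lemma integral_indicator_truncCone_slice (hε : 0 ≤ ε) (g : ℝ → ℝ) (s : ℝ) :
    ∫ y : Fin m → ℝ, (truncCone m t ε R).indicator (fun x => g (x 0))
        (WithLp.toLp 2 (Fin.cons s y : Fin (m + 1) → ℝ)) =
      (Icc (-t) R).indicator (fun s => (2 * ε) ^ m * ((s + t) ^ m * g s)) s := by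
  by_cases hs : s ∈ Icc (-t) R
  · have hr : 0 ≤ ε * (s + t) := mul_nonneg hε (by linarith [hs.1])
    have hslice (y : Fin m → ℝ) : (truncCone m t ε R).indicator (fun x => g (x 0))
        (WithLp.toLp 2 (Fin.cons s y : Fin (m + 1) → ℝ)) =
        (Metric.closedBall 0 (ε * (s + t))).indicator (fun _ => g s) y := by
      classical simp only [indicator_apply, toLp_cons_mem_truncCone hs hε, Fin.cons_zero]
    simp only [hslice, indicator_of_mem hs]
    rw [integral_indicator_const _ measurableSet_closedBall, volume_real_pi_closedBall _ hr,
      Fintype.card_fin, smul_eq_mul, ← mul_assoc 2, mul_pow, mul_assoc]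
  · have hempty (y : Fin m → ℝ) :
        WithLp.toLp 2 (Fin.cons s y : Fin (m + 1) → ℝ) ∉ truncCone m t ε R :=
      fun hy => hs (by simpa using hy.1)
    simp only [indicator_of_notMem (hempty _), indicator_of_notMem hs, integral_zero]

lemma setIntegral_truncCone (hε : 0 ≤ ε) {g : ℝ → ℝ} (hg : Continuous g) :
    ∫ x in truncCone m t ε R, g (x 0) =
      (2 * ε) ^ m * ∫ s in Icc (-t) R, (s + t) ^ m * g s := by
  have hcont : Continuous fun x : EuclideanSpace ℝ (Fin (m + 1)) => g (x 0) := by fun_prop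
  have hint : Integrable ((truncCone m t ε R).indicator fun x => g (x 0)) :=
    (hcont.continuousOn.integrableOn_compact (isCompact_truncCone hε)).integrable_indicator
      isClosed_truncCone.measurableSet
  rw [← integral_indicator isClosed_truncCone.measurableSet, integral_euclideanSpace_fin_succ hint]
  simp only [integral_indicator_truncCone_slice hε, integral_indicator measurableSet_Icc,
    integral_const_mul]

end TruncCone

/-- Radial parts `φ` of the densities `x ↦ φ ‖x‖` considered here: nonnegative, decreasing along
rays, and with finite moments of every order. -/
structure IsRadialProfile (φ : ℝ → ℝ) : Prop extends HasRightMoments φ where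
  nonneg : ∀ r, 0 ≤ φ r
  antitoneOn : AntitoneOn φ (Ici 0)

/-- The measure on `ℝⁿ` with density `x ↦ φ ‖x‖`. -/
noncomputable def radialMeasure (φ : ℝ → ℝ) (n : ℕ) : Measure (EuclideanSpace ℝ (Fin n)) :=
  volume.withDensity fun x => ENNReal.ofReal (φ ‖x‖)

/-- The moments of a radial profile, i.e. `∫ ‖x‖ ^ (k + 1 - n) dμ` up to a constant for the measure
`μ = radialMeasure φ n`. -/
noncomputable def radialMoment (φ : ℝ → ℝ) (k : ℕ) : ℝ :=
  ∫ r in Ioi 0, r ^ k * φ r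

/-- Up to a positive factor, the second derivative at `t = 0` of
`shiftedMoment (fun s => φ |s|) (k + 1) t ^ q`. The term `0 ^ k * φ 0` is a boundary contribution,
present only for `k = 0` (in the plane), where it stands for the limit of
`k * radialMoment φ (k - 1)` as `k → 0`. -/
noncomputable def secondVariation (φ : ℝ → ℝ) (k : ℕ) (q : ℝ) : ℝ :=
  radialMoment φ (k + 1) * ((k + 1) * (k * radialMoment φ (k - 1) + 0 ^ k * φ 0)) +
    (q - 1) * ((k + 1) * radialMoment φ k) ^ 2

lemma shiftedMoment_comp_abs_zero (φ : ℝ → ℝ) (k : ℕ) :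
    shiftedMoment (fun s => φ |s|) k 0 = radialMoment φ k := by
  simp only [shiftedMoment, radialMoment, neg_zero, add_zero]
  exact setIntegral_congr_fun measurableSet_Ioi fun s hs => by
    simp only [abs_of_pos (mem_Ioi.1 hs)]

namespace IsRadialProfile

variable {φ : ℝ → ℝ} {m n : ℕ} {t ε R : ℝ}

lemma hasRightMoments_comp_abs (hφ : IsRadialProfile φ) : HasRightMoments fun s => φ |s| where
  continuous := hφ.continuous.comp continuous_abs
  integrableOn_Ioi_zero k := (hφ.integrableOn_Ioi_zero k).congr_fun
    (fun s hs => by simp only [abs_of_pos (mem_Ioi.1 hs)]) measurableSet_Ioi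

lemma continuous_comp_norm (hφ : IsRadialProfile φ) :
    Continuous fun x : EuclideanSpace ℝ (Fin n) => φ ‖x‖ :=
  hφ.continuous.comp continuous_norm

lemma isLocallyFiniteMeasure_radialMeasure (hφ : IsRadialProfile φ) (n : ℕ) :
    IsLocallyFiniteMeasure (radialMeasure φ n) :=
  .withDensity_ofReal hφ.continuous_comp_norm

lemma radialMeasure_real_of_isCompact (hφ : IsRadialProfile φ)
    {K : Set (EuclideanSpace ℝ (Fin n))} (hK : IsCompact K) :
    (radialMeasure φ n).real K = ∫ x in K, φ ‖x‖ := by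
  rw [measureReal_def, radialMeasure, withDensity_apply _ hK.measurableSet,
    integral_eq_lintegral_of_nonneg_ae (ae_of_all _ fun x => hφ.nonneg _)
      hφ.continuous_comp_norm.aestronglyMeasurable]

lemma radialMeasure_real_truncCone_le (hφ : IsRadialProfile φ) (hε : 0 ≤ ε) :
    (radialMeasure φ (m + 1)).real (truncCone m t ε R) ≤
      (2 * ε) ^ m * shiftedMoment (fun s => φ |s|) m t := by
  have hψ := hφ.hasRightMoments_comp_abs
  have hK : IsCompact (truncCone m t ε R) := isCompact_truncCone hε
  have haxis : Continuous fun x : EuclideanSpace ℝ (Fin (m + 1)) => φ |x 0| :=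
    hψ.continuous.comp (by fun_prop)
  calc (radialMeasure φ (m + 1)).real (truncCone m t ε R)
      = ∫ x in truncCone m t ε R, φ ‖x‖ := hφ.radialMeasure_real_of_isCompact hK
    _ ≤ ∫ x in truncCone m t ε R, φ |x 0| :=
        setIntegral_mono (hφ.continuous_comp_norm.continuousOn.integrableOn_compact hK)
          (haxis.continuousOn.integrableOn_compact hK) fun x =>
            hφ.antitoneOn (mem_Ici.2 (abs_nonneg _)) (mem_Ici.2 (norm_nonneg x))
              (PiLp.norm_apply_le x 0)
    _ = (2 * ε) ^ m * ∫ s in Icc (-t) R, (s + t) ^ m * φ |s| :=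
        setIntegral_truncCone hε hψ.continuous
    _ ≤ (2 * ε) ^ m * shiftedMoment (fun s => φ |s|) m t := by
        rw [integral_Icc_eq_integral_Ioc, shiftedMoment]
        refine mul_le_mul_of_nonneg_left (setIntegral_mono_set
          (hψ.integrableOn_Ioi_add_pow_mul m _ t) ?_ (LE.le.eventuallyLE Ioc_subset_Ioi_self))
          (by positivity)
        filter_upwards [ae_restrict_mem measurableSet_Ioi] with s hs
        exact mul_nonneg (pow_nonneg (by linarith [mem_Ioi.1 hs]) m) (hφ.nonneg _)

lemma le_radialMeasure_real_truncCone (hφ : IsRadialProfile φ) (hε : 0 ≤ ε) :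
    (2 * ε) ^ m * ∫ s in Icc (-t) R, (s + t) ^ m * φ (|s| + m * (ε * (s + t))) ≤
      (radialMeasure φ (m + 1)).real (truncCone m t ε R) := by
  have hK : IsCompact (truncCone m t ε R) := isCompact_truncCone hε
  have hcont : Continuous fun s => φ (|s| + m * (ε * (s + t))) := hφ.continuous.comp (by fun_prop)
  have haxis : Continuous fun x : EuclideanSpace ℝ (Fin (m + 1)) =>
      φ (|x 0| + m * (ε * (x 0 + t))) := hφ.continuous.comp (by fun_prop)
  rw [← setIntegral_truncCone hε hcont, hφ.radialMeasure_real_of_isCompact hK]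
  refine setIntegral_mono_on (haxis.continuousOn.integrableOn_compact hK)
    (hφ.continuous_comp_norm.continuousOn.integrableOn_compact hK) hK.measurableSet fun x hx => ?_
  have hnorm := norm_le_of_mem_truncCone hx
  exact hφ.antitoneOn (norm_nonneg x) ((norm_nonneg x).trans hnorm) hnorm

lemma tendsto_setIntegral_perturbed (hφ : IsRadialProfile φ) (m : ℕ) (t : ℝ) :
    Tendsto (fun ε => ∫ s in Icc (-t) ε⁻¹, (s + t) ^ m * φ (|s| + m * (ε * (s + t))))
      (𝓝[>] 0) (𝓝 (shiftedMoment (fun s => φ |s|) m t)) := by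
  have hind (ε : ℝ) : ∫ s in Icc (-t) ε⁻¹, (s + t) ^ m * φ (|s| + m * (ε * (s + t))) =
      ∫ s in Ioi (-t),
        (Iic ε⁻¹).indicator (fun s => (s + t) ^ m * φ (|s| + m * (ε * (s + t)))) s := by
    rw [setIntegral_indicator measurableSet_Iic, Ioi_inter_Iic, integral_Icc_eq_integral_Ioc]
  simp only [hind]
  refine tendsto_integral_filter_of_dominated_convergence (fun s => (s + t) ^ m * φ |s|)
    (Eventually.of_forall fun ε => ?_) ?_
    (hφ.hasRightMoments_comp_abs.integrableOn_Ioi_add_pow_mul m _ t) (ae_of_all _ fun s => ?_)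
  · have hcont : Continuous fun s => (s + t) ^ m * φ (|s| + m * (ε * (s + t))) :=
      (by fun_prop : Continuous fun s : ℝ => (s + t) ^ m).mul (hφ.continuous.comp (by fun_prop))
    exact (hcont.measurable.indicator measurableSet_Iic).aestronglyMeasurable
  · filter_upwards [self_mem_nhdsWithin] with ε (hε : 0 < ε)
    filter_upwards [ae_restrict_mem measurableSet_Ioi] with s hs
    have hst : 0 ≤ s + t := by linarith [mem_Ioi.1 hs]
    have hperturb : |s| ≤ |s| + m * (ε * (s + t)) := le_add_of_nonneg_right (by positivity)
    refine (norm_indicator_le_norm_self _ _).trans ?_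
    rw [norm_of_nonneg (mul_nonneg (by positivity) (hφ.nonneg _))]
    gcongr
    exact hφ.antitoneOn (abs_nonneg s) ((abs_nonneg s).trans hperturb) hperturb
  · have hcont : Continuous fun ε : ℝ => (s + t) ^ m * φ (|s| + m * (ε * (s + t))) :=
      continuous_const.mul (hφ.continuous.comp (by fun_prop))
    have hlim : Tendsto (fun ε : ℝ => (s + t) ^ m * φ (|s| + m * (ε * (s + t)))) (𝓝[>] 0)
        (𝓝 ((s + t) ^ m * φ |s|)) := by
      simpa using (hcont.tendsto 0).mono_left nhdsWithin_le_nhds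
    refine hlim.congr' ?_
    filter_upwards [tendsto_inv_nhdsGT_zero.eventually_ge_atTop s] with ε hε
    rw [indicator_of_mem (mem_Iic.2 hε)]

lemma tendsto_radialMeasure_real_truncCone (hφ : IsRadialProfile φ) (m : ℕ) (t : ℝ) :
    Tendsto (fun ε => (radialMeasure φ (m + 1)).real (truncCone m t ε ε⁻¹) / (2 * ε) ^ m)
      (𝓝[>] 0) (𝓝 (shiftedMoment (fun s => φ |s|) m t)) := by
  refine tendsto_of_tendsto_of_tendsto_of_le_of_le' (hφ.tendsto_setIntegral_perturbed m t)
    tendsto_const_nhds ?_ ?_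
  · filter_upwards [self_mem_nhdsWithin] with ε (hε : 0 < ε)
    rw [le_div_iff₀' (by positivity)]
    exact hφ.le_radialMeasure_real_truncCone hε.le
  · filter_upwards [self_mem_nhdsWithin] with ε (hε : 0 < ε)
    rw [div_le_iff₀' (by positivity)]
    exact hφ.radialMeasure_real_truncCone_le hε.le

lemma exists_truncCone_rpow_lt (hφ : IsRadialProfile φ) (m : ℕ) {q lam t t₁ t₂ : ℝ} (hq : 0 < q)
    (hlt : shiftedMoment (fun s => φ |s|) m t ^ q <
      lam * shiftedMoment (fun s => φ |s|) m t₁ ^ q +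
        (1 - lam) * shiftedMoment (fun s => φ |s|) m t₂ ^ q) :
    ∃ ε > 0, (radialMeasure φ (m + 1)).real (truncCone m t ε ε⁻¹) ^ q <
      lam * (radialMeasure φ (m + 1)).real (truncCone m t₁ ε ε⁻¹) ^ q +
        (1 - lam) * (radialMeasure φ (m + 1)).real (truncCone m t₂ ε ε⁻¹) ^ q := by
  have hlim (u : ℝ) := (hφ.tendsto_radialMeasure_real_truncCone m u).rpow_const (p := q)
    (Or.inr hq.le)
  obtain ⟨ε, hscaled, hε : 0 < ε⟩ := (((hlim t).eventually_lt
    (((hlim t₁).const_mul lam).add ((hlim t₂).const_mul (1 - lam))) hlt).and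
      self_mem_nhdsWithin).exists
  have hscale : 0 < ((2 * ε) ^ m) ^ q := by positivity
  refine ⟨ε, hε, ?_⟩
  simpa only [div_rpow measureReal_nonneg (pow_nonneg (mul_pos two_pos hε).le m), mul_div_assoc',
    ← add_div, div_lt_div_iff_of_pos_right hscale] using hscaled

lemma exists_strictConvexOn_ball_shiftedMoment_rpow (hφ : IsRadialProfile φ) (k : ℕ) {q : ℝ}
    (hq : 0 < q) (hpos : 0 < radialMoment φ (k + 1))
    (hcrit : 0 < secondVariation φ k q) :
    ∃ δ > 0, StrictConvexOn ℝ (Metric.ball 0 δ)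
      fun t => shiftedMoment (fun s => φ |s|) (k + 1) t ^ q := by
  have hψ := hφ.hasRightMoments_comp_abs
  refine exists_strictConvexOn_ball_rpow (hψ.hasDerivAt_shiftedMoment_succ k)
    (fun t => (hψ.hasDerivAt_shiftedMoment k t).const_mul ((k : ℝ) + 1)) ?_ ?_ hq ?_
  · have hcont := hψ.continuous_shiftedMoment (k - 1)
    have hcont' : Continuous fun t => φ |-t| := hψ.continuous.comp continuous_neg
    exact (continuous_const.mul ((continuous_const.mul hcont).add
      (continuous_const.mul hcont'))).continuousAt
  · rwa [shiftedMoment_comp_abs_zero]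
  · simpa only [secondVariation, shiftedMoment_comp_abs_zero, neg_zero, abs_zero] using hcrit

theorem exists_isConvexBodyWithZero_rpow_lt (hφ : IsRadialProfile φ) (k : ℕ) {q lam : ℝ}
    (hq : 0 < q) (hlam : lam ∈ Ioo (0 : ℝ) 1) (hpos : 0 < radialMoment φ (k + 1))
    (hcrit : 0 < secondVariation φ k q) :
    ∃ K L : Set (EuclideanSpace ℝ (Fin (k + 2))),
      IsConvexBodyWithZero K ∧ IsConvexBodyWithZero L ∧
        (radialMeasure φ (k + 2)).real (lam • K + (1 - lam) • L) ^ q <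
          lam * (radialMeasure φ (k + 2)).real K ^ q +
            (1 - lam) * (radialMeasure φ (k + 2)).real L ^ q := by
  obtain ⟨δ, hδ, hconv⟩ := hφ.exists_strictConvexOn_ball_shiftedMoment_rpow k hq hpos hcrit
  have hlt := hconv.2 (Metric.mem_ball_self hδ)
    (by simpa [abs_of_pos hδ] using half_lt_self hδ : δ / 2 ∈ Metric.ball 0 δ) (half_pos hδ).ne
    hlam.1 (sub_pos.2 hlam.2) (by ring)
  simp only [smul_eq_mul] at hlt
  obtain ⟨ε, hε, hcones⟩ := hφ.exists_truncCone_rpow_lt (k + 1) hq hlt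
  have hR : 0 < ε⁻¹ := inv_pos.2 hε
  refine ⟨truncCone (k + 1) 0 ε ε⁻¹, truncCone (k + 1) (δ / 2) ε ε⁻¹,
    isConvexBodyWithZero_truncCone le_rfl hε hR,
    isConvexBodyWithZero_truncCone (half_pos hδ).le hε hR, lt_of_le_of_lt ?_ hcones⟩
  have := hφ.isLocallyFiniteMeasure_radialMeasure (k + 2)
  have hfin := (isCompact_truncCone (t := lam * 0 + (1 - lam) * (δ / 2)) (R := ε⁻¹)
    hε.le).measure_ne_top (μ := radialMeasure φ (k + 2))
  exact rpow_le_rpow measureReal_nonneg (measureReal_mono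
    (smul_truncCone_add_smul_truncCone_subset hlam.1.le (sub_pos.2 hlam.2).le (by ring)) hfin) hq.le

end IsRadialProfile

/-- The radial profile of a multiple of the generalized Gaussian measure `μ_p`; the normalizing
constant of `μ_p` is left as a parameter `c`. -/
noncomputable def genGaussianProfile (p c r : ℝ) : ℝ :=
  c * exp (-r ^ p / p)

section GenGaussianProfile

variable {p c : ℝ}

lemma pow_mul_genGaussianProfile (p c : ℝ) (k : ℕ) (r : ℝ) :
    r ^ k * genGaussianProfile p c r = c * (r ^ (k : ℝ) * exp (-p⁻¹ * r ^ p)) := by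
  rw [genGaussianProfile, rpow_natCast, show -p⁻¹ * r ^ p = -r ^ p / p by ring]
  ring

lemma isRadialProfile_genGaussianProfile (hp : 0 < p) (hc : 0 ≤ c) :
    IsRadialProfile (genGaussianProfile p c) where
  continuous := by
    have hpow : Continuous fun r : ℝ => r ^ p := continuous_rpow_const hp.le
    unfold genGaussianProfile
    fun_prop
  integrableOn_Ioi_zero k := by
    simp only [pow_mul_genGaussianProfile]
    exact (integrableOn_rpow_mul_exp_neg_mul_rpow (neg_one_lt_zero.trans_le k.cast_nonneg) hp
      (inv_pos.2 hp)).const_mul c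
  nonneg _ := mul_nonneg hc (exp_pos _).le
  antitoneOn r hr s _ hrs := by
    have hr : 0 ≤ r := hr
    unfold genGaussianProfile
    gcongr

lemma radialMoment_genGaussianProfile (hp : 0 < p) (c : ℝ) (k : ℕ) :
    radialMoment (genGaussianProfile p c) k =
      c * (p ^ (((k : ℝ) + 1) / p) / p * Gamma (((k : ℝ) + 1) / p)) := by
  simp only [radialMoment, pow_mul_genGaussianProfile, integral_const_mul]
  rw [integral_rpow_mul_exp_neg_mul_rpow hp (neg_one_lt_zero.trans_le k.cast_nonneg)
      (inv_pos.2 hp), inv_rpow hp.le, neg_div, rpow_neg hp.le, inv_inv, mul_one_div]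

lemma radialMoment_genGaussianProfile_pos (hp : 0 < p) (hc : 0 < c) (k : ℕ) :
    0 < radialMoment (genGaussianProfile p c) k := by
  rw [radialMoment_genGaussianProfile hp]
  positivity

lemma nat_mul_radialMoment_genGaussianProfile_add (hp : 0 < p) (c : ℝ) (k : ℕ) :
    k * radialMoment (genGaussianProfile p c) (k - 1) + 0 ^ k * genGaussianProfile p c 0 =
      c * (p ^ ((k : ℝ) / p) * Gamma (((k : ℝ) + p) / p)) := by
  cases k with
  | zero => simp [genGaussianProfile, hp.ne']
  | succ k =>
    have hΓ : Gamma (((k + 1 : ℕ) + p) / p) =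
        ((k + 1 : ℕ) : ℝ) / p * Gamma (((k + 1 : ℕ) : ℝ) / p) := by
      rw [add_div, div_self hp.ne', Gamma_add_one (by positivity)]
    rw [hΓ, Nat.add_sub_cancel, radialMoment_genGaussianProfile hp, zero_pow k.succ_ne_zero]
    push_cast
    ring

lemma secondVariation_genGaussianProfile (hp : 0 < p) (c : ℝ) (k : ℕ) (q : ℝ) :
    secondVariation (genGaussianProfile p c) k q =
      ((k + 1) * radialMoment (genGaussianProfile p c) k) ^ 2 *
        (q - (1 - p / (k + 1) *
          (Gamma ((k + p) / p) * Gamma ((k + 2) / p) / Gamma ((k + 1) / p) ^ 2))) := by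
  have hpow : p ^ (((k : ℝ) + 2) / p) * p ^ ((k : ℝ) / p) = (p ^ (((k : ℝ) + 1) / p)) ^ 2 := by
    rw [← rpow_add hp, ← rpow_mul_natCast hp.le]
    congr 1
    push_cast
    ring
  rw [secondVariation, nat_mul_radialMoment_genGaussianProfile_add hp,
    radialMoment_genGaussianProfile hp, radialMoment_genGaussianProfile hp,
    show ((k + 1 : ℕ) : ℝ) + 1 = k + 2 by push_cast; ring]
  field_simp
  linear_combination c ^ 2 * Gamma (((k : ℝ) + 2) / p) * Gamma ((k + p) / p) * p * hpow

lemma secondVariation_genGaussianProfile_pos (hp : 0 < p) (hc : 0 < c) {k : ℕ} {q : ℝ}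
    (hq : 1 - p / (k + 1) *
      (Gamma ((k + p) / p) * Gamma ((k + 2) / p) / Gamma ((k + 1) / p) ^ 2) < q) :
    0 < secondVariation (genGaussianProfile p c) k q := by
  have hmoment := radialMoment_genGaussianProfile_pos hp hc k
  rw [secondVariation_genGaussianProfile hp]
  exact mul_pos (by positivity) (sub_pos.2 hq)

end GenGaussianProfile

theorem stmt_1_general (n : ℕ) (hn : 2 ≤ n) (p : ℝ) (hp : 0 < p) (c : ℝ) (hc : 0 < c)
    (μ : Measure (EuclideanSpace ℝ (Fin n)))
    (hμ : μ = volume.withDensity fun x => ENNReal.ofReal (c * exp (-‖x‖ ^ p / p)))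
    (q : ℝ) (hq : 0 < q)
    (hq' : 1 - p / ((n : ℝ) - 1) *
      (Gamma (((n : ℝ) + p - 2) / p) * Gamma ((n : ℝ) / p) / Gamma (((n : ℝ) - 1) / p) ^ 2) < q)
    (lam : ℝ) (hlam : lam ∈ Ioo (0 : ℝ) 1) :
    ∃ K L : Set (EuclideanSpace ℝ (Fin n)),
      IsConvexBodyWithZero K ∧ IsConvexBodyWithZero L ∧
        μ.real (lam • K + (1 - lam) • L) ^ q < lam * μ.real K ^ q + (1 - lam) * μ.real L ^ q := by
  obtain ⟨k, rfl⟩ := Nat.exists_eq_add_of_le' hn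
  obtain rfl : μ = radialMeasure (genGaussianProfile p c) (k + 2) := hμ
  have hcrit : 0 < secondVariation (genGaussianProfile p c) k q := by
    refine secondVariation_genGaussianProfile_pos hp hc ?_
    convert hq' using 6 <;> push_cast <;> ring_nf
  exact (isRadialProfile_genGaussianProfile hp hc.le).exists_isConvexBodyWithZero_rpow_lt k hq hlam
    (radialMoment_genGaussianProfile_pos hp hc (k + 1)) hcrit

theorem stmt_1 (n : ℕ) (hn : 2 ≤ n) (p : ℝ) (hp : 1 ≤ p)
    (μ : Measure (EuclideanSpace ℝ (Fin n)))
    (hμ : μ = volume.withDensity (fun x => ENNReal.ofReal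
      (Real.Gamma ((n : ℝ) / 2) / (2 * Real.pi ^ ((n : ℝ) / 2) * p ^ ((n : ℝ) / p - 1) *
        Real.Gamma ((n : ℝ) / p)) * Real.exp (-‖x‖ ^ p / p))))
    (q : ℝ) (hq : 0 < q)
    (hq' : 1 - p / ((n : ℝ) - 1) *
      (Real.Gamma (((n : ℝ) + p - 2) / p) * Real.Gamma ((n : ℝ) / p) /
        Real.Gamma (((n : ℝ) - 1) / p) ^ 2) < q) :
    ∃ K L : Set (EuclideanSpace ℝ (Fin n)),
      (IsCompact K ∧ Convex ℝ K ∧ (interior K).Nonempty ∧ 0 ∈ K) ∧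
      (IsCompact L ∧ Convex ℝ L ∧ (interior L).Nonempty ∧ 0 ∈ L) ∧
      ∃ lam ∈ Set.Ioo (0 : ℝ) 1,
        (μ (lam • K + (1 - lam) • L)).toReal ^ q <
          lam * (μ K).toReal ^ q + (1 - lam) * (μ L).toReal ^ q := by
  have hp₀ : 0 < p := one_pos.trans_le hp
  have hhalf : (1 / 2 : ℝ) ∈ Ioo (0 : ℝ) 1 := ⟨by norm_num, by norm_num⟩
  obtain ⟨K, L, hK, hL, hlt⟩ :=
    stmt_1_general n hn p hp₀ _ (by positivity) μ hμ q hq hq' (1 / 2) hhalf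
  exact ⟨K, L, hK, hL, 1 / 2, hhalf, hlt⟩
end

section
/- Let n ≥ 2 and let μ₁ be the measure on ℝⁿ with density e^{-|x|} with respect to the Lebesgue measure. Then for every α > 0 there exist convex bodies K, L in ℝⁿ containing the origin and λ ∈ (0,1) such that μ₁(λK + (1-λ)L)^α < λ·μ₁(K)^α + (1-λ)·μ₁(L)^α. In particular, no positive exponent α makes the Brunn–Minkowski inequality with exponent α hold for μ₁ on the class of convex bodies containing the origin. -/
open MeasureTheory Real Set Pointwise

/-!
Translate a thin truncated cone `K` with apex `0` and axis `e` by `-t • e`, so that `L = K - t • e`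
still contains the origin and the midpoint body is `K - (t / 2) • e`. A translation by a vector of
norm `t / 2` raises the mass by a factor of at most `exp (t / 2)`, whereas passing from `K` to `L`
raises it by `exp t` up to a relative error `O(t³)`: the gain is lost only on the tip of `K`, which
carries a proportion `O(t ^ n)` of the mass, and there the density changes by a factor `1 + O(t)`.
Since `(1 + exp (α * t)) / 2 - exp (α * t / 2)` is of order `α² * t²`, the inequality with
exponent `α` fails for small `t`.
-/

section ScalarEstimates

open Filter Topology

lemma exp_neg_two_mul_le_one_sub {y : ℝ} (hy₀ : 0 ≤ y) (hy : y ≤ 1 / 2) :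
    exp (-(2 * y)) ≤ 1 - y := by
  rw [exp_neg, inv_le_comm₀ (exp_pos _) (by linarith)]
  calc (1 - y)⁻¹ ≤ 2 * y + 1 := by
        rw [inv_le_iff_one_le_mul₀ (by linarith)]
        nlinarith
    _ ≤ exp (2 * y) := add_one_le_exp _

lemma exp_sub_mul_one_sub_two_mul_le_exp_neg {δ : ℝ} (hδ : 0 ≤ δ) (t : ℝ) :
    exp (t - δ) * (1 - 2 * t) ≤ exp (-t) :=
  calc exp (t - δ) * (1 - 2 * t) ≤ exp (t - δ) * exp (-(2 * t)) := by
        gcongr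
        exact one_sub_le_exp_neg _
    _ = exp (-t - δ) := by
        rw [← exp_add]
        ring_nf
    _ ≤ exp (-t) := by
        gcongr
        linarith

lemma eventually_exp_half_lt_midpoint {α : ℝ} (hα : 0 < α) (c : ℝ) :
    ∀ᶠ t in 𝓝[>] (0 : ℝ),
      exp (α * (t / 2)) < 1 / 2 + 1 / 2 * exp (α * (t - c * t ^ 3)) := by
  have hsmall : ∀ᶠ t in 𝓝[>] (0 : ℝ), exp (α * t) * c * t < α / 4 := by
    have hcont : Continuous fun t : ℝ ↦ exp (α * t) * c * t := by fun_prop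
    exact (hcont.tendsto' 0 0 (by simp)).mono_left nhdsWithin_le_nhds |>.eventually_lt_const
      (by positivity)
  filter_upwards [hsmall, self_mem_nhdsWithin] with t ht (ht₀ : 0 < t)
  have hsquare : (α * (t / 2)) ^ 2 ≤ (exp (α * (t / 2)) - 1) ^ 2 := by
    gcongr
    linarith [add_one_le_exp (α * (t / 2))]
  have hdouble : exp (α * t) = exp (α * (t / 2)) ^ 2 := by
    rw [← exp_nat_mul]
    ring_nf
  have herror : exp (α * t) * (α * c * t ^ 3) < (α * (t / 2)) ^ 2 := by
    calc exp (α * t) * (α * c * t ^ 3) = α * t ^ 2 * (exp (α * t) * c * t) := by ring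
      _ < α * t ^ 2 * (α / 4) := by gcongr
      _ = (α * (t / 2)) ^ 2 := by ring
  have hlower : exp (α * t) * (1 - α * c * t ^ 3) ≤ exp (α * (t - c * t ^ 3)) := by
    calc exp (α * t) * (1 - α * c * t ^ 3) ≤ exp (α * t) * exp (-(α * c * t ^ 3)) := by
          gcongr
          exact one_sub_le_exp_neg _
      _ = exp (α * (t - c * t ^ 3)) := by
          rw [← exp_add]
          ring_nf
  nlinarith

lemma rpow_lt_midpoint_of_exp_bounds {α u s a b c : ℝ} (hα : 0 < α) (ha : 0 < a) (hb : 0 ≤ b)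
    (hba : b ≤ exp u * a) (hac : exp s * a ≤ c)
    (h : exp (α * u) < 1 / 2 + 1 / 2 * exp (α * s)) :
    b ^ α < 1 / 2 * a ^ α + (1 - 1 / 2) * c ^ α := by
  have exp_mul_rpow (r : ℝ) : (exp r * a) ^ α = exp (α * r) * a ^ α := by
    rw [mul_rpow (exp_pos r).le ha.le, ← exp_mul, mul_comm r]
  calc b ^ α ≤ (exp u * a) ^ α := by gcongr
    _ = exp (α * u) * a ^ α := exp_mul_rpow u
    _ < (1 / 2 + 1 / 2 * exp (α * s)) * a ^ α := by gcongr
    _ = 1 / 2 * a ^ α + (1 - 1 / 2) * (exp s * a) ^ α := by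
        rw [exp_mul_rpow]
        ring
    _ ≤ 1 / 2 * a ^ α + (1 - 1 / 2) * c ^ α := by
        gcongr

end ScalarEstimates

section ConvexBodies

variable {E : Type*} [NormedAddCommGroup E] [NormedSpace ℝ E]

/-- The class of sets on which the Brunn–Minkowski inequality is tested: convex bodies containing
the origin. It is a predicate on sets, rather than a subtype of Mathlib's `ConvexBody`, because
the latter allows empty interior. -/
def IsConvexBodyThroughZero (K : Set E) : Prop :=
  IsCompact K ∧ Convex ℝ K ∧ (interior K).Nonempty ∧ 0 ∈ K

lemma IsConvexBodyThroughZero.neg_vadd {K : Set E} (hK : IsConvexBodyThroughZero K) {v : E}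
    (hv : v ∈ K) : IsConvexBodyThroughZero (-v +ᵥ K) := by
  obtain ⟨hcompact, hconvex, hinterior, -⟩ := hK
  refine ⟨hcompact.vadd _, hconvex.vadd _, ?_, v, hv, neg_add_cancel v⟩
  rw [interior_vadd]
  exact hinterior.vadd_set

lemma smul_add_smul_vadd_of_convex {K : Set E} (hK : Convex ℝ K) {lam : ℝ}
    (hlam : lam ∈ Icc (0 : ℝ) 1) (v : E) :
    lam • K + (1 - lam) • (v +ᵥ K) = ((1 - lam) • v) +ᵥ K := by
  calc lam • K + (1 - lam) • (v +ᵥ K)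
      = ((1 - lam) • v) +ᵥ (lam • K + (1 - lam) • K) := by
        simp only [← singleton_vadd, vadd_eq_add, smul_add, smul_set_singleton]
        exact add_left_comm _ _ _
    _ = ((1 - lam) • v) +ᵥ K := by
        rw [← hK.add_smul hlam.1 (sub_nonneg.2 hlam.2), add_sub_cancel, one_smul]

end ConvexBodies

section TruncatedCone

variable {E : Type*} [NormedAddCommGroup E] [NormedSpace ℝ E] {f : StrongDual ℝ E} {e : E} {δ : ℝ}

/-- The cone with apex `0`, axis `e` and opening `δ`, truncated at height `1`, where the height
of `x` is `f x`. It is meant for `f e = 1` and `0 < δ`; the last condition then forces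
`0 ≤ f x`. -/
def truncatedCone (f : StrongDual ℝ E) (e : E) (δ : ℝ) : Set E :=
  {x | f x ≤ 1 ∧ ‖x - f x • e‖ ≤ δ * f x}

lemma apply_nonneg_of_mem_truncatedCone (hδ : 0 < δ) {x : E} (hx : x ∈ truncatedCone f e δ) :
    0 ≤ f x :=
  nonneg_of_mul_nonneg_right ((norm_nonneg _).trans hx.2) hδ

lemma norm_le_of_mem_truncatedCone (he : ‖e‖ ≤ 1) (hδ : 0 < δ) {x : E}
    (hx : x ∈ truncatedCone f e δ) : ‖x‖ ≤ 1 + δ := by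
  have hheight := apply_nonneg_of_mem_truncatedCone hδ hx
  calc ‖x‖ = ‖f x • e + (x - f x • e)‖ := by rw [add_sub_cancel]
    _ ≤ ‖f x • e‖ + ‖x - f x • e‖ := norm_add_le _ _
    _ ≤ f x * 1 + δ * f x := by
        rw [norm_smul, norm_of_nonneg hheight]
        gcongr
        exact hx.2
    _ ≤ 1 * 1 + δ * 1 := by
        gcongr
        exacts [hx.1, hx.1]
    _ = 1 + δ := by ring

lemma isClosed_truncatedCone : IsClosed (truncatedCone f e δ) :=
  (isClosed_le (f := f) (g := fun _ ↦ 1) (by fun_prop) (by fun_prop)).and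
    (isClosed_le (by fun_prop) (by fun_prop))

lemma convex_truncatedCone : Convex ℝ (truncatedCone f e δ) := by
  rintro x ⟨hx, hx'⟩ y ⟨hy, hy'⟩ a b ha hb hab
  refine ⟨?_, ?_⟩
  · rw [map_add, map_smul, map_smul]
    exact convex_Iic (1 : ℝ) hx hy ha hb hab
  calc ‖a • x + b • y - f (a • x + b • y) • e‖
      = ‖a • (x - f x • e) + b • (y - f y • e)‖ := by
        simp only [map_add, map_smul, smul_eq_mul]
        congr 1
        module
    _ ≤ a * ‖x - f x • e‖ + b * ‖y - f y • e‖ := by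
        simpa only [norm_smul, norm_of_nonneg ha, norm_of_nonneg hb] using
          norm_add_le (a • (x - f x • e)) (b • (y - f y • e))
    _ ≤ a * (δ * f x) + b * (δ * f y) := by gcongr
    _ = δ * f (a • x + b • y) := by
        simp only [map_add, map_smul, smul_eq_mul]
        ring

lemma smul_axis_mem_truncatedCone (hfe : f e = 1) (hδ : 0 < δ) {s : ℝ} (hs : s ∈ Icc (0 : ℝ) 1) :
    s • e ∈ truncatedCone f e δ := by
  simp [truncatedCone, hfe, hs.2, mul_nonneg hδ.le hs.1]

lemma interior_truncatedCone_nonempty (hfe : f e = 1) (hδ : 0 < δ) :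
    (interior (truncatedCone f e δ)).Nonempty := by
  have hopen : IsOpen {x | f x < 1 ∧ ‖x - f x • e‖ < δ * f x} :=
    .and (isOpen_lt (by fun_prop) (by fun_prop)) (isOpen_lt (by fun_prop) (by fun_prop))
  refine ⟨(1 / 2 : ℝ) • e, interior_maximal ?_ hopen ?_⟩
  · exact fun x hx ↦ ⟨hx.1.le, hx.2.le⟩
  · simp only [mem_ofPred_eq, map_smul, hfe, smul_eq_mul, mul_one, sub_self, norm_zero]
    exact ⟨by norm_num, by positivity⟩

lemma isConvexBodyThroughZero_truncatedCone [FiniteDimensional ℝ E] (he : ‖e‖ ≤ 1)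
    (hfe : f e = 1) (hδ : 0 < δ) : IsConvexBodyThroughZero (truncatedCone f e δ) := by
  refine ⟨Metric.isCompact_of_isClosed_isBounded isClosed_truncatedCone ?_, convex_truncatedCone,
    interior_truncatedCone_nonempty hfe hδ, ?_⟩
  · exact isBounded_iff_forall_norm_le.2 ⟨1 + δ, fun x ↦ norm_le_of_mem_truncatedCone he hδ⟩
  · simpa using smul_axis_mem_truncatedCone hfe hδ (left_mem_Icc.2 zero_le_one)

lemma truncatedCone_inter_le_subset_smul {t : ℝ} (ht : 0 < t) :
    truncatedCone f e δ ∩ {x | f x ≤ t} ⊆ t • truncatedCone f e δ := by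
  rintro x ⟨hx, hxt⟩
  rw [mem_smul_set_iff_inv_smul_mem₀ ht.ne']
  refine ⟨?_, ?_⟩
  · rwa [map_smul, smul_eq_mul, inv_mul_le_one₀ ht]
  calc ‖t⁻¹ • x - f (t⁻¹ • x) • e‖ = t⁻¹ * ‖x - f x • e‖ := by
        rw [map_smul, smul_assoc, ← smul_sub, norm_smul, norm_of_nonneg (by positivity)]
    _ ≤ t⁻¹ * (δ * f x) := by
        gcongr
        exact hx.2
    _ = δ * f (t⁻¹ • x) := by
        rw [map_smul, smul_eq_mul]
        ring

lemma norm_neg_smul_axis_add_le_of_mem_truncatedCone (hf : ‖f‖ ≤ 1) (he : ‖e‖ ≤ 1) (hδ : 0 < δ)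
    {t : ℝ} {x : E} (hx : x ∈ truncatedCone f e δ) (hxt : t ≤ f x) :
    ‖-(t • e) + x‖ ≤ ‖x‖ + (δ - t) := by
  have hheight : f x ≤ ‖x‖ := (le_abs_self _).trans <|
    (f.le_of_opNorm_le hf x).trans_eq (one_mul _)
  calc ‖-(t • e) + x‖ = ‖(f x - t) • e + (x - f x • e)‖ := by
        congr 1
        module
    _ ≤ ‖(f x - t) • e‖ + ‖x - f x • e‖ := norm_add_le _ _
    _ ≤ (f x - t) * 1 + δ * 1 := by
        rw [norm_smul, norm_of_nonneg (sub_nonneg.2 hxt)]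
        gcongr
        exact hx.2.trans (mul_le_mul_of_nonneg_left hx.1 hδ.le)
    _ ≤ ‖x‖ + (δ - t) := by linarith

end TruncatedCone

section ExpNormMeasure

variable {E : Type*} [NormedAddCommGroup E] [MeasurableSpace E]

/-- The measure `μ₁` with density `exp (-‖x‖)` with respect to a reference measure `ν`. -/
noncomputable def expNormMeasure (ν : Measure E) : Measure E :=
  ν.withDensity fun x ↦ ENNReal.ofReal (exp (-‖x‖))

variable (ν : Measure E)

lemma expNormMeasure_le : expNormMeasure ν ≤ ν := by
  refine (withDensity_mono (.of_forall fun x ↦ ?_)).trans_eq withDensity_one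
  simp

variable [BorelSpace E]

instance [ν.IsOpenPosMeasure] : (expNormMeasure ν).IsOpenPosMeasure :=
  (withDensity_absolutelyContinuous' (by fun_prop)
    (.of_forall fun x ↦ by simpa using exp_pos (-‖x‖))).isOpenPosMeasure

lemma measure_le_exp_mul_expNormMeasure [SFinite ν] {K : Set E} {R : ℝ} (hK : ∀ x ∈ K, ‖x‖ ≤ R) :
    ν K ≤ ENNReal.ofReal (exp R) * expNormMeasure ν K := by
  rw [expNormMeasure, withDensity_apply', ← lintegral_const_mul' _ _ ENNReal.ofReal_ne_top,
    ← setLIntegral_one]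
  refine setLIntegral_mono (by fun_prop) fun x hx ↦ ?_
  rw [← ENNReal.ofReal_mul (exp_pos _).le, ← exp_add, ENNReal.one_le_ofReal, one_le_exp_iff]
  linarith [hK x hx]

variable [SFinite ν] [ν.IsAddLeftInvariant]

lemma exp_neg_mul_expNormMeasure_le_vadd {A : Set E} {v : E} {r : ℝ}
    (h : ∀ x ∈ A, ‖v + x‖ ≤ ‖x‖ + r) :
    ENNReal.ofReal (exp (-r)) * expNormMeasure ν A ≤ expNormMeasure ν (v +ᵥ A) := by
  have htranslate : expNormMeasure ν (v +ᵥ A)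
      = ∫⁻ x in A, ENNReal.ofReal (exp (-‖v + x‖)) ∂ν := by
    rw [expNormMeasure, withDensity_apply', ← image_vadd]
    exact ((measurePreserving_add_left ν v).setLIntegral_comp_emb
      (measurableEmbedding_addLeft v) _ A).symm
  rw [htranslate, expNormMeasure, withDensity_apply',
    ← lintegral_const_mul' _ _ ENNReal.ofReal_ne_top]
  refine setLIntegral_mono (by fun_prop) fun x hx ↦ ?_
  rw [← ENNReal.ofReal_mul (exp_pos _).le, ← exp_add]
  gcongr
  linarith [h x hx]

variable [IsFiniteMeasure (expNormMeasure ν)]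

lemma exp_neg_mul_expNormMeasure_real_le_vadd {A : Set E} {v : E} {r : ℝ}
    (h : ∀ x ∈ A, ‖v + x‖ ≤ ‖x‖ + r) :
    exp (-r) * (expNormMeasure ν).real A ≤ (expNormMeasure ν).real (v +ᵥ A) := by
  have := ENNReal.toReal_mono (measure_ne_top _ _) (exp_neg_mul_expNormMeasure_le_vadd ν h)
  rwa [ENNReal.toReal_mul, ENNReal.toReal_ofReal (exp_pos _).le] at this

lemma expNormMeasure_real_vadd_le (A : Set E) (v : E) :
    (expNormMeasure ν).real (v +ᵥ A) ≤ exp ‖v‖ * (expNormMeasure ν).real A := by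
  have hback : exp (-‖v‖) * (expNormMeasure ν).real (v +ᵥ A) ≤ (expNormMeasure ν).real A := by
    have := exp_neg_mul_expNormMeasure_real_le_vadd ν (A := v +ᵥ A) (v := -v) (r := ‖v‖)
      fun x _ ↦ by simpa only [norm_neg, add_comm] using norm_add_le (-v) x
    rwa [neg_vadd_vadd] at this
  rwa [exp_neg, inv_mul_le_iff₀ (exp_pos _)] at hback

end ExpNormMeasure

section HaarMeasure

variable {E : Type*} [NormedAddCommGroup E] [NormedSpace ℝ E] [FiniteDimensional ℝ E]
  [MeasurableSpace E] [BorelSpace E] (ν : Measure E) [ν.IsAddHaarMeasure]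

instance [Nontrivial E] : IsFiniteMeasure (expNormMeasure ν) := by
  have hradial : IntegrableOn (fun r : ℝ ↦ r ^ (Module.finrank ℝ E - 1) • exp (-r)) (Ioi 0) := by
    refine (GammaIntegral_convergent (s := Module.finrank ℝ E)
      (mod_cast Module.finrank_pos)).congr_fun (fun r _ ↦ ?_) measurableSet_Ioi
    simp only [← Nat.cast_pred (R := ℝ) (Module.finrank_pos (R := ℝ) (M := E)), rpow_natCast,
      smul_eq_mul, mul_comm]
  exact isFiniteMeasure_withDensity_ofReal ((integrable_fun_norm_addHaar ν).2 hradial).2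

lemma expNormMeasure_smul_le {K : Set E} {R t : ℝ} (hK : ∀ x ∈ K, ‖x‖ ≤ R) (ht : 0 ≤ t) :
    expNormMeasure ν (t • K)
      ≤ ENNReal.ofReal (t ^ Module.finrank ℝ E * exp R) * expNormMeasure ν K :=
  calc expNormMeasure ν (t • K) ≤ ν (t • K) := expNormMeasure_le ν _
    _ = ENNReal.ofReal (t ^ Module.finrank ℝ E) * ν K := ν.addHaar_smul_of_nonneg ht K
    _ ≤ ENNReal.ofReal (t ^ Module.finrank ℝ E)
          * (ENNReal.ofReal (exp R) * expNormMeasure ν K) := by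
        gcongr
        exact measure_le_exp_mul_expNormMeasure ν hK
    _ = ENNReal.ofReal (t ^ Module.finrank ℝ E * exp R) * expNormMeasure ν K := by
        rw [ENNReal.ofReal_mul (by positivity), mul_assoc]

end HaarMeasure

section Counterexample

open Filter Topology

variable {E : Type*} [NormedAddCommGroup E] [NormedSpace ℝ E] [FiniteDimensional ℝ E]
  [MeasurableSpace E] [BorelSpace E] (ν : Measure E) [ν.IsAddHaarMeasure] {f : StrongDual ℝ E}
  {e : E}

lemma expNormMeasure_real_truncatedCone_inter_le [Nontrivial E] (he : ‖e‖ ≤ 1) {δ t : ℝ}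
    (hδ₀ : 0 < δ) (hδ : δ ≤ 1) (ht : 0 < t) :
    (expNormMeasure ν).real (truncatedCone f e δ ∩ {x | f x ≤ t})
      ≤ t ^ Module.finrank ℝ E * exp 2 * (expNormMeasure ν).real (truncatedCone f e δ) := by
  have hbound : ∀ x ∈ truncatedCone f e δ, ‖x‖ ≤ 2 := fun x hx ↦
    (norm_le_of_mem_truncatedCone he hδ₀ hx).trans (by linarith)
  have := ENNReal.toReal_mono (by finiteness)
    ((measure_mono (truncatedCone_inter_le_subset_smul ht)).trans
      (expNormMeasure_smul_le ν hbound ht.le))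
  rwa [ENNReal.toReal_mul, ENNReal.toReal_ofReal (by positivity)] at this

lemma le_expNormMeasure_real_vadd_truncatedCone [Nontrivial E] (hf : ‖f‖ ≤ 1) (he : ‖e‖ ≤ 1)
    {δ t : ℝ} (hδ₀ : 0 < δ) (hδ : δ ≤ 1) (ht : 0 < t) :
    exp (t - δ) * (1 - 2 * exp 2 * t ^ (Module.finrank ℝ E + 1))
        * (expNormMeasure ν).real (truncatedCone f e δ)
      ≤ (expNormMeasure ν).real (-(t • e) +ᵥ truncatedCone f e δ) := by
  set μ := expNormMeasure ν
  set K := truncatedCone f e δ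
  set T := {x | f x ≤ t}
  have hT : MeasurableSet T := (isClosed_le (by fun_prop) (by fun_prop)).measurableSet
  have htip : exp (-t) * μ.real (K ∩ T) ≤ μ.real (-(t • e) +ᵥ (K ∩ T)) := by
    refine exp_neg_mul_expNormMeasure_real_le_vadd ν fun x _ ↦ (norm_add_le _ _).trans ?_
    rw [norm_neg, norm_smul, norm_of_nonneg ht.le]
    nlinarith
  have hbase : exp (-(δ - t)) * μ.real (K \ T) ≤ μ.real (-(t • e) +ᵥ (K \ T)) :=
    exp_neg_mul_expNormMeasure_real_le_vadd ν fun x hx ↦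
      norm_neg_smul_axis_add_le_of_mem_truncatedCone hf he hδ₀ hx.1 (not_le.1 hx.2).le
  have hsplit : μ.real K = μ.real (K ∩ T) + μ.real (K \ T) := (measureReal_inter_add_sdiff hT).symm
  have hsplit_vadd : μ.real (-(t • e) +ᵥ K)
      = μ.real (-(t • e) +ᵥ (K ∩ T)) + μ.real (-(t • e) +ᵥ (K \ T)) := by
    rw [vadd_set_inter, vadd_set_sdiff, measureReal_inter_add_sdiff (hT.const_vadd _)]
  calc exp (t - δ) * (1 - 2 * exp 2 * t ^ (Module.finrank ℝ E + 1)) * μ.real K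
      = exp (t - δ) * (μ.real K - 2 * t * (t ^ Module.finrank ℝ E * exp 2 * μ.real K)) := by ring
    _ ≤ exp (t - δ) * (μ.real K - 2 * t * μ.real (K ∩ T)) := by
        gcongr
        exact expNormMeasure_real_truncatedCone_inter_le ν he hδ₀ hδ ht
    _ = exp (t - δ) * (1 - 2 * t) * μ.real (K ∩ T) + exp (-(δ - t)) * μ.real (K \ T) := by
        rw [hsplit, neg_sub]
        ring
    _ ≤ exp (-t) * μ.real (K ∩ T) + exp (-(δ - t)) * μ.real (K \ T) := by
        gcongr
        exact exp_sub_mul_one_sub_two_mul_le_exp_neg hδ₀.le t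
    _ ≤ μ.real (-(t • e) +ᵥ K) := by
        rw [hsplit_vadd]
        gcongr

lemma eventually_exp_mul_le_expNormMeasure_real_vadd (hE : 2 ≤ Module.finrank ℝ E)
    (hf : ‖f‖ ≤ 1) (he : ‖e‖ ≤ 1) :
    ∀ᶠ t in 𝓝[>] (0 : ℝ),
      exp (t - (1 + 4 * exp 2) * t ^ 3) * (expNormMeasure ν).real (truncatedCone f e (t ^ 3))
        ≤ (expNormMeasure ν).real (-(t • e) +ᵥ truncatedCone f e (t ^ 3)) := by
  have : Nontrivial E := Module.nontrivial_of_finrank_pos (R := ℝ) (by lia)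
  have hsmall : ∀ᶠ t in 𝓝[>] (0 : ℝ), 2 * exp 2 * t ^ 3 < 1 / 2 := by
    have hcont : Continuous fun t : ℝ ↦ 2 * exp 2 * t ^ 3 := by fun_prop
    exact (hcont.tendsto' 0 0 (by simp)).mono_left nhdsWithin_le_nhds |>.eventually_lt_const
      (by norm_num)
  filter_upwards [hsmall, Ioo_mem_nhdsGT zero_lt_one] with t ht ⟨ht₀, ht₁⟩
  calc exp (t - (1 + 4 * exp 2) * t ^ 3) * (expNormMeasure ν).real (truncatedCone f e (t ^ 3))
      = exp (t - t ^ 3) * exp (-(2 * (2 * exp 2 * t ^ 3)))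
          * (expNormMeasure ν).real (truncatedCone f e (t ^ 3)) := by
        rw [← exp_add]
        ring_nf
    _ ≤ exp (t - t ^ 3) * (1 - 2 * exp 2 * t ^ 3)
          * (expNormMeasure ν).real (truncatedCone f e (t ^ 3)) := by
        gcongr
        exact exp_neg_two_mul_le_one_sub (by positivity) ht.le
    _ ≤ exp (t - t ^ 3) * (1 - 2 * exp 2 * t ^ (Module.finrank ℝ E + 1))
          * (expNormMeasure ν).real (truncatedCone f e (t ^ 3)) := by
        gcongr _ * (1 - _ * ?_) * _
        exact pow_le_pow_of_le_one ht₀.le ht₁.le (by lia)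
    _ ≤ (expNormMeasure ν).real (-(t • e) +ᵥ truncatedCone f e (t ^ 3)) :=
        le_expNormMeasure_real_vadd_truncatedCone ν hf he (by positivity)
          (pow_le_one₀ ht₀.le ht₁.le) ht₀

lemma exists_expNormMeasure_real_rpow_lt (hE : 2 ≤ Module.finrank ℝ E) {α : ℝ} (hα : 0 < α) :
    ∃ K L : Set E, IsConvexBodyThroughZero K ∧ IsConvexBodyThroughZero L ∧
      ∃ lam ∈ Ioo (0 : ℝ) 1, (expNormMeasure ν).real (lam • K + (1 - lam) • L) ^ α <
        lam * (expNormMeasure ν).real K ^ α + (1 - lam) * (expNormMeasure ν).real L ^ α := by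
  have : Nontrivial E := Module.nontrivial_of_finrank_pos (R := ℝ) (by lia)
  obtain ⟨e, he⟩ := exists_norm_eq E zero_le_one
  obtain ⟨f, hf, hfe⟩ := exists_dual_vector'' ℝ e
  replace hfe : f e = 1 := by simpa [he] using hfe
  obtain ⟨t, ⟨ht₀, ht₁⟩, hmidpoint, hgain⟩ :=
    ((eventually_mem_set.2 (Ioo_mem_nhdsGT zero_lt_one)).and
      ((eventually_exp_half_lt_midpoint hα _).and
        (eventually_exp_mul_le_expNormMeasure_real_vadd ν hE hf he.le))).exists
  set K := truncatedCone f e (t ^ 3)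
  have hK : IsConvexBodyThroughZero K :=
    isConvexBodyThroughZero_truncatedCone he.le hfe (by positivity)
  have hshift : ‖(1 - 1 / 2 : ℝ) • -(t • e)‖ = t / 2 := by
    rw [norm_smul, norm_neg, norm_smul, he, norm_of_nonneg ht₀.le, norm_of_nonneg (by norm_num)]
    ring
  refine ⟨K, -(t • e) +ᵥ K, hK, hK.neg_vadd ?_, 1 / 2, by norm_num, ?_⟩
  · exact smul_axis_mem_truncatedCone hfe (by positivity) ⟨ht₀.le, ht₁.le⟩
  rw [smul_add_smul_vadd_of_convex hK.2.1 (by norm_num)]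
  refine rpow_lt_midpoint_of_exp_bounds hα ?_ measureReal_nonneg ?_ hgain hmidpoint
  · exact ENNReal.toReal_pos (Measure.measure_pos_of_nonempty_interior _ hK.2.2.1).ne'
      (measure_ne_top _ _)
  · exact (expNormMeasure_real_vadd_le ν K _).trans_eq (by rw [hshift])

theorem stmt_2_general (hE : 2 ≤ Module.finrank ℝ E) :
    (∀ α : ℝ, 0 < α →
      ∃ K L : Set E, IsConvexBodyThroughZero K ∧ IsConvexBodyThroughZero L ∧
        ∃ lam ∈ Ioo (0 : ℝ) 1, (expNormMeasure ν).real (lam • K + (1 - lam) • L) ^ α <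
          lam * (expNormMeasure ν).real K ^ α + (1 - lam) * (expNormMeasure ν).real L ^ α) ∧
    ¬ ∃ α : ℝ, 0 < α ∧
        ∀ K L : Set E, IsConvexBodyThroughZero K → IsConvexBodyThroughZero L →
          ∀ lam ∈ Icc (0 : ℝ) 1,
            lam * (expNormMeasure ν).real K ^ α + (1 - lam) * (expNormMeasure ν).real L ^ α ≤
              (expNormMeasure ν).real (lam • K + (1 - lam) • L) ^ α := by
  refine ⟨fun α hα ↦ exists_expNormMeasure_real_rpow_lt ν hE hα, ?_⟩
  rintro ⟨α, hα, hBrunnMinkowski⟩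
  obtain ⟨K, L, hK, hL, lam, hlam, hlt⟩ := exists_expNormMeasure_real_rpow_lt ν hE hα
  exact hlt.not_ge (hBrunnMinkowski K L hK hL lam (Ioo_subset_Icc_self hlam))

end Counterexample

theorem stmt_2 (n : ℕ) (hn : 2 ≤ n)
    (μ : Measure (EuclideanSpace ℝ (Fin n)))
    (hμ : μ = volume.withDensity (fun x => ENNReal.ofReal (Real.exp (-‖x‖)))) :
    (∀ α : ℝ, 0 < α →
      ∃ K L : Set (EuclideanSpace ℝ (Fin n)),
        (IsCompact K ∧ Convex ℝ K ∧ (interior K).Nonempty ∧ 0 ∈ K) ∧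
        (IsCompact L ∧ Convex ℝ L ∧ (interior L).Nonempty ∧ 0 ∈ L) ∧
        ∃ lam ∈ Set.Ioo (0 : ℝ) 1,
          (μ (lam • K + (1 - lam) • L)).toReal ^ α <
            lam * (μ K).toReal ^ α + (1 - lam) * (μ L).toReal ^ α) ∧
    ¬ ∃ α : ℝ, 0 < α ∧
        ∀ K L : Set (EuclideanSpace ℝ (Fin n)),
          (IsCompact K ∧ Convex ℝ K ∧ (interior K).Nonempty ∧ 0 ∈ K) →
          (IsCompact L ∧ Convex ℝ L ∧ (interior L).Nonempty ∧ 0 ∈ L) →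
          ∀ lam ∈ Set.Icc (0 : ℝ) 1,
            lam * (μ K).toReal ^ α + (1 - lam) * (μ L).toReal ^ α ≤
              (μ (lam • K + (1 - lam) • L)).toReal ^ α := by
  subst hμ
  exact stmt_2_general volume (by simpa using hn)
end

section
/- Let V : ℝⁿ → ℝ be a C² convex function whose Hessian ∇²V(x) is positive definite for almost every x ∈ ℝⁿ, and let μ be the measure with density e^{-V} with respect to the Lebesgue measure. Let K be a convex body in ℝⁿ and let u be a C² function on a neighborhood of K satisfying Δu - ⟨∇V, ∇u⟩ = 1 on K. Then ∫_K (‖∇²u‖² + ⟨∇²V ∇u, ∇u⟩) dμ ≥ ∫_K 1/(n + ⟨(∇²V)^{-1} ∇V, ∇V⟩) dμ, where ‖∇²u‖ denotes the Hilbert–Schmidt (Frobenius) norm of the Hessian of u. -/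
open MeasureTheory Real Set
open scoped RealInnerProductSpace

/-!
The inequality holds pointwise and comes from completing a square. Write `H = ∇²u`, `A = ∇²V`,
`q = A⁻¹ ∇V` and `p = ∇u`. For every real `t`, expanding
`0 ≤ ∑ᵢ ‖H eᵢ - t eᵢ‖² + ⟪A (p + t q), p + t q⟫` gives
`2 t (Δu - ⟪∇V, ∇u⟫) - t² (n + ⟪A⁻¹ ∇V, ∇V⟫) ≤ ‖H‖² + ⟪A p, p⟫`,
and the best choice `t = (Δu - ⟪∇V, ∇u⟫) / (n + ⟪A⁻¹ ∇V, ∇V⟫)` turns the left-hand side into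
`(Δu - ⟪∇V, ∇u⟫)² / (n + ⟪A⁻¹ ∇V, ∇V⟫)`.
-/

section Algebra

variable {E ι : Type*} [NormedAddCommGroup E] [InnerProductSpace ℝ E] [Fintype ι]

lemma sq_div_le_of_forall_two_mul_sub_le {c d M : ℝ} (hd : d ≠ 0)
    (h : ∀ t : ℝ, 2 * t * c - t ^ 2 * d ≤ M) : c ^ 2 / d ≤ M :=
  calc c ^ 2 / d = 2 * (c / d) * c - (c / d) ^ 2 * d := by field_simp; ring
    _ ≤ M := h (c / d)

lemma two_mul_sum_inner_sub_le_sum_norm_sq {e : ι → E} (he : ∀ i, ‖e i‖ = 1) (v : ι → E) (t : ℝ) :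
    2 * t * ∑ i, ⟪v i, e i⟫ - t ^ 2 * Fintype.card ι ≤ ∑ i, ‖v i‖ ^ 2 := by
  have expand (i : ι) : ‖v i - t • e i‖ ^ 2 = ‖v i‖ ^ 2 - 2 * t * ⟪v i, e i⟫ + t ^ 2 := by
    rw [norm_sub_sq_real, real_inner_smul_right, norm_smul, he, mul_one, norm_eq_abs, sq_abs]
    ring
  have sum_nonneg : 0 ≤ ∑ i, ‖v i - t • e i‖ ^ 2 := by positivity
  simp only [expand, Finset.sum_add_distrib, Finset.sum_sub_distrib, ← Finset.mul_sum,
    Finset.sum_const, Finset.card_univ, nsmul_eq_mul] at sum_nonneg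
  linarith

lemma neg_two_mul_inner_sub_le_inner_map_self {A : E →L[ℝ] E} (hA : A.IsPositive) (p q : E)
    (t : ℝ) : -2 * t * ⟪A q, p⟫ - t ^ 2 * ⟪q, A q⟫ ≤ ⟪A p, p⟫ := by
  have symm : ⟪A p, q⟫ = ⟪A q, p⟫ := by
    rw [hA.inner_left_eq_inner_right, real_inner_comm]
  have nonneg := hA.inner_nonneg_left (p + t • q)
  simp only [map_add, map_smul, inner_add_left, inner_add_right, real_inner_smul_left,
    real_inner_smul_right, symm, real_inner_comm q (A q)] at nonneg
  linarith

lemma sq_sum_inner_sub_inner_div_le [Nonempty ι] {A : E →L[ℝ] E} (hA : A.IsPositive)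
    {e : ι → E} (he : ∀ i, ‖e i‖ = 1) (v : ι → E) (p q : E) :
    (∑ i, ⟪v i, e i⟫ - ⟪A q, p⟫) ^ 2 / (Fintype.card ι + ⟪q, A q⟫) ≤
      ∑ i, ‖v i‖ ^ 2 + ⟪A p, p⟫ := by
  have denom_pos : 0 < Fintype.card ι + ⟪q, A q⟫ :=
    add_pos_of_pos_of_nonneg (by exact_mod_cast Fintype.card_pos) (hA.inner_nonneg_right q)
  refine sq_div_le_of_forall_two_mul_sub_le denom_pos.ne' fun t ↦ ?_
  linarith [two_mul_sum_inner_sub_le_sum_norm_sq he v t,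
    neg_two_mul_inner_sub_le_inner_map_self hA p q t]

lemma inner_map_self_nonneg_of_forall_pos {A : E →L[ℝ] E}
    (hpos : ∀ v, v ≠ 0 → 0 < ⟪A v, v⟫) (v : E) : 0 ≤ ⟪A v, v⟫ := by
  rcases eq_or_ne v 0 with rfl | hv
  · simp
  · exact (hpos v hv).le

lemma isInvertible_of_forall_inner_map_self_pos [FiniteDimensional ℝ E] {A : E →L[ℝ] E}
    (hpos : ∀ v, v ≠ 0 → 0 < ⟪A v, v⟫) : A.IsInvertible := by
  have hinj : Function.Injective A.toLinearMap := by
    refine (injective_iff_map_eq_zero _).2 fun v (hv : A v = 0) ↦ ?_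
    by_contra hne
    simpa [hv] using hpos v hne
  exact ⟨(LinearEquiv.ofInjectiveEndo A.toLinearMap hinj).toContinuousLinearEquiv, rfl⟩

lemma inner_inverse_self_nonneg_of_forall_inner_map_self_pos [FiniteDimensional ℝ E]
    {A : E →L[ℝ] E} (hpos : ∀ v, v ≠ 0 → 0 < ⟪A v, v⟫) (g : E) : 0 ≤ ⟪A.inverse g, g⟫ := by
  obtain ⟨q, rfl⟩ := (isInvertible_of_forall_inner_map_self_pos hpos).surjective g
  rw [(isInvertible_of_forall_inner_map_self_pos hpos).inverse_apply_self, real_inner_comm]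
  exact inner_map_self_nonneg_of_forall_pos hpos q

lemma sq_sum_inner_sub_inner_div_inverse_le [FiniteDimensional ℝ E] [Nonempty ι]
    {A : E →L[ℝ] E} (hA : A.IsSymmetric) (hpos : ∀ v, v ≠ 0 → 0 < ⟪A v, v⟫) {e : ι → E}
    (he : ∀ i, ‖e i‖ = 1) (v : ι → E) (p g : E) :
    (∑ i, ⟪v i, e i⟫ - ⟪g, p⟫) ^ 2 / (Fintype.card ι + ⟪A.inverse g, g⟫) ≤
      ∑ i, ‖v i‖ ^ 2 + ⟪A p, p⟫ := by
  have hA' : A.IsPositive :=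
    A.isPositive_iff.2 ⟨hA, inner_map_self_nonneg_of_forall_pos hpos⟩
  simpa only [(isInvertible_of_forall_inner_map_self_pos hpos).self_apply_inverse] using
    sq_sum_inner_sub_inner_div_le hA' he v p (A.inverse g)

end Algebra

section Hessian

variable {E : Type*} [NormedAddCommGroup E] [InnerProductSpace ℝ E] [CompleteSpace E]
  {f : E → ℝ} {s : Set E} {x : E}

lemma inner_fderiv_gradient (f : E → ℝ) (x v w : E) :
    ⟪fderiv ℝ (gradient f) x v, w⟫ = fderiv ℝ (fderiv ℝ f) x v w := by
  have hcomp : fderiv ℝ (gradient f) x =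
      (InnerProductSpace.toDual ℝ E).symm.toContinuousLinearEquiv.toContinuousLinearMap ∘L
        fderiv ℝ (fderiv ℝ f) x :=
    (InnerProductSpace.toDual ℝ E).symm.toContinuousLinearEquiv.comp_fderiv
  rw [hcomp]
  exact InnerProductSpace.toDual_symm_apply

lemma isSymmetric_fderiv_gradient (hf : ContDiffAt ℝ 2 f x) :
    (fderiv ℝ (gradient f) x).IsSymmetric := by
  intro v w
  rw [ContinuousLinearMap.coe_coe, real_inner_comm _ v, inner_fderiv_gradient,
    inner_fderiv_gradient]
  exact hf.isSymmSndFDerivAt (by simp) v w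

lemma contDiffOn_gradient {m n : WithTop ℕ∞} (hf : ContDiffOn ℝ n f s) (hs : IsOpen s)
    (hmn : m + 1 ≤ n) : ContDiffOn ℝ m (gradient f) s :=
  (InnerProductSpace.toDual ℝ E).symm.toContinuousLinearEquiv.contDiff.comp_contDiffOn
    (hf.fderiv_of_isOpen hs hmn)

lemma continuousOn_gradient (hf : ContDiffOn ℝ 1 f s) (hs : IsOpen s) :
    ContinuousOn (gradient f) s :=
  (contDiffOn_gradient (m := 0) hf hs (by norm_num)).continuousOn

lemma continuousOn_fderiv_gradient (hf : ContDiffOn ℝ 2 f s) (hs : IsOpen s) :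
    ContinuousOn (fderiv ℝ (gradient f)) s :=
  (contDiffOn_gradient (m := 1) hf hs (by norm_num)).continuousOn_fderiv_of_isOpen hs le_rfl

lemma continuousOn_sum_norm_sq_add_inner_fderiv_gradient {ι : Type*} [Fintype ι] (e : ι → E)
    {V u : E → ℝ} (hV : ContDiffOn ℝ 2 V s) (hu : ContDiffOn ℝ 2 u s) (hs : IsOpen s) :
    ContinuousOn (fun x ↦ ∑ i, ‖fderiv ℝ (gradient u) x (e i)‖ ^ 2 +
      ⟪fderiv ℝ (gradient V) x (gradient u x), gradient u x⟫) s := by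
  have grad_u := continuousOn_gradient (hu.of_le one_le_two) hs
  have hess_u := continuousOn_fderiv_gradient hu hs
  have hess_V := continuousOn_fderiv_gradient hV hs
  fun_prop

end Hessian

theorem stmt_3_general {E ι : Type*} [NormedAddCommGroup E] [InnerProductSpace ℝ E]
    [FiniteDimensional ℝ E] [Fintype ι] [Nonempty ι] (b : OrthonormalBasis ι ℝ E)
    [MeasurableSpace E] [OpensMeasurableSpace E] {μ : Measure E} [IsFiniteMeasureOnCompacts μ]
    {K U : Set E} (hK : IsCompact K) (hU : IsOpen U) (hKU : K ⊆ U) {V u f : E → ℝ}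
    (hV : ContDiffOn ℝ 2 V U) (hu : ContDiffOn ℝ 2 u U)
    (hpos : ∀ᵐ x ∂μ.restrict K, ∀ v, v ≠ 0 → 0 < ⟪fderiv ℝ (gradient V) x v, v⟫)
    (hPDE : ∀ x ∈ K,
      ∑ i, ⟪fderiv ℝ (gradient u) x (b i), b i⟫ - ⟪gradient V x, gradient u x⟫ = f x) :
    ∫ x in K, f x ^ 2 / (Fintype.card ι +
        ⟪(fderiv ℝ (gradient V) x).inverse (gradient V x), gradient V x⟫) ∂μ ≤
      ∫ x in K, (∑ i, ‖fderiv ℝ (gradient u) x (b i)‖ ^ 2 +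
        ⟪fderiv ℝ (gradient V) x (gradient u x), gradient u x⟫) ∂μ := by
  refine integral_mono_of_nonneg ?_ ?_ ?_
  · filter_upwards [hpos] with x hx
    have := inner_inverse_self_nonneg_of_forall_inner_map_self_pos hx (gradient V x)
    positivity
  · exact ((continuousOn_sum_norm_sq_add_inner_fderiv_gradient b hV hu hU).mono
      hKU).integrableOn_compact hK
  · filter_upwards [ae_restrict_mem hK.measurableSet, hpos] with x hxK hx
    have hVx : ContDiffAt ℝ 2 V x := hV.contDiffAt (hU.mem_nhds (hKU hxK))
    rw [← hPDE x hxK]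
    exact sq_sum_inner_sub_inner_div_inverse_le (isSymmetric_fderiv_gradient hVx) hx
      b.norm_eq_one _ _ _

theorem stmt_3 (n : ℕ) (hn : 1 ≤ n)
    (V : EuclideanSpace ℝ (Fin n) → ℝ)
    (hV : ContDiff ℝ 2 V) (hVconv : ConvexOn ℝ Set.univ V)
    (hVpd : ∀ᵐ x ∂(volume : Measure (EuclideanSpace ℝ (Fin n))),
      ∀ v : EuclideanSpace ℝ (Fin n), v ≠ 0 → 0 < ⟪fderiv ℝ (gradient V) x v, v⟫)
    (μ : Measure (EuclideanSpace ℝ (Fin n)))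
    (hμ : μ = volume.withDensity (fun x => ENNReal.ofReal (Real.exp (-V x))))
    (K : Set (EuclideanSpace ℝ (Fin n)))
    (hKc : IsCompact K) (hKv : Convex ℝ K) (hKi : (interior K).Nonempty)
    (U : Set (EuclideanSpace ℝ (Fin n))) (hU : IsOpen U) (hKU : K ⊆ U)
    (u : EuclideanSpace ℝ (Fin n) → ℝ) (hu : ContDiffOn ℝ 2 u U)
    (hPDE : ∀ x ∈ K,
      (∑ i : Fin n, ⟪fderiv ℝ (gradient u) x (EuclideanSpace.single i 1),
        EuclideanSpace.single i 1⟫) - ⟪gradient V x, gradient u x⟫ = 1) :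
    ∫ x in K, (1 / ((n : ℝ) +
        ⟪(fderiv ℝ (gradient V) x).inverse (gradient V x), gradient V x⟫)) ∂μ ≤
      ∫ x in K,
        ((∑ i : Fin n, ‖fderiv ℝ (gradient u) x (EuclideanSpace.single i 1)‖ ^ 2) +
          ⟪fderiv ℝ (gradient V) x (gradient u x), gradient u x⟫) ∂μ := by
  have : Nonempty (Fin n) := ⟨⟨0, hn⟩⟩
  have : IsLocallyFiniteMeasure μ := hμ ▸ .withDensity_ofReal hV.continuous.neg.rexp
  have hac : μ ≪ volume := hμ ▸ withDensity_absolutelyContinuous _ _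
  simpa only [one_pow, EuclideanSpace.basisFun_apply, Fintype.card_fin] using
    stmt_3_general (f := fun _ ↦ 1) (EuclideanSpace.basisFun (Fin n) ℝ) hKc hU hKU hV.contDiffOn
      hu (ae_restrict_of_ae (hac.ae_le hVpd))
      (by simpa only [EuclideanSpace.basisFun_apply] using hPDE)
end
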